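/- Let m ≥ 2 be an integer, Δ > 1 and 0 < α < 1/m. Then there exists a constant C such that: for every real 2m×m matrix J with J^1 invertible such that A_j := Π_j J is Δ-regular for each j ∈ 𝒞, for every convex tree 𝒯 of dyadic cubes in ℝ^m, for every measurable c : (0,∞) → ℂ with |c| ≤ 1 almost everywhere, every u ∈ ℝ^{2m}, every 1 ≤ i ≤ m, and every tuple (F_j)_{j∈𝒞} of real-valued smooth compactly supported functions on ℝ^m, one has |Λ_𝒯((F_j)_{j∈𝒞})| ≤ C |Q_𝒯| ∏_{j∈𝒞} M_α(F_j)(A_j𝒯). -/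

import Mathlib

open MeasureTheory Matrix
open scoped ENNReal NNReal BigOperators

noncomputable section

namespace SBL

/-- The set of corners of the `m`-dimensional cube: functions `{1,…,m} → {0,1}`. -/
abbrev Corner (m : ℕ) := Fin m → Fin 2

/-- Index type for `ℝ^{2m}`: coordinates `x^0_i` (left) and `x^1_i` (right). -/
abbrev Idx (m : ℕ) := Fin m ⊕ Fin m

/-- The coordinate of `ℝ^{2m}` selected by the corner `j` at position `i`. -/
def sel {m : ℕ} (j : Corner m) (i : Fin m) : Idx m :=
  if j i = 0 then Sum.inl i else Sum.inr i

/-- The projection `Π_j : ℝ^{2m} → ℝ^m`, `Π_j x = (x_1^{j(1)},…,x_m^{j(m)})`. -/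
def proj {m : ℕ} (j : Corner m) (x : Idx m → ℝ) : Fin m → ℝ := fun i => x (sel j i)

/-- The projection `Π_j` as an `m × 2m` matrix. -/
def projM {m : ℕ} (j : Corner m) : Matrix (Fin m) (Idx m) ℝ :=
  Matrix.of fun i k => if k = sel j i then 1 else 0

/-- `A_j := Π_j J`, the `m × m` matrix obtained by applying `Π_j` to (the columns of) a
`2m × m` matrix `J`, i.e. selecting rows of `J` according to the corner `j`. -/
def Amat {m : ℕ} (J : Matrix (Idx m) (Fin m) ℝ) (j : Corner m) : Matrix (Fin m) (Fin m) ℝ :=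
  Matrix.of fun i k => J (sel j i) k

/-- Euclidean norm on a finite pi type. -/
def en {ι : Type*} [Fintype ι] (x : ι → ℝ) : ℝ := Real.sqrt (∑ i, (x i) ^ 2)

/-- Operator norm of a matrix with respect to the Euclidean norms. -/
def opNorm {ι κ : Type*} [Fintype ι] [Fintype κ] [DecidableEq κ] (A : Matrix ι κ ℝ) : ℝ :=
  ‖LinearMap.toContinuousLinearMap (Matrix.toEuclideanLin A)‖

/-- `Δ`-regularity of a square matrix: `max(‖A‖, |det A|⁻¹) ≤ Δ` (in particular `det A ≠ 0`). -/
def IsReg {m : ℕ} (Δ : ℝ) (A : Matrix (Fin m) (Fin m) ℝ) : Prop :=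
  opNorm A ≤ Δ ∧ A.det ≠ 0 ∧ |A.det|⁻¹ ≤ Δ

/-- A Calderón–Zygmund kernel of order `n` in `ℝ^m`, given by its multiplier `K̂` on
`ℝ^m ∖ {0}`: it is `n` times continuously differentiable there and satisfies the symbol
estimates `‖D^k K̂(η)‖ ≤ |η|^{-k}` for all `k ≤ n`. -/
def IsCZ {m : ℕ} (n : ℕ) (Khat : (Fin m → ℝ) → ℂ) : Prop :=
  ContDiffOn ℝ n Khat {0}ᶜ ∧
  ∀ k : ℕ, k ≤ n → ∀ η : Fin m → ℝ, η ≠ 0 →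
    ‖iteratedFDerivWithin ℝ k Khat {0}ᶜ η‖ ≤ (en η) ^ (-(k : ℝ))

/-- Fourier transform of a (nice) function on `ℝ^{2m}`. -/
def fourierT {m : ℕ} (φ : (Idx m → ℝ) → ℝ) (ξ : Idx m → ℝ) : ℂ :=
  ∫ x : Idx m → ℝ, Complex.exp (-2 * Real.pi * Complex.I * (∑ k, x k * ξ k)) * (φ x : ℂ)

/-- The principal value `p.v. ∫_{ℝ^{2m}} (∏_j F_j(Π_j x)) K(Πx) dx`, defined as
`∫_{ℝ^m} φ̂(−Π^T η) K̂(η) dη` with `φ = ∏_j F_j ∘ Π_j`. -/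
def pv {m : ℕ} (P : Matrix (Fin m) (Idx m) ℝ) (Khat : (Fin m → ℝ) → ℂ)
    (F : Corner m → (Fin m → ℝ) → ℝ) : ℂ :=
  ∫ η : Fin m → ℝ, fourierT (fun x => ∏ j, F j (proj j x)) (-(P.transpose.mulVec η)) * Khat η

/-- Upper `m×m` block `J^0` of a `2m×m` matrix. -/
def Jb0 {m : ℕ} (J : Matrix (Idx m) (Fin m) ℝ) : Matrix (Fin m) (Fin m) ℝ :=
  J.submatrix Sum.inl id

/-- Lower `m×m` block `J^1` of a `2m×m` matrix. -/
def Jb1 {m : ℕ} (J : Matrix (Idx m) (Fin m) ℝ) : Matrix (Fin m) (Fin m) ℝ :=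
  J.submatrix Sum.inr id

/-- `Π^J := (I, −J^0 (J^1)⁻¹)`. -/
def PiJ {m : ℕ} (J : Matrix (Idx m) (Fin m) ℝ) : Matrix (Fin m) (Idx m) ℝ :=
  Matrix.fromCols 1 (-(Jb0 J * (Jb1 J)⁻¹))

/-- The dyadic cube with parameters `Q = (k, n)`: `∏_i [2^k n_i, 2^k (n_i+1))`. -/
def dC {m : ℕ} (Q : ℤ × (Fin m → ℤ)) : Set (Fin m → ℝ) :=
  {x | ∀ i, (2:ℝ)^Q.1 * (Q.2 i : ℝ) ≤ x i ∧ x i < (2:ℝ)^Q.1 * ((Q.2 i : ℝ) + 1)}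

/-- `Q*`: the cube with the same center as `Q` and three times the side length. -/
def dCstar {m : ℕ} (Q : ℤ × (Fin m → ℤ)) : Set (Fin m → ℝ) :=
  {x | ∀ i, (2:ℝ)^Q.1 * ((Q.2 i : ℝ) - 1) ≤ x i ∧ x i < (2:ℝ)^Q.1 * ((Q.2 i : ℝ) + 2)}

/-- A (1/2-)sparse collection of dyadic cubes. -/
def IsSparse {m : ℕ} (S : Set (ℤ × (Fin m → ℤ))) : Prop :=
  ∀ Q ∈ S,
    (∑' Q' : {q : ℤ × (Fin m → ℤ) // q ∈ S ∧ dC q ⊆ dC Q}, volume (dC Q'.val)) ≤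
      2 * volume (dC Q)

/-- The average `[F]_S := (|S|⁻¹ ∫_S |F|^{2^{m-1}})^{2^{1-m}}`. -/
def avg {m : ℕ} (S : Set (Fin m → ℝ)) (F : (Fin m → ℝ) → ℝ) : ℝ :=
  (((volume S).toReal)⁻¹ * ∫ x in S, |F x| ^ (2^(m-1) : ℕ)) ^ ((2:ℝ) ^ ((1:ℤ) - (m:ℤ)))

/-- The closed axis-parallel box `∏_i [a_i, b_i]`. -/
def box {m : ℕ} (a b : Fin m → ℝ) : Set (Fin m → ℝ) := {x | ∀ i, a i ≤ x i ∧ x i ≤ b i}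

/-- Reciprocal eccentricity `ε_R = (min_i |I_i|)/(max_i |I_i|)` of the box `∏_i [a_i,b_i]`. -/
def ecc {m : ℕ} (a b : Fin m → ℝ) : ℝ := (⨅ i, (b i - a i)) / (⨆ i, (b i - a i))

/-- Modified strong maximal function evaluated on a set `S`:
`sup { (ε_R^α)^{2^{1-m}} [F]_R : R ∈ ℛ, S ⊆ R }` (as an extended real). -/
def Mal {m : ℕ} (α : ℝ) (F : (Fin m → ℝ) → ℝ) (S : Set (Fin m → ℝ)) : ℝ≥0∞ :=
  ⨆ (a : Fin m → ℝ) (b : Fin m → ℝ) (_ : ∀ i, a i < b i) (_ : S ⊆ box a b),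
    ENNReal.ofReal ((ecc a b ^ α) ^ ((2:ℝ) ^ ((1:ℤ) - (m:ℤ))) * avg (box a b) F)

/-- `M_α(F)(A𝒯) := sup_{Q ∈ 𝒯} M_α(F)(AQ)`. -/
def MalTree {m : ℕ} (α : ℝ) (F : (Fin m → ℝ) → ℝ) (A : Matrix (Fin m) (Fin m) ℝ)
    (T : Set (ℤ × (Fin m → ℤ))) : ℝ≥0∞ :=
  ⨆ Q ∈ T, Mal α F (A.mulVec '' dC Q)

/-- A convex tree of dyadic cubes with top cube `Qt`. -/
def ConvexTree {m : ℕ} (T : Set (ℤ × (Fin m → ℤ))) (Qt : ℤ × (Fin m → ℤ)) : Prop :=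
  Qt ∈ T ∧ (∀ Q ∈ T, dC Q ⊆ dC Qt) ∧
  ∀ Q ∈ T, ∀ Q' : ℤ × (Fin m → ℤ), dC Q ⊆ dC Q' → dC Q' ⊆ dC Qt → Q' ∈ T

/-- The Gaussian `g(x) = e^{−π|x|²}` on `ℝ^{2m}`. -/
def gss {m : ℕ} (x : Idx m → ℝ) : ℝ := Real.exp (-Real.pi * ∑ k, (x k) ^ 2)

/-- The mixed partial derivative `∂^0_i ∂^1_i g`. -/
def ddg {m : ℕ} (i : Fin m) (x : Idx m → ℝ) : ℝ :=
  fderiv ℝ (fun y : Idx m → ℝ => fderiv ℝ gss y (Pi.single (Sum.inl i) (1:ℝ))) x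
    (Pi.single (Sum.inr i) (1:ℝ))

/-- Isotropic `L¹` dilation on `ℝ^{2m}`: `φ_t(x) = t^{-2m} φ(t⁻¹ x)`. -/
def dil {m : ℕ} (t : ℝ) (φ : (Idx m → ℝ) → ℝ) (x : Idx m → ℝ) : ℝ :=
  (t ^ (2*m))⁻¹ * φ (t⁻¹ • x)

/-- Matrix dilation: `φ_D(x) = (det D)⁻¹ φ(D⁻¹ x)`. -/
def dilM {m : ℕ} (D : Matrix (Idx m) (Idx m) ℝ) (φ : (Idx m → ℝ) → ℝ) (x : Idx m → ℝ) : ℝ :=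
  (D.det)⁻¹ * φ (D⁻¹.mulVec x)

/-- The region `Ω_𝒯 = ∪_{Q∈𝒯} Q × (ℓ(Q)/2, ℓ(Q))` in the upper half space. -/
def Omega {m : ℕ} (T : Set (ℤ × (Fin m → ℤ))) : Set ((Fin m → ℝ) × ℝ) :=
  ⋃ Q ∈ T, (dC Q) ×ˢ Set.Ioo ((2:ℝ)^Q.1 / 2) ((2:ℝ)^Q.1)

/-- The localized form `Λ_𝒯((F_j)_j)`. -/
def LambdaT {m : ℕ} (J : Matrix (Idx m) (Fin m) ℝ) (T : Set (ℤ × (Fin m → ℤ)))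
    (c : ℝ → ℂ) (u : Idx m → ℝ) (i : Fin m) (F : Corner m → (Fin m → ℝ) → ℝ) : ℂ :=
  ∫ z in Omega T, c z.2 * Complex.ofReal ((1 + en u ^ (4*m))⁻¹ * (z.2)⁻¹ *
    ∫ x : Idx m → ℝ, (∏ j, F j (proj j x)) * dil z.2 (ddg i) (x - J.mulVec z.1 + z.2 • u))

/-- `T_k := ∪ {Q ∈ 𝒯 : ℓ(Q) = 2^k}`. -/
def Tkset {m : ℕ} (T : Set (ℤ × (Fin m → ℤ))) (k : ℤ) : Set (Fin m → ℝ) :=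
  ⋃ Q ∈ {q ∈ T | q.1 = k}, dC Q

/-- The form `Λ̃_𝒯((F_j)_j)` with localization in the `x` variables. -/
def LambdaTilde {m : ℕ} (J : Matrix (Idx m) (Fin m) ℝ) (T : Set (ℤ × (Fin m → ℤ)))
    (c : ℝ → ℂ) (u : Idx m → ℝ) (i : Fin m) (F : Corner m → (Fin m → ℝ) → ℝ) : ℂ :=
  ∑' k : ℤ, ∫ t in Set.Ioc ((2:ℝ)^(k-1)) ((2:ℝ)^k),
    c t * Complex.ofReal ((1 + en u ^ (4*m))⁻¹ * t⁻¹ *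
      ∫ p : Fin m → ℝ, ∫ x : Idx m → ℝ,
        (∏ j, Set.indicator ((Amat J j).mulVec '' Tkset T k) (F j) (proj j x)) *
          dil t (ddg i) (x - J.mulVec p + t • u))

/-- The form `Λ(𝒯,J,K)((F_j)_j)` from the induction proposition. -/
def LambdaK {m : ℕ} (J : Matrix (Idx m) (Fin m) ℝ) (T : Set (ℤ × (Fin m → ℤ)))
    (K : ℝ → (Idx m → ℝ) → ℂ) (F : Corner m → (Fin m → ℝ) → ℝ) : ℂ :=
  ∑' k : ℤ, ∫ x : Idx m → ℝ,
    Complex.ofReal (∏ j, Set.indicator ((Amat J j).mulVec '' Tkset T k) (F j) (proj j x)) *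
      ∫ t in Set.Ioc ((2:ℝ)^(k-1)) ((2:ℝ)^k), K t x * (t : ℂ)⁻¹

/-- The reflected corner `i∗j`, differing from `j` exactly at position `i`. -/
def istar {m : ℕ} (i : Fin m) (j : Corner m) : Corner m :=
  fun k => if k = i then 1 - j i else j k

/-- The diagonal matrix `Θ̃` with entry 0 at positions `i ≤ l` and 1 at positions `i > l`
(1-based), i.e. 0 for `i < l` and 1 otherwise in 0-based indexing. -/
def Th {m : ℕ} (l : ℕ) : Matrix (Fin m) (Fin m) ℝ :=
  Matrix.diagonal fun i => if (i : ℕ) < l then 0 else 1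

/-- The block diagonal matrix `Θ = diag(Θ̃, Θ̃)`. -/
def ThB {m : ℕ} (l : ℕ) : Matrix (Idx m) (Idx m) ℝ :=
  Matrix.diagonal (Sum.elim (fun i : Fin m => if (i:ℕ) < l then (0:ℝ) else 1)
    (fun i : Fin m => if (i:ℕ) < l then (0:ℝ) else 1))

end SBL

namespace SBL

/-- The derivatives of the Gaussian `exp (-π x ^ 2)`, see `hasDerivAt_hg`. -/
def hg : ℕ → ℝ → ℝ
  | 0, x => Real.exp (-Real.pi * x ^ 2)
  | 1, x => -2 * Real.pi * (x * Real.exp (-Real.pi * x ^ 2))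
  | (n + 2), x => -2 * Real.pi * (x * hg (n + 1) x + (n + 1) * hg n x)

theorem hasDerivAt_hg (n : ℕ) (x : ℝ) : HasDerivAt (hg n) (hg (n + 1) x) x := by
  have h0 : ∀ x, HasDerivAt (hg 0) (hg 1 x) x := by
    intro x
    have h : HasDerivAt (fun x : ℝ => Real.exp (-Real.pi * x ^ 2))
        (Real.exp (-Real.pi * x ^ 2) * (-Real.pi * ((2 : ℕ) * x ^ (2 - 1) * 1))) x :=
      (((hasDerivAt_id x).pow 2).const_mul (-Real.pi)).exp
    refine h.congr_deriv ?_
    simp only [hg]; push_cast; ring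
  suffices h : ∀ n, (∀ x, HasDerivAt (hg n) (hg (n + 1) x) x) ∧
      (∀ x, HasDerivAt (hg (n + 1)) (hg (n + 2) x) x) from (h n).1 x
  intro n
  induction n with
  | zero =>
    refine ⟨h0, fun x => ?_⟩
    have h := ((hasDerivAt_id x).mul (h0 x)).const_mul (-2 * Real.pi)
    refine HasDerivAt.congr_deriv (f := hg 1) (h.congr_of_eventuallyEq ?_) ?_
    · exact Filter.Eventually.of_forall fun y => by simp [hg]
    · simp [hg]; ring
  | succ n ih =>
    refine ⟨ih.2, fun x => ?_⟩
    have h := (((hasDerivAt_id x).mul (ih.2 x)).add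
      ((ih.1 x).const_mul ((n : ℝ) + 1))).const_mul (-2 * Real.pi)
    refine HasDerivAt.congr_deriv (f := hg (n + 2)) (h.congr_of_eventuallyEq ?_) ?_
    · exact Filter.Eventually.of_forall fun y => by simp [hg]
    · change _ = -2 * Real.pi * (x * hg (n + 2) x + ((n + 1 : ℕ) + 1) * hg (n + 1) x)
      push_cast; simp only [id]; ring

@[fun_prop]
theorem continuous_hg (n : ℕ) : Continuous (hg n) :=
  continuous_iff_continuousAt.2 fun x => (hasDerivAt_hg n x).continuousAt

theorem hg_zero_pos (x : ℝ) : 0 < hg 0 x := Real.exp_pos _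

theorem hg_rec (n : ℕ) (x : ℝ) :
    hg (n + 2) x = -2 * Real.pi * (x * hg (n + 1) x + (n + 1) * hg n x) := rfl

theorem hg_one (x : ℝ) : hg 1 x = -2 * Real.pi * (x * hg 0 x) := rfl

theorem exists_hg_le_pow (n : ℕ) :
    ∃ C : ℝ, 0 ≤ C ∧ ∀ x, |hg n x| ≤ C * (1 + |x|) ^ n * hg 0 x := by
  suffices h : ∀ n, (∃ C : ℝ, 0 ≤ C ∧ ∀ x, |hg n x| ≤ C * (1 + |x|) ^ n * hg 0 x) ∧
      (∃ C : ℝ, 0 ≤ C ∧ ∀ x, |hg (n + 1) x| ≤ C * (1 + |x|) ^ (n + 1) * hg 0 x) from (h n).1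
  intro n
  induction n with
  | zero =>
    refine ⟨⟨1, zero_le_one, fun x => by simp [abs_of_pos (hg_zero_pos x)]⟩,
      ⟨2 * Real.pi, by positivity, fun x => ?_⟩⟩
    rw [zero_add, hg_one, abs_mul, abs_mul, abs_mul, abs_of_pos (hg_zero_pos x),
      abs_of_pos Real.pi_pos]
    norm_num
    have := hg_zero_pos x
    have := Real.pi_pos
    rw [mul_assoc (2 * Real.pi)]
    gcongr
    linarith
  | succ n ih =>
    obtain ⟨⟨C, hC, h⟩, ⟨C', hC', h'⟩⟩ := ih
    refine ⟨⟨C', hC', h'⟩, ⟨2 * Real.pi * (C' + (n + 1) * C), by positivity, fun x => ?_⟩⟩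
    have hg0 := hg_zero_pos x
    have hx := abs_nonneg x
    rw [show n + 1 + 1 = n + 2 from rfl, hg_rec, abs_mul, abs_mul, abs_of_pos Real.pi_pos]
    norm_num
    rw [mul_assoc (2 * Real.pi), mul_assoc (2 * Real.pi)]
    gcongr
    calc |x * hg (n + 1) x + (n + 1) * hg n x| ≤ |x| * |hg (n + 1) x| + (n + 1) * |hg n x| := by
          refine (abs_add_le _ _).trans (le_of_eq ?_)
          rw [abs_mul, abs_mul, abs_of_nonneg (by positivity : (0 : ℝ) ≤ n + 1)]
      _ ≤ (1 + |x|) * (C' * (1 + |x|) ^ (n + 1) * hg 0 x) +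
          (n + 1) * (C * (1 + |x|) ^ (n + 2) * hg 0 x) := by
          gcongr ?_ * ?_ + _ * ?_
          · linarith
          · exact h' x
          · refine (h x).trans ?_
            gcongr <;> linarith
      _ = _ := by ring

theorem exists_hg_le (n : ℕ) : ∃ C : ℝ, 0 ≤ C ∧ ∀ x, |hg n x| ≤ C * hg 0 (x / 2) := by
  obtain ⟨C, hC, h⟩ := exists_hg_le_pow n
  refine ⟨C * (n.factorial * Real.exp 2), by positivity, fun x => (h x).trans ?_⟩
  have h1 : (1 + |x|) ^ n ≤ n.factorial * Real.exp (1 + |x|) := by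
    have := Real.pow_div_factorial_le_exp (x := 1 + |x|) (by positivity) n
    rw [div_le_iff₀ (by positivity)] at this
    linarith
  have h2 : Real.exp (1 + |x|) * hg 0 x ≤ Real.exp 2 * hg 0 (x / 2) := by
    simp only [hg]
    rw [← Real.exp_add, ← Real.exp_add]
    apply Real.exp_le_exp.2
    have := Real.pi_gt_three
    have h3 : |x| ^ 2 = x ^ 2 := sq_abs x
    nlinarith [sq_nonneg (|x| - 1), abs_nonneg x, mul_nonneg (sub_nonneg.2 this.le) (sq_nonneg x)]
  calc C * (1 + |x|) ^ n * hg 0 x ≤ C * (n.factorial * Real.exp (1 + |x|)) * hg 0 x := by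
        have := hg_zero_pos x
        gcongr
    _ = C * n.factorial * (Real.exp (1 + |x|) * hg 0 x) := by ring
    _ ≤ C * n.factorial * (Real.exp 2 * hg 0 (x / 2)) := by gcongr
    _ = _ := by ring

/-- The `n`-th derivative of the Gaussian, dilated to width `v`. -/
def ker (n : ℕ) (v x : ℝ) : ℝ := v⁻¹ * hg n (v⁻¹ * x)

@[fun_prop]
theorem continuous_ker (n : ℕ) (v : ℝ) : Continuous (ker n v) := by
  unfold ker; fun_prop

theorem ker_zero_pos {v : ℝ} (hv : 0 < v) (x : ℝ) : 0 < ker 0 v x :=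
  mul_pos (inv_pos.2 hv) (hg_zero_pos _)

theorem exists_ker_le (n : ℕ) :
    ∃ C : ℝ, 0 ≤ C ∧ ∀ v x, 0 < v → |ker n v x| ≤ C * ker 0 (2 * v) x := by
  obtain ⟨C, hC, h⟩ := exists_hg_le n
  refine ⟨2 * C, by positivity, fun v x hv => ?_⟩
  unfold ker
  rw [abs_mul, abs_of_pos (inv_pos.2 hv)]
  have := h (v⁻¹ * x)
  calc v⁻¹ * |hg n (v⁻¹ * x)| ≤ v⁻¹ * (C * hg 0 (v⁻¹ * x / 2)) := by gcongr
    _ = _ := by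
      rw [mul_inv, show (2 : ℝ)⁻¹ * v⁻¹ * x = v⁻¹ * x / 2 by ring]; ring

theorem integrable_ker_zero {v : ℝ} (hv : 0 < v) (b : ℝ) :
    Integrable (fun x => ker 0 v (x - b)) := by
  have h := (integrable_exp_neg_mul_sq (b := Real.pi * (v⁻¹) ^ 2) (by positivity)).comp_sub_right b
  refine (h.const_mul v⁻¹).congr (Filter.Eventually.of_forall fun x => ?_)
  simp only [ker, hg]; congr 2; ring

theorem integral_ker_zero {v : ℝ} (hv : 0 < v) (b : ℝ) : ∫ x, ker 0 v (x - b) = 1 := by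
  rw [integral_sub_right_eq_self (fun x => ker 0 v x) b]
  have h := integral_gaussian (Real.pi * (v⁻¹) ^ 2)
  have h2 : ∀ x, ker 0 v x = v⁻¹ * Real.exp (-(Real.pi * v⁻¹ ^ 2) * x ^ 2) := by
    intro x; simp only [ker, hg]; congr 2; ring
  simp_rw [h2]
  rw [integral_const_mul, h, show Real.pi / (Real.pi * v⁻¹ ^ 2) = v ^ 2 by
    field_simp, Real.sqrt_sq hv.le, inv_mul_cancel₀ hv.ne']

theorem ker_zero_shift_le {v U a : ℝ} (hv : 0 < v) (hU : 2 ≤ U) (ha : |a| ≤ U) (x : ℝ) :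
    ker 0 v (x + v * a) ≤ Real.exp (4 * Real.pi) * U * ker 0 (U * v) x := by
  have hU0 : 0 < U := by linarith
  have key : hg 0 (v⁻¹ * x + a) ≤ Real.exp (4 * Real.pi) * hg 0 (U⁻¹ * (v⁻¹ * x)) := by
    simp only [hg]
    rw [← Real.exp_add]
    apply Real.exp_le_exp.2
    set y := v⁻¹ * x
    have hpi := Real.pi_pos
    have h1 : (U⁻¹ * y) ^ 2 ≤ 4 + (y + a) ^ 2 := by
      rw [mul_pow, inv_pow, inv_mul_le_iff₀ (by positivity)]
      have ha2 : a ^ 2 ≤ U ^ 2 := by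
        rw [← sq_abs a]; exact pow_le_pow_left₀ (abs_nonneg a) ha 2
      nlinarith [sq_nonneg (y + 2 * a), sq_nonneg (y + a),
        mul_nonneg (sq_nonneg (y + a)) (by nlinarith : (0 : ℝ) ≤ U ^ 2 - 4)]
    nlinarith
  unfold ker
  rw [mul_inv, mul_add, inv_mul_cancel_left₀ hv.ne', mul_assoc U⁻¹]
  calc v⁻¹ * hg 0 (v⁻¹ * x + a) ≤ v⁻¹ * (Real.exp (4 * Real.pi) * hg 0 (U⁻¹ * (v⁻¹ * x))) := by
        gcongr
    _ = _ := by field_simp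

/-- The heat equation in the width parameter. -/
theorem hasDerivAt_ker_width (n : ℕ) (x : ℝ) {v : ℝ → ℝ} {v' r : ℝ} (hv : HasDerivAt v v' r)
    (h0 : 0 < v r) :
    HasDerivAt (fun r => ker n (v r) x)
      (v' / v r * (n * ker n (v r) x + (2 * Real.pi)⁻¹ * ker (n + 2) (v r) x)) r := by
  have h1 := hv.inv h0.ne'
  have h2 := (hasDerivAt_hg n ((v r)⁻¹ * x)).comp r (h1.mul_const x)
  refine (h1.mul h2).congr_deriv ?_
  simp only [Function.comp_def, ker, hg_rec, Pi.inv_apply]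
  have := Real.pi_pos
  field_simp
  ring

theorem hasDerivAt_ker_center (n : ℕ) (x v : ℝ) {b : ℝ → ℝ} {b' r : ℝ} (hb : HasDerivAt b b' r) :
    HasDerivAt (fun r => ker n v (x - b r)) (-(b' * v⁻¹) * ker (n + 1) v (x - b r)) r := by
  have h2 := (hasDerivAt_hg n (v⁻¹ * (x - b r))).comp r ((hb.const_sub x).const_mul v⁻¹)
  refine (h2.const_mul v⁻¹).congr_deriv ?_
  simp only [ker]
  ring

/-- The product `∏_j F_j (Π_j x)`. -/
def Psi {m : ℕ} (F : Corner m → (Fin m → ℝ) → ℝ) (x : Idx m → ℝ) : ℝ := ∏ j, F j (proj j x)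

/-- Each `F_j` is continuous and compactly supported. -/
def IsCc {m : ℕ} (F : Corner m → (Fin m → ℝ) → ℝ) : Prop :=
  ∀ j, Continuous (F j) ∧ HasCompactSupport (F j)

@[fun_prop]
theorem continuous_proj {m : ℕ} (j : Corner m) : Continuous (proj j : (Idx m → ℝ) → _) := by
  unfold proj; fun_prop

theorem IsCc.continuous_Psi {m : ℕ} {F : Corner m → (Fin m → ℝ) → ℝ} (hF : IsCc F) :
    Continuous (Psi F) := by
  unfold Psi
  exact continuous_finsetProd _ fun j _ => (hF j).1.comp (continuous_proj j)

theorem IsCc.hasCompactSupport_Psi {m : ℕ} {F : Corner m → (Fin m → ℝ) → ℝ} (hF : IsCc F) :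
    HasCompactSupport (Psi F) := by
  have hK := (hF fun _ => 0).2.isCompact.prod (hF fun _ => 1).2.isCompact
  have hc : Continuous (fun z : (Fin m → ℝ) × (Fin m → ℝ) => (Sum.elim z.1 z.2 : Idx m → ℝ)) := by
    refine continuous_pi fun c => ?_
    rcases c with c | c <;> simp <;> fun_prop
  refine HasCompactSupport.intro (hK.image hc) fun x hx => ?_
  by_contra hne
  apply hx
  refine ⟨(fun i => x (Sum.inl i), fun i => x (Sum.inr i)), ⟨?_, ?_⟩, ?_⟩
  · have := Finset.prod_ne_zero_iff.1 hne (fun _ => 0) (Finset.mem_univ _)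
    have e : proj (fun _ => 0) x = fun i => x (Sum.inl i) := by ext i; simp [proj, sel]
    rw [e] at this
    exact subset_tsupport _ this
  · have := Finset.prod_ne_zero_iff.1 hne (fun _ => 1) (Finset.mem_univ _)
    have e : proj (fun _ => 1) x = fun i => x (Sum.inr i) := by ext i; simp [proj, sel]
    rw [e] at this
    exact subset_tsupport _ this
  · ext c; rcases c with c | c <;> rfl

/-- Differentiation under the integral sign against a compactly supported function. -/
theorem hasDerivAt_integral_of_compact {X : Type*} [TopologicalSpace X] [MeasurableSpace X]
    [OpensMeasurableSpace X] [SecondCountableTopology X] {μ : Measure X}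
    [IsFiniteMeasureOnCompacts μ] {Ψ : X → ℝ} (hΨ : Continuous Ψ) (hs : HasCompactSupport Ψ)
    {k k' : ℝ → X → ℝ} {O : Set ℝ} (hO : IsOpen O) {r : ℝ} (hr : r ∈ O)
    (hk : ∀ r ∈ O, Continuous (k r))
    (hk' : ContinuousOn (Function.uncurry k') (O ×ˢ Set.univ))
    (hd : ∀ r ∈ O, ∀ x, HasDerivAt (fun r => k r x) (k' r x) r) :
    HasDerivAt (fun r => ∫ x, Ψ x * k r x ∂μ) (∫ x, Ψ x * k' r x ∂μ) r := by
  obtain ⟨δ, hδ, hball⟩ := Metric.nhds_basis_closedBall.mem_iff.1 (hO.mem_nhds hr)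
  have hcpt : IsCompact (Metric.closedBall r δ ×ˢ tsupport Ψ) :=
    (isCompact_closedBall r δ).prod hs.isCompact
  obtain ⟨M, hM⟩ := hcpt.exists_bound_of_continuousOn
    (hk'.mono (Set.prod_mono hball (Set.subset_univ _)))
  have hint : ∀ r ∈ O, Integrable (fun x => Ψ x * k r x) μ := fun r hr =>
    (hΨ.mul (hk r hr)).integrable_of_hasCompactSupport hs.mul_right
  have hk'c : ∀ r ∈ O, Continuous (k' r) := fun r hr => by
    rw [← continuousOn_univ]
    exact hk'.comp (f := fun x => (r, x)) (by fun_prop) fun x _ => ⟨hr, trivial⟩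
  refine (hasDerivAt_integral_of_dominated_loc_of_deriv_le
    (F := fun r x => Ψ x * k r x) (F' := fun r x => Ψ x * k' r x)
    (bound := fun x => M * |Ψ x|) (s := Metric.closedBall r δ)
    (Metric.closedBall_mem_nhds r hδ) ?_ (hint r hr) ?_ ?_ ?_ ?_).2
  · filter_upwards [hO.mem_nhds hr] with r hr using (hint r hr).1
  · exact ((hΨ.mul (hk'c r hr)).integrable_of_hasCompactSupport hs.mul_right).1
  · refine Filter.Eventually.of_forall fun x r' hr' => ?_
    by_cases hx : x ∈ tsupport Ψ
    · have := hM (r', x) ⟨hr', hx⟩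
      rw [norm_mul, mul_comm]
      exact mul_le_mul_of_nonneg_right this (norm_nonneg _)
    · simp [image_eq_zero_of_notMem_tsupport hx]
  · exact (hΨ.abs.integrable_of_hasCompactSupport hs.abs).const_mul M
  · exact Filter.Eventually.of_forall fun x r' hr' => (hd r' (hball hr') x).const_mul _

/-- The pairing of `∏_j F_j ∘ Π_j` with a product of Gaussian derivatives of orders `γ`, widths
`v`, centred at `b`. -/
def Hv {m : ℕ} (F : Corner m → (Fin m → ℝ) → ℝ) (γ : Idx m → ℕ) (v b : Idx m → ℝ) : ℝ :=
  ∫ x : Idx m → ℝ, Psi F x * ∏ c, ker (γ c) (v c) (x c - b c)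

theorem IsCc.integrable_mul {m : ℕ} {F : Corner m → (Fin m → ℝ) → ℝ} (hF : IsCc F)
    {ψ : (Idx m → ℝ) → ℝ} (hψ : Continuous ψ) : Integrable (fun x => Psi F x * ψ x) :=
  (hF.continuous_Psi.mul hψ).integrable_of_hasCompactSupport hF.hasCompactSupport_Psi.mul_right

theorem IsCc.continuous_inv_Hv {m : ℕ} {F : Corner m → (Fin m → ℝ) → ℝ} (hF : IsCc F)
    (γ : Idx m → ℕ) :
    Continuous (fun z : (Idx m → ℝ) × (Idx m → ℝ) => Hv F γ (fun c => (z.1 c)⁻¹) z.2) := by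
  have h := continuous_parametric_integral_of_continuous (μ := volume)
    (f := fun (z : (Idx m → ℝ) × (Idx m → ℝ)) (x : Idx m → ℝ) =>
      Psi F x * ∏ c, (z.1 c * hg (γ c) (z.1 c * (x c - z.2 c)))) (by
      have := hF.continuous_Psi
      fun_prop) hF.hasCompactSupport_Psi.isCompact
  refine h.congr fun z => ?_
  unfold Hv ker
  simp only [inv_inv]
  refine setIntegral_eq_integral_of_forall_compl_eq_zero fun x hx => ?_
  simp [image_eq_zero_of_notMem_tsupport hx]

theorem IsCc.hasDerivAt_Hv_width {m : ℕ} {F : Corner m → (Fin m → ℝ) → ℝ} (hF : IsCc F)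
    (γ : Idx m → ℕ) (b : Idx m → ℝ) (E : Set (Idx m)) [DecidablePred (· ∈ E)]
    (a : Idx m → ℝ) (ha : ∀ c, 0 < a c) {r : ℝ} (hr : 0 < r) :
    HasDerivAt (fun r => Hv F γ (fun c => if c ∈ E then r * a c else a c) b)
      (r⁻¹ * ∑ c, if c ∈ E then
        (γ c * Hv F γ (fun c => if c ∈ E then r * a c else a c) b + (2 * Real.pi)⁻¹ *
          Hv F (γ + Pi.single c 2) (fun c => if c ∈ E then r * a c else a c) b) else 0) r := by
  set v : ℝ → Idx m → ℝ := fun r c => if c ∈ E then r * a c else a c with hv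
  have hvpos : ∀ r, 0 < r → ∀ c, 0 < v r c := fun r hr c => by
    simp only [hv]; split_ifs
    · exact mul_pos hr (ha c)
    · exact ha c
  have hvd : ∀ r c, HasDerivAt (fun r => v r c) (if c ∈ E then a c else 0) r := fun r c => by
    simp only [hv]; split_ifs
    · simpa using (hasDerivAt_id r).mul_const (a c)
    · exact hasDerivAt_const r (a c)
  have hker : ∀ n c, ContinuousOn (fun z : ℝ × (Idx m → ℝ) => ker n (v z.1 c) (z.2 c - b c))
      (Set.Ioi 0 ×ˢ Set.univ) := by
    intro n c
    have hvc : Continuous fun z : ℝ × (Idx m → ℝ) => v z.1 c := by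
      simp only [hv]; split_ifs <;> fun_prop
    have hinv : ContinuousOn (fun z : ℝ × (Idx m → ℝ) => (v z.1 c)⁻¹) (Set.Ioi 0 ×ˢ Set.univ) :=
      hvc.continuousOn.inv₀ fun z hz => (hvpos z.1 hz.1 c).ne'
    exact hinv.mul ((continuous_hg n).comp_continuousOn (hinv.mul (by fun_prop)))
  set k' : ℝ → (Idx m → ℝ) → ℝ := fun r x => ∑ c, (∏ d ∈ Finset.univ.erase c,
    ker (γ d) (v r d) (x d - b d)) * ((if c ∈ E then a c else 0) / v r c *
      (γ c * ker (γ c) (v r c) (x c - b c) + (2 * Real.pi)⁻¹ *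
        ker (γ c + 2) (v r c) (x c - b c))) with hk'
  have key := hasDerivAt_integral_of_compact (μ := volume) hF.continuous_Psi
    hF.hasCompactSupport_Psi (k := fun r x => ∏ c, ker (γ c) (v r c) (x c - b c)) (k' := k')
    isOpen_Ioi hr (fun r _ => by fun_prop) ?_ ?_
  · refine key.congr_deriv ?_
    rw [Finset.mul_sum]
    have hterm : ∀ x, Psi F x * k' r x = ∑ c, r⁻¹ * if c ∈ E then
        (γ c * (Psi F x * ∏ d, ker (γ d) (v r d) (x d - b d)) + (2 * Real.pi)⁻¹ *
          (Psi F x * ∏ d, ker ((γ + Pi.single c 2 : Idx m → ℕ) d) (v r d) (x d - b d))) else 0 := by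
      intro x
      simp only [hk', Finset.mul_sum]
      refine Finset.sum_congr rfl fun c _ => ?_
      split_ifs with hc
      · have e1 : ∏ d, ker (γ d) (v r d) (x d - b d) = ker (γ c) (v r c) (x c - b c) *
            ∏ d ∈ Finset.univ.erase c, ker (γ d) (v r d) (x d - b d) :=
          (Finset.mul_prod_erase _ _ (Finset.mem_univ c)).symm
        have e2 : ∏ d, ker ((γ + Pi.single c 2 : Idx m → ℕ) d) (v r d) (x d - b d) =
            ker (γ c + 2) (v r c) (x c - b c) *
            ∏ d ∈ Finset.univ.erase c, ker (γ d) (v r d) (x d - b d) := by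
          rw [← Finset.mul_prod_erase _ _ (Finset.mem_univ c)]
          congr 1
          · simp
          · refine Finset.prod_congr rfl fun d hd => ?_
            simp [Pi.single_eq_of_ne (Finset.ne_of_mem_erase hd)]
        have hvc : v r c = r * a c := by simp [hv, hc]
        rw [e1, e2, hvc, show a c / (r * a c) = r⁻¹ by
          have := (ha c).ne'; field_simp]
        ring
      · simp
    have hcont : ∀ γ' : Idx m → ℕ, Integrable fun x : Idx m → ℝ =>
        Psi F x * ∏ d, ker (γ' d) (v r d) (x d - b d) := fun γ' =>
      hF.integrable_mul (by fun_prop)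
    simp_rw [hterm]
    rw [integral_finsetSum]
    · refine Finset.sum_congr rfl fun c _ => ?_
      rw [integral_const_mul]
      congr 1
      split_ifs
      · rw [integral_add ((hcont _).const_mul _) ((hcont _).const_mul _), integral_const_mul,
          integral_const_mul]
        rfl
      · simp
    · intro c _
      refine Integrable.const_mul ?_ _
      split_ifs
      · exact ((hcont _).const_mul _).add ((hcont _).const_mul _)
      · exact integrable_zero _ _ _
  · refine continuousOn_finsetSum _ fun c _ => ?_
    refine (continuousOn_finsetProd _ fun d _ => hker _ d).mul ?_
    refine ContinuousOn.mul ?_ ((continuousOn_const.mul (hker _ c)).add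
      (continuousOn_const.mul (hker _ c)))
    refine continuousOn_const.div ?_ fun z hz => (hvpos z.1 hz.1 c).ne'
    simp only [hv]; split_ifs <;> fun_prop
  · intro r hr x
    have := HasDerivAt.fun_finsetProd (u := Finset.univ) (x := r) fun c _ =>
      hasDerivAt_ker_width (γ c) (x c - b c) (hvd r c) (hvpos r hr c)
    simpa only [hk', smul_eq_mul] using this

theorem IsCc.hasDerivAt_Hv_center {m : ℕ} {F : Corner m → (Fin m → ℝ) → ℝ} (hF : IsCc F)
    (γ : Idx m → ℕ) (v b e : Idx m → ℝ) (r : ℝ) :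
    HasDerivAt (fun r => Hv F γ v (fun c => b c + r * e c))
      (-∑ c, e c * (v c)⁻¹ * Hv F (γ + Pi.single c 1) v (fun c => b c + r * e c)) r := by
  have hbd : ∀ r c, HasDerivAt (fun r => b c + r * e c) (e c) r := fun r c => by
    simpa using ((hasDerivAt_id r).mul_const (e c)).const_add (b c)
  set k' : ℝ → (Idx m → ℝ) → ℝ := fun r x => ∑ c, (∏ d ∈ Finset.univ.erase c,
    ker (γ d) (v d) (x d - (b d + r * e d))) * (-(e c * (v c)⁻¹) *
      ker (γ c + 1) (v c) (x c - (b c + r * e c))) with hk'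
  have key := hasDerivAt_integral_of_compact (μ := volume) hF.continuous_Psi
    hF.hasCompactSupport_Psi
    (k := fun r x => ∏ c, ker (γ c) (v c) (x c - (b c + r * e c))) (k' := k')
    isOpen_univ (Set.mem_univ r) (fun r _ => by fun_prop) ?_ ?_
  · refine key.congr_deriv ?_
    rw [← Finset.sum_neg_distrib]
    have hterm : ∀ x, Psi F x * k' r x = ∑ c, -(e c * (v c)⁻¹) *
        (Psi F x * ∏ d, ker ((γ + Pi.single c 1 : Idx m → ℕ) d) (v d) (x d - (b d + r * e d))) := by
      intro x
      simp only [hk', Finset.mul_sum]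
      refine Finset.sum_congr rfl fun c _ => ?_
      have e2 : ∏ d, ker ((γ + Pi.single c 1 : Idx m → ℕ) d) (v d) (x d - (b d + r * e d)) =
          ker (γ c + 1) (v c) (x c - (b c + r * e c)) *
          ∏ d ∈ Finset.univ.erase c, ker (γ d) (v d) (x d - (b d + r * e d)) := by
        rw [← Finset.mul_prod_erase _ _ (Finset.mem_univ c)]
        congr 1
        · simp
        · refine Finset.prod_congr rfl fun d hd => ?_
          simp [Pi.single_eq_of_ne (Finset.ne_of_mem_erase hd)]
      rw [e2]; ring
    simp_rw [hterm]
    rw [integral_finsetSum]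
    · refine Finset.sum_congr rfl fun c _ => ?_
      rw [integral_const_mul, neg_mul]
      rfl
    · exact fun c _ => (hF.integrable_mul (by fun_prop)).const_mul _
  · refine Continuous.continuousOn ?_
    simp only [hk', Function.uncurry_def]
    fun_prop
  · intro r _ x
    have := HasDerivAt.fun_finsetProd (u := Finset.univ) (x := r) fun c _ =>
      hasDerivAt_ker_center (γ c) (x c) (v c) (hbd r c)
    simpa only [hk', smul_eq_mul] using this

/-- The position of a coordinate of `ℝ^{2m}`. -/
def pos {m : ℕ} : Idx m → Fin m := Sum.elim id id

@[simp] theorem pos_inl {m : ℕ} (k : Fin m) : pos (Sum.inl k : Idx m) = k := rfl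
@[simp] theorem pos_inr {m : ℕ} (k : Fin m) : pos (Sum.inr k : Idx m) = k := rfl

/-- The coordinate of `ℝ^{2m}` at position `k` with upper index `ε`. -/
def cof {m : ℕ} (k : Fin m) (ε : Fin 2) : Idx m := if ε = 0 then Sum.inl k else Sum.inr k

@[simp] theorem cof_zero {m : ℕ} (k : Fin m) : cof k 0 = Sum.inl k := rfl
@[simp] theorem cof_one {m : ℕ} (k : Fin m) : cof k 1 = Sum.inr k := rfl

theorem sel_eq_cof {m : ℕ} (j : Corner m) (k : Fin m) : sel j k = cof k (j k) := rfl

@[simp] theorem pos_cof {m : ℕ} (k : Fin m) (ε : Fin 2) : pos (cof k ε) = k := by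
  unfold cof; split_ifs <;> rfl

@[simp] theorem pos_sel {m : ℕ} (j : Corner m) (k : Fin m) : pos (sel j k) = k := by
  rw [sel_eq_cof, pos_cof]

theorem prod_pos_eq {m : ℕ} {M : Type*} [CommMonoid M] (k : Fin m) (f : Idx m → M) :
    ∏ c : {c : Idx m // pos c = k}, f c = f (Sum.inl k) * f (Sum.inr k) := by
  rw [← Finset.prod_subtype (s := {Sum.inl k, Sum.inr k}) (f := f)]
  · rw [Finset.prod_pair (by simp)]
  · rintro (c | c) <;> simp [pos]

/-- The tuple depending only on the corners with `j k = ε`. -/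
def Fk {m : ℕ} (F : Corner m → (Fin m → ℝ) → ℝ) (k : Fin m) (ε : Fin 2) :
    Corner m → (Fin m → ℝ) → ℝ := fun j => F (Function.update j k ε)

theorem IsCc.Fk {m : ℕ} {F : Corner m → (Fin m → ℝ) → ℝ} (hF : IsCc F) (k : Fin m) (ε : Fin 2) :
    IsCc (SBL.Fk F k ε) := fun _ => hF _

/-- Join coordinates at position `k` with the remaining ones. -/
def join {m : ℕ} (k : Fin m) (z : {c : Idx m // pos c = k} → ℝ)
    (y : {c : Idx m // ¬ pos c = k} → ℝ) : Idx m → ℝ :=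
  (MeasurableEquiv.piEquivPiSubtypeProd (fun _ => ℝ) (fun c : Idx m => pos c = k)).symm (z, y)

theorem join_apply {m : ℕ} (k : Fin m) (z : {c : Idx m // pos c = k} → ℝ)
    (y : {c : Idx m // ¬ pos c = k} → ℝ) (c : Idx m) :
    join k z y c = if h : pos c = k then z ⟨c, h⟩ else y ⟨c, h⟩ := rfl

theorem integral_join {m : ℕ} (k : Fin m) {f : (Idx m → ℝ) → ℝ} (hf : Integrable f)
    {W : ({c : Idx m // ¬ pos c = k} → ℝ) → ℝ}
    {h : ({c : Idx m // ¬ pos c = k} → ℝ) → Idx m → ℝ → ℝ}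
    (hW : ∀ z y, f (join k z y) = W y * ∏ c : {c : Idx m // pos c = k}, h y c (z c)) :
    Integrable (fun y => W y * ((∫ r, h y (Sum.inl k) r) * ∫ r, h y (Sum.inr k) r)) ∧
    ∫ x, f x = ∫ y, W y * ((∫ r, h y (Sum.inl k) r) * ∫ r, h y (Sum.inr k) r) := by
  have hmp := (volume_preserving_piEquivPiSubtypeProd (fun _ : Idx m => ℝ)
    (fun c : Idx m => pos c = k)).symm
  have hfi : Integrable (fun zy : _ × _ => f (join k zy.1 zy.2)) (volume.prod volume) :=
    hmp.integrable_comp_of_integrable hf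
  have heq : ∫ x, f x = ∫ zy : ({c : Idx m // pos c = k} → ℝ) × ({c : Idx m // ¬ pos c = k} → ℝ),
      f (join k zy.1 zy.2) ∂(volume.prod volume) :=
    (hmp.integral_comp (MeasurableEquiv.measurableEmbedding _) f).symm
  have hin : ∀ y, ∫ z, f (join k z y) =
      W y * ((∫ r, h y (Sum.inl k) r) * ∫ r, h y (Sum.inr k) r) := fun y => by
    simp_rw [hW, integral_const_mul]
    rw [integral_fintype_prod_volume_eq_prod
      (f := fun (c : {c : Idx m // pos c = k}) (r : ℝ) => h y c r)]
    rw [prod_pos_eq k (fun c => ∫ r, h y c r)]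
  constructor
  · simpa only [hin] using hfi.integral_prod_right
  · rw [heq, integral_prod_symm _ hfi]
    simp only [hin]

/-- The product of the `F_j` with `j k = ε`, the `k`-th argument being `r`. -/
def slice {m : ℕ} (F : Corner m → (Fin m → ℝ) → ℝ) (k : Fin m) (ε : Fin 2) (x : Idx m → ℝ)
    (r : ℝ) : ℝ := ∏ j with j k = ε, F j (Function.update (proj j x) k r)

theorem slice_join {m : ℕ} (F : Corner m → (Fin m → ℝ) → ℝ) (k : Fin m) (ε : Fin 2)
    (z : {c : Idx m // pos c = k} → ℝ) (y : {c : Idx m // ¬ pos c = k} → ℝ) (r : ℝ) :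
    slice F k ε (join k z y) r = slice F k ε (join k 0 y) r := by
  unfold slice
  refine Finset.prod_congr rfl fun j _ => congrArg (F j) ?_
  ext l
  rcases eq_or_ne l k with rfl | hl
  · simp
  · simp [proj, join_apply, hl]

theorem Psi_eq_slice {m : ℕ} (F : Corner m → (Fin m → ℝ) → ℝ) (k : Fin m) (x : Idx m → ℝ) :
    Psi F x = slice F k 0 x (x (Sum.inl k)) * slice F k 1 x (x (Sum.inr k)) := by
  have hs : ∀ ε, slice F k ε x (x (cof k ε)) = ∏ j with j k = ε, F j (proj j x) := fun ε => by
    unfold slice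
    refine Finset.prod_congr rfl fun j hj => congrArg (F j) ?_
    rw [← (Finset.mem_filter.1 hj).2, ← sel_eq_cof]
    exact Function.update_eq_self _ _
  have h0 := hs 0
  have h1 := hs 1
  rw [cof_zero] at h0
  rw [cof_one] at h1
  rw [h0, h1, Psi, ← Finset.prod_filter_mul_prod_filter_not Finset.univ (fun j => j k = 0)]
  congr 2
  ext j
  simp only [Finset.mem_filter, Finset.mem_univ, true_and]
  have := (j k).isLt
  omega

theorem slice_Fk {m : ℕ} (F : Corner m → (Fin m → ℝ) → ℝ) (k : Fin m) (ε δ : Fin 2)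
    (x : Idx m → ℝ) (r : ℝ) : slice (Fk F k ε) k δ x r = slice F k ε x r := by
  unfold slice Fk
  refine Finset.prod_bij' (fun j _ => Function.update j k ε) (fun j _ => Function.update j k δ)
    ?_ ?_ ?_ ?_ ?_
  · intro j _; simp
  · intro j _; simp
  · intro j hj; simp [← (Finset.mem_filter.1 hj).2]
  · intro j hj; simp [← (Finset.mem_filter.1 hj).2]
  · intro j _
    refine congrArg _ ?_
    ext l
    rcases eq_or_ne l k with rfl | hl
    · simp
    · simp [Function.update_of_ne hl, proj, sel]

theorem prod_join {m : ℕ} (k : Fin m) (ψ : Idx m → ℝ → ℝ)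
    (z : {c : Idx m // pos c = k} → ℝ) (y : {c : Idx m // ¬ pos c = k} → ℝ) :
    ∏ c, ψ c (join k z y c) = (∏ c : {c : Idx m // ¬ pos c = k}, ψ c (y c)) *
      ∏ c : {c : Idx m // pos c = k}, ψ c (z c) := by
  rw [← Fintype.prod_subtype_mul_prod_subtype (fun c => pos c = k), mul_comm]
  congr 1
  · refine Finset.prod_congr rfl fun c _ => ?_
    rw [join_apply, dif_neg c.2]
  · refine Finset.prod_congr rfl fun c _ => ?_
    rw [join_apply, dif_pos c.2]

/-- Splitting off the two coordinates at position `k`. -/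
theorem IsCc.integral_split {m : ℕ} {F : Corner m → (Fin m → ℝ) → ℝ} (hF : IsCc F) (k : Fin m)
    {ψ : Idx m → ℝ → ℝ} (hψ : ∀ c, Continuous (ψ c)) :
    Integrable (fun y : {c : Idx m // ¬ pos c = k} → ℝ => (∏ c : {c : Idx m // ¬ pos c = k}, ψ c (y c)) *
      ((∫ r, slice F k 0 (join k 0 y) r * ψ (Sum.inl k) r) *
        ∫ r, slice F k 1 (join k 0 y) r * ψ (Sum.inr k) r)) ∧
    ∫ x, Psi F x * ∏ c, ψ c (x c) =
      ∫ y : {c : Idx m // ¬ pos c = k} → ℝ, (∏ c : {c : Idx m // ¬ pos c = k}, ψ c (y c)) *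
      ((∫ r, slice F k 0 (join k 0 y) r * ψ (Sum.inl k) r) *
        ∫ r, slice F k 1 (join k 0 y) r * ψ (Sum.inr k) r) := by
  have := integral_join k (f := fun x => Psi F x * ∏ c, ψ c (x c))
    (hF.integrable_mul (by fun_prop)) (W := fun y => ∏ c : {c : Idx m // ¬ pos c = k}, ψ c (y c))
    (h := fun y c r => Sum.elim (fun _ => slice F k 0 (join k 0 y) r)
      (fun _ => slice F k 1 (join k 0 y) r) c * ψ c r) ?_
  · simpa using this
  · intro z y
    have h2 : Psi F (join k z y) = ∏ c : {c : Idx m // pos c = k},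
        Sum.elim (fun _ => slice F k 0 (join k 0 y) (z c))
          (fun _ => slice F k 1 (join k 0 y) (z c)) (c : Idx m) := by
      have := prod_pos_eq k (fun c => Sum.elim
        (fun _ => slice F k 0 (join k 0 y) (join k z y c))
        (fun _ => slice F k 1 (join k 0 y) (join k z y c)) c)
      rw [Psi_eq_slice F k, slice_join F k 0 z, slice_join F k 1 z]
      refine this.symm.trans (Finset.prod_congr rfl fun c _ => ?_)
      rw [join_apply k z y c, dif_pos c.2]
    rw [prod_join, h2, Finset.prod_mul_distrib]
    ring

/-- The functions at position `k` replaced by `φ`, the others by `ψ`. -/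
def twist {m : ℕ} (k : Fin m) (φ : ℝ → ℝ) (ψ : Idx m → ℝ → ℝ) : Idx m → ℝ → ℝ :=
  fun c => if pos c = k then φ else ψ c

theorem IsCc.abs_integral_le {m : ℕ} {F : Corner m → (Fin m → ℝ) → ℝ} (hF : IsCc F) (k : Fin m)
    {ψ ψ' : Idx m → ℝ → ℝ} (hψ : ∀ c, Continuous (ψ c)) (hψ' : ∀ c, Continuous (ψ' c))
    (hle : ∀ c, pos c ≠ k → ∀ r, |ψ c r| ≤ ψ' c r) :
    |∫ x, Psi F x * ∏ c, ψ c (x c)| ≤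
      ∑ ε, ∫ x, Psi (SBL.Fk F k ε) x * ∏ c, twist k (ψ (cof k ε)) ψ' c (x c) := by
  have hs := hF.integral_split k hψ
  have htc : ∀ ε c, Continuous (twist k (ψ (cof k ε)) ψ' c) := fun ε c => by
    unfold twist; split_ifs
    · exact hψ _
    · exact hψ' _
  have ht := fun ε => (hF.Fk k ε).integral_split k (htc ε)
  have hoff : ∀ ε (y : {c : Idx m // ¬ pos c = k} → ℝ),
      ∏ c : {c : Idx m // ¬ pos c = k}, twist k (ψ (cof k ε)) ψ' c (y c) =
        ∏ c : {c : Idx m // ¬ pos c = k}, ψ' c (y c) := fun ε y =>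
    Finset.prod_congr rfl fun c _ => by rw [twist, if_neg c.2]
  have hl : ∀ φ, twist k φ ψ' (Sum.inl k) = φ := fun φ => if_pos (pos_inl k)
  have hr : ∀ φ, twist k φ ψ' (Sum.inr k) = φ := fun φ => if_pos (pos_inr k)
  simp only [slice_Fk, hoff, hl, hr] at ht
  rw [Fin.sum_univ_two]
  rw [hs.2, (ht 0).2, (ht 1).2, ← integral_add (ht 0).1 (ht 1).1]
  refine (abs_integral_le_integral_abs).trans
    (integral_mono hs.1.abs ((ht 0).1.add (ht 1).1) fun y => ?_)
  simp only [cof_zero, cof_one]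
  rw [abs_mul, Finset.abs_prod, ← mul_add]
  have h0 : 0 ≤ ∏ c : {c : Idx m // ¬ pos c = k}, |ψ c (y c)| :=
    Finset.prod_nonneg fun c _ => abs_nonneg _
  have h1 : ∏ c : {c : Idx m // ¬ pos c = k}, |ψ c (y c)| ≤
      ∏ c : {c : Idx m // ¬ pos c = k}, ψ' c (y c) :=
    Finset.prod_le_prod (fun c _ => abs_nonneg _) fun c _ => hle c c.2 _
  refine mul_le_mul h1 ?_ (abs_nonneg _) (h0.trans h1)
  generalize (∫ r, slice F k 0 (join k 0 y) r * ψ (Sum.inl k) r) = a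
  generalize (∫ r, slice F k 1 (join k 0 y) r * ψ (Sum.inr k) r) = b
  rw [abs_le]
  constructor <;> nlinarith [sq_nonneg (a + b), sq_nonneg (a - b), sq_nonneg a, sq_nonneg b]

theorem IsCc.integral_nonneg {m : ℕ} {F : Corner m → (Fin m → ℝ) → ℝ} (hF : IsCc F) (k : Fin m)
    (hsym : ∀ j, F (istar k j) = F j)
    {ψ : Idx m → ℝ → ℝ} (hψ : ∀ c, Continuous (ψ c))
    (hk : ψ (Sum.inl k) = ψ (Sum.inr k)) (hpos : ∀ c, pos c ≠ k → ∀ r, 0 ≤ ψ c r) :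
    0 ≤ ∫ x, Psi F x * ∏ c, ψ c (x c) := by
  have hFk : F = SBL.Fk F k 0 := by
    funext j
    unfold SBL.Fk
    have h01 : j k = 0 ∨ j k = 1 := by have := (j k).isLt; omega
    rcases h01 with h | h
    · rw [← h, Function.update_eq_self]
    · rw [← hsym j]
      congr 1
      ext l
      by_cases hl : l = k
      · subst hl; simp [istar, h]
      · simp [istar, hl]
  rw [(hF.integral_split k hψ).2]
  refine MeasureTheory.integral_nonneg fun y => mul_nonneg
    (Finset.prod_nonneg fun c _ => hpos c c.2 _) ?_
  have : ∀ x r, slice F k 1 x r = slice F k 0 x r := fun x r => by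
    rw [hFk, slice_Fk, slice_Fk]
  simp only [this, hk]
  exact mul_self_nonneg _

/-- The Gaussian probability measure with density `ker 0 v (· - b)`. -/
def gm (v b : ℝ) : Measure ℝ := volume.withDensity fun r => ENNReal.ofReal (ker 0 v (r - b))

theorem isProbabilityMeasure_gm {v : ℝ} (hv : 0 < v) (b : ℝ) : IsProbabilityMeasure (gm v b) := by
  constructor
  rw [gm, withDensity_apply _ MeasurableSet.univ, Measure.restrict_univ,
    ← ofReal_integral_eq_lintegral_ofReal (integrable_ker_zero hv b)
      (Filter.Eventually.of_forall fun r => (ker_zero_pos hv _).le), integral_ker_zero hv b,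
    ENNReal.ofReal_one]

theorem pi_gm {ι : Type*} [Fintype ι] {v : ι → ℝ} (hv : ∀ i, 0 < v i) (b : ι → ℝ) :
    Measure.pi (fun i => gm (v i) (b i)) =
      volume.withDensity fun x : ι → ℝ => ENNReal.ofReal (∏ i, ker 0 (v i) (x i - b i)) := by
  have := fun i => isProbabilityMeasure_gm (hv i) (b i)
  refine Measure.pi_eq fun s hs => ?_
  have hm : MeasurableSet (Set.univ.pi s) := MeasurableSet.univ_pi hs
  rw [withDensity_apply _ hm, ← lintegral_indicator hm]
  have hint : ∀ i, Integrable ((s i).indicator fun r => ker 0 (v i) (r - b i)) := fun i =>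
    (integrable_ker_zero (hv i) (b i)).indicator (hs i)
  have hnn : ∀ i r, 0 ≤ (s i).indicator (fun r => ker 0 (v i) (r - b i)) r := fun i r =>
    Set.indicator_nonneg (fun r _ => (ker_zero_pos (hv i) _).le) r
  have e : (Set.univ.pi s).indicator (fun x : ι → ℝ =>
      ENNReal.ofReal (∏ i, ker 0 (v i) (x i - b i))) = fun x =>
      ENNReal.ofReal (∏ i, (s i).indicator (fun r => ker 0 (v i) (r - b i)) (x i)) := by
    funext x
    by_cases hx : x ∈ Set.univ.pi s
    · rw [Set.indicator_of_mem hx]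
      congr 1
      refine Finset.prod_congr rfl fun i _ => ?_
      rw [Set.indicator_of_mem (hx i trivial)]
    · rw [Set.indicator_of_notMem hx]
      simp only [Set.mem_pi, Set.mem_univ, true_imp_iff, not_forall] at hx
      obtain ⟨i, hi⟩ := hx
      rw [Finset.prod_eq_zero (Finset.mem_univ i) (Set.indicator_of_notMem hi _),
        ENNReal.ofReal_zero]
  rw [e, volume_pi, ← ofReal_integral_eq_lintegral_ofReal (Integrable.fintype_prod (f := fun i r =>
    (s i).indicator (fun r => ker 0 (v i) (r - b i)) r) hint)
      (Filter.Eventually.of_forall fun x => Finset.prod_nonneg fun i _ => hnn i _), ← volume_pi,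
    integral_fintype_prod_volume_eq_prod (f := fun i r =>
    (s i).indicator (fun r => ker 0 (v i) (r - b i)) r),
    ENNReal.ofReal_prod_of_nonneg fun i _ => integral_nonneg (hnn i)]
  refine Finset.prod_congr rfl fun i _ => ?_
  rw [gm, withDensity_apply _ (hs i), ← lintegral_indicator (hs i),
    ofReal_integral_eq_lintegral_ofReal (hint i) (Filter.Eventually.of_forall (hnn i))]
  congr 1
  funext r
  by_cases hr : r ∈ s i <;> simp [hr]

theorem card_sel_eq {m : ℕ} (c : Idx m) :
    (Finset.univ.filter fun j : Corner m => sel j (pos c) = c).card = 2 ^ (m - 1) := by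
  have key : ∀ (k : Fin m) (ε : Fin 2),
      (Finset.univ.filter fun j : Corner m => j k = ε).card = 2 ^ (m - 1) := fun k ε => by
    obtain ⟨n, rfl⟩ : ∃ n, m = n + 1 := ⟨m - 1, by have := k.isLt; omega⟩
    have : (Finset.univ.filter fun j : Corner (n + 1) => j k = ε) =
        Finset.univ.image fun j : Fin n → Fin 2 => k.insertNth (α := fun _ => Fin 2) ε j := by
      ext j
      simp only [Finset.mem_filter, Finset.mem_univ, true_and, Finset.mem_image]
      constructor
      · rintro rfl
        exact ⟨k.removeNth j, by simp⟩
      · rintro ⟨j, rfl⟩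
        simp
    rw [this]
    have hinj : Function.Injective fun j : Fin n → Fin 2 =>
        k.insertNth (α := fun _ => Fin 2) ε j := fun a b h => by
      simpa using h
    convert Finset.card_image_of_injective Finset.univ hinj
    simp
  rcases c with k | k
  · rw [← key k 0]
    congr 1
    refine Finset.filter_congr fun j _ => ?_
    rw [pos_inl, sel]
    split_ifs with h <;> simp [h]
  · rw [← key k 1]
    congr 1
    refine Finset.filter_congr fun j _ => ?_
    have := (j k).isLt
    rw [pos_inr, sel]
    split_ifs with h
    · simp [h]
    · simp only [true_iff]
      omega

/-- The Loomis–Whitney type inequality of Finner, in marginal form. -/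
theorem lmarginal_prod_le {m : ℕ} (μ : Idx m → Measure ℝ) [∀ c, IsProbabilityMeasure (μ c)]
    {g : Corner m → (Idx m → ℝ) → ℝ≥0∞} (hg : ∀ j, Measurable (g j))
    (hdep : ∀ j c, sel j (pos c) ≠ c → ∀ x r, g j (Function.update x c r) = g j x)
    (T : Finset (Idx m)) (x : Idx m → ℝ) :
    (∫⋯∫⁻_T, (fun x => ∏ j, g j x ^ ((2 ^ (m - 1) : ℝ)⁻¹)) ∂μ) x ≤
      ∏ j, ((∫⋯∫⁻_T, g j ∂μ) x) ^ ((2 ^ (m - 1) : ℝ)⁻¹) := by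
  classical
  induction T using Finset.induction_on generalizing x with
  | empty => simp
  | insert c T hc ih =>
    have hmeas : Measurable fun x => ∏ j, g j x ^ ((2 ^ (m - 1) : ℝ)⁻¹) := by fun_prop
    rw [lmarginal_insert _ hmeas hc]
    have hh : ∀ j, Measurable (∫⋯∫⁻_T, g j ∂μ) := fun j => (hg j).lmarginal μ
    have hdep' : ∀ j, sel j (pos c) ≠ c → ∀ r,
        (∫⋯∫⁻_T, g j ∂μ) (Function.update x c r) = (∫⋯∫⁻_T, g j ∂μ) x := fun j hj r => by
      rw [lmarginal_update_of_notMem (hg j) hc]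
      congr 1
      funext y
      exact hdep j c hj y r
    set A := Finset.univ.filter fun j : Corner m => sel j (pos c) = c
    set B := Finset.univ.filter fun j : Corner m => ¬ sel j (pos c) = c
    have hsplit : ∀ f : Corner m → ℝ≥0∞, ∏ j, f j = (∏ j ∈ A, f j) * ∏ j ∈ B, f j := fun f =>
      (Finset.prod_filter_mul_prod_filter_not _ _ _).symm
    calc ∫⁻ r, (∫⋯∫⁻_T, (fun x => ∏ j, g j x ^ ((2 ^ (m - 1) : ℝ)⁻¹)) ∂μ)
            (Function.update x c r) ∂μ c
        ≤ ∫⁻ r, ∏ j, ((∫⋯∫⁻_T, g j ∂μ) (Function.update x c r)) ^ ((2 ^ (m - 1) : ℝ)⁻¹) ∂μ c :=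
          lintegral_mono fun r => ih _
      _ = ∫⁻ r, (∏ j ∈ A, ((∫⋯∫⁻_T, g j ∂μ) (Function.update x c r)) ^ ((2 ^ (m - 1) : ℝ)⁻¹)) *
            ∏ j ∈ B, ((∫⋯∫⁻_T, g j ∂μ) x) ^ ((2 ^ (m - 1) : ℝ)⁻¹) ∂μ c := by
          refine lintegral_congr fun r => ?_
          rw [hsplit]
          congr 1
          refine Finset.prod_congr rfl fun j hj => ?_
          rw [hdep' j (Finset.mem_filter.1 hj).2]
      _ = (∫⁻ r, (∏ j ∈ A, ((∫⋯∫⁻_T, g j ∂μ) (Function.update x c r)) ^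
            ((2 ^ (m - 1) : ℝ)⁻¹)) ∂μ c) *
            ∏ j ∈ B, ((∫⋯∫⁻_T, g j ∂μ) x) ^ ((2 ^ (m - 1) : ℝ)⁻¹) := by
          rw [lintegral_mul_const]
          exact Finset.measurable_fun_prod _ fun j _ =>
            ((hh j).comp (measurable_update x)).pow_const _
      _ ≤ (∏ j ∈ A, (∫⁻ r, (∫⋯∫⁻_T, g j ∂μ) (Function.update x c r) ∂μ c) ^
            ((2 ^ (m - 1) : ℝ)⁻¹)) *
            ∏ j ∈ B, ((∫⋯∫⁻_T, g j ∂μ) x) ^ ((2 ^ (m - 1) : ℝ)⁻¹) := by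
          gcongr
          refine ENNReal.lintegral_prod_norm_pow_le A
            (fun j _ => ((hh j).comp (measurable_update x)).aemeasurable) ?_
            (fun _ _ => by positivity)
          rw [Finset.sum_const, card_sel_eq]
          simp
      _ = ∏ j, ((∫⋯∫⁻_(insert c T), g j ∂μ) x) ^ ((2 ^ (m - 1) : ℝ)⁻¹) := by
          rw [hsplit]
          congr 1
          · refine Finset.prod_congr rfl fun j _ => ?_
            rw [lmarginal_insert _ (hg j) hc]
          · refine Finset.prod_congr rfl fun j hj => ?_
            rw [lmarginal_insert _ (hg j) hc]
            simp [hdep' j (Finset.mem_filter.1 hj).2]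

theorem map_proj_pi {m : ℕ} (μ : Idx m → Measure ℝ) [∀ c, IsProbabilityMeasure (μ c)]
    (j : Corner m) : (Measure.pi μ).map (proj j) = Measure.pi fun k => μ (sel j k) := by
  symm
  refine Measure.pi_eq fun s hs => ?_
  rw [Measure.map_apply (continuous_proj j).measurable (MeasurableSet.univ_pi hs)]
  have : proj j ⁻¹' Set.univ.pi s = Set.univ.pi fun c : Idx m =>
      if sel j (pos c) = c then s (pos c) else Set.univ := by
    ext x
    simp only [Set.mem_preimage, Set.mem_pi, Set.mem_univ, true_imp_iff, proj]
    constructor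
    · intro h c
      split_ifs with hc
      · rw [← hc]
        simpa [hc] using h (pos c)
      · trivial
    · intro h k
      simpa using h (sel j k)
  rw [this, Measure.pi_pi, Fintype.prod_sum_type, ← Finset.prod_mul_distrib]
  refine Finset.prod_congr rfl fun k _ => ?_
  by_cases h : j k = 0 <;> simp [sel, h]

/-- Finner's inequality. -/
theorem lintegral_prod_proj_le {m : ℕ} (μ : Idx m → Measure ℝ) [∀ c, IsProbabilityMeasure (μ c)]
    {f : Corner m → (Fin m → ℝ) → ℝ≥0∞} (hf : ∀ j, Measurable (f j)) :
    ∫⁻ x, ∏ j, f j (proj j x) ^ ((2 ^ (m - 1) : ℝ)⁻¹) ∂Measure.pi μ ≤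
      ∏ j, (∫⁻ y, f j y ∂Measure.pi fun k => μ (sel j k)) ^ ((2 ^ (m - 1) : ℝ)⁻¹) := by
  have h := lmarginal_prod_le μ (g := fun j x => f j (proj j x))
    (fun j => (hf j).comp (continuous_proj j).measurable) (fun j c hc x r => by
      congr 1
      ext k
      have : sel j k ≠ c := by
        rintro rfl
        simp at hc
      simp [proj, Function.update_of_ne this]) Finset.univ 0
  simp only [lmarginal_univ] at h
  refine h.trans_eq (Finset.prod_congr rfl fun j _ => ?_)
  rw [← map_proj_pi, lintegral_map (hf j) (continuous_proj j).measurable]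

theorem exists_abs_Hv_le {m : ℕ} (γ : Idx m → ℕ) : ∃ C : ℝ, 0 ≤ C ∧
    ∀ (F : Corner m → (Fin m → ℝ) → ℝ), IsCc F → ∀ (v b : Idx m → ℝ), (∀ c, 0 < v c) →
      ∀ B : ℝ, 0 ≤ B →
      (∀ j, ∫⁻ y, ENNReal.ofReal (|F j y| ^ (2 ^ (m - 1)) *
        ∏ k, ker 0 (2 * v (sel j k)) (y k - b (sel j k))) ≤ ENNReal.ofReal B) →
      |Hv F γ v b| ≤ C * (B ^ ((2 ^ (m - 1) : ℝ)⁻¹)) ^ (2 ^ m) := by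
  choose K hK0 hK using exists_ker_le
  refine ⟨∏ c, K (γ c), Finset.prod_nonneg fun c _ => hK0 _, fun F hF v b hv B hB havg => ?_⟩
  set μ : Idx m → Measure ℝ := fun c => gm (2 * v c) (b c)
  have hv2 : ∀ c, 0 < 2 * v c := fun c => by have := hv c; positivity
  have : ∀ c, IsProbabilityMeasure (μ c) := fun c => isProbabilityMeasure_gm (hv2 c) _
  have hP : (2 ^ (m - 1) : ℝ) ≠ 0 := by positivity
  have hk0 : ∀ x : Idx m → ℝ, 0 ≤ ∏ c, ker 0 (2 * v c) (x c - b c) := fun x =>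
    Finset.prod_nonneg fun c _ => (ker_zero_pos (hv2 c) _).le
  have h1 : ENNReal.ofReal |Hv F γ v b| ≤
      ∫⁻ x, ENNReal.ofReal ((∏ c, K (γ c)) * (|Psi F x| * ∏ c, ker 0 (2 * v c) (x c - b c))) := by
    rw [← Real.enorm_eq_ofReal_abs, Hv]
    refine (enorm_integral_le_lintegral_enorm _).trans (lintegral_mono fun x => ?_)
    rw [Real.enorm_eq_ofReal_abs]
    refine ENNReal.ofReal_le_ofReal ?_
    rw [abs_mul, Finset.abs_prod, mul_left_comm, ← Finset.prod_mul_distrib]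
    exact mul_le_mul_of_nonneg_left (Finset.prod_le_prod (fun _ _ => abs_nonneg _) fun c _ =>
      hK _ _ _ (hv c)) (abs_nonneg _)
  set f : Corner m → (Fin m → ℝ) → ℝ≥0∞ := fun j y => ENNReal.ofReal (|F j y| ^ (2 ^ (m - 1)))
  have hf : ∀ j, Measurable (f j) := fun j => by
    have := (hF j).1
    exact (ENNReal.continuous_ofReal.comp (by fun_prop :
      Continuous fun y => |F j y| ^ (2 ^ (m - 1)))).measurable
  have hroot : ∀ a : ℝ, 0 ≤ a →
      ENNReal.ofReal (a ^ (2 ^ (m - 1))) ^ ((2 ^ (m - 1) : ℝ)⁻¹) = ENNReal.ofReal a := fun a ha => by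
    rw [ENNReal.ofReal_rpow_of_nonneg (by positivity) (by positivity), ← Real.rpow_natCast,
      ← Real.rpow_mul ha]
    congr 1
    push_cast
    rw [mul_inv_cancel₀ hP, Real.rpow_one]
  have h2 : ∫⁻ x, ENNReal.ofReal (|Psi F x| * ∏ c, ker 0 (2 * v c) (x c - b c)) =
      ∫⁻ x, ∏ j, f j (proj j x) ^ ((2 ^ (m - 1) : ℝ)⁻¹) ∂Measure.pi μ := by
    rw [pi_gm hv2, lintegral_withDensity_eq_lintegral_mul]
    · refine lintegral_congr fun x => ?_
      rw [Pi.mul_apply, mul_comm, ENNReal.ofReal_mul (hk0 x), Psi, Finset.abs_prod,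
        ENNReal.ofReal_prod_of_nonneg fun _ _ => abs_nonneg _]
      congr 1
      refine Finset.prod_congr rfl fun j _ => ?_
      rw [hroot _ (abs_nonneg _)]
    · exact (ENNReal.continuous_ofReal.comp (by fun_prop : Continuous fun x : Idx m → ℝ =>
        ∏ c, ker 0 (2 * v c) (x c - b c))).measurable
    · exact Finset.measurable_fun_prod _ fun j _ =>
        ((hf j).comp (continuous_proj j).measurable).pow_const _
  have h3 : ∀ j, ∫⁻ y, f j y ∂Measure.pi (fun k => μ (sel j k)) ≤ ENNReal.ofReal B := fun j => by
    rw [pi_gm fun k => hv2 (sel j k), lintegral_withDensity_eq_lintegral_mul _ _ (hf j)]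
    · refine le_trans (le_of_eq (lintegral_congr fun y => ?_)) (havg j)
      rw [Pi.mul_apply, mul_comm, ENNReal.ofReal_mul (by positivity)]
    · exact (ENNReal.continuous_ofReal.comp (by fun_prop : Continuous fun x : Fin m → ℝ =>
        ∏ k, ker 0 (2 * v (sel j k)) (x k - b (sel j k)))).measurable
  have hC : 0 ≤ ∏ c, K (γ c) := Finset.prod_nonneg fun c _ => hK0 _
  have h4 : ENNReal.ofReal |Hv F γ v b| ≤
      ENNReal.ofReal ((∏ c, K (γ c)) * (B ^ ((2 ^ (m - 1) : ℝ)⁻¹)) ^ (2 ^ m)) := by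
    refine h1.trans ?_
    simp_rw [ENNReal.ofReal_mul hC]
    rw [lintegral_const_mul' _ _ ENNReal.ofReal_ne_top, h2]
    gcongr
    refine (lintegral_prod_proj_le μ hf).trans ?_
    calc _ ≤ ∏ _j : Corner m, ENNReal.ofReal B ^ ((2 ^ (m - 1) : ℝ)⁻¹) :=
          Finset.prod_le_prod' fun j _ => ENNReal.rpow_le_rpow (h3 j) (by positivity)
      _ = _ := by
          rw [Finset.prod_const, ENNReal.ofReal_rpow_of_nonneg hB (by positivity),
            ENNReal.ofReal_pow (by positivity)]
          simp
  exact (ENNReal.ofReal_le_ofReal_iff (by positivity)).1 h4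

/-- Admissible data: a stopping function `ρ` with values bounded below, a matrix and a tuple of
functions with normalised averages above the graph of `ρ`. -/
structure Adm {m : ℕ} (Γ α ℓ : ℝ) (ρ : (Fin m → ℝ) → ℝ) (J : Matrix (Idx m) (Fin m) ℝ)
    (F : Corner m → (Fin m → ℝ) → ℝ) : Prop where
  cc : IsCc F
  lip : ∀ p q, |ρ p - ρ q| ≤ ‖p - q‖
  low : ∃ τ > 0, ∀ p, τ ≤ ρ p
  vol : volume {p | ρ p < 2 * ℓ} < ∞
  inv : ∀ (j : Corner m) (i : Fin m), ∃ q : Fin m → ℝ, ‖q‖ ≤ Γ ∧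
    (∀ k, (J *ᵥ q) (sel j k) = if k = i then 1 else 0) ∧ ∀ c, |(J *ᵥ q) c| ≤ Γ
  avg : ∀ (j : Corner m) (p : Fin m → ℝ) (t s D : ℝ) (w : Fin m → ℝ), 0 < t → ρ p ≤ 2 * t →
    1 ≤ s → (∀ k, 0 < w k) → (∀ k, w k ≤ s) → ∏ k, max 1 (w k)⁻¹ ≤ D →
    ∫⁻ y, ENNReal.ofReal (|F j y| ^ (2 ^ (m - 1)) *
      ∏ k, ker 0 (t * w k) (y k - (J *ᵥ p) (sel j k))) ≤ ENNReal.ofReal (D * s ^ α)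

/-- Admissible widths: equal to the maximal width `s` off `S`. -/
structure Wt {m : ℕ} (S : Finset (Fin m)) (w : Fin m → ℝ) (s D : ℝ) : Prop where
  one_le : 1 ≤ s
  pos : ∀ k, 0 < w k
  le : ∀ k, w k ≤ s
  eq : ∀ k, k ∉ S → w k = s
  prod : ∏ k, max 1 (w k)⁻¹ ≤ D

/-- The pairing at the point `(p, t)` of the upper half space. -/
def HH {m : ℕ} (F : Corner m → (Fin m → ℝ) → ℝ) (J : Matrix (Idx m) (Fin m) ℝ) (γ : Idx m → ℕ)
    (w : Fin m → ℝ) (p : Fin m → ℝ) (t : ℝ) : ℝ :=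
  Hv F γ (fun c => t * w (pos c)) (J *ᵥ p)

/-- The region between the graph of `ρ` and height `ℓ`. -/
def Om {m : ℕ} (ρ : (Fin m → ℝ) → ℝ) (ℓ : ℝ) : Set ((Fin m → ℝ) × ℝ) :=
  {z | ρ z.1 < z.2 ∧ z.2 < ℓ}

/-- The localized form. -/
def NN {m : ℕ} (ℓ : ℝ) (ρ : (Fin m → ℝ) → ℝ) (J : Matrix (Idx m) (Fin m) ℝ)
    (F : Corner m → (Fin m → ℝ) → ℝ) (γ : Idx m → ℕ) (w : Fin m → ℝ) : ℝ :=
  ∫ z in Om ρ ℓ, z.2⁻¹ * HH F J γ w z.1 z.2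

/-- The measure of the enlarged base of the region. -/
def VV {m : ℕ} (ρ : (Fin m → ℝ) → ℝ) (ℓ : ℝ) : ℝ := (volume {p | ρ p < 2 * ℓ}).toReal

theorem VV_nonneg {m : ℕ} (ρ : (Fin m → ℝ) → ℝ) (ℓ : ℝ) : 0 ≤ VV ρ ℓ := ENNReal.toReal_nonneg

section
variable {m : ℕ} {Γ α ℓ : ℝ} {ρ : (Fin m → ℝ) → ℝ} {J : Matrix (Idx m) (Fin m) ℝ}
  {F : Corner m → (Fin m → ℝ) → ℝ}

theorem Wt.D_pos {S : Finset (Fin m)} {w : Fin m → ℝ} {s D : ℝ} (h : Wt S w s D) : 1 ≤ D :=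
  le_trans (Finset.one_le_prod fun _ _ => le_max_left _ _) h.prod

theorem Adm.continuous_rho (h : Adm Γ α ℓ ρ J F) : Continuous ρ := by
  refine (LipschitzWith.of_dist_le_mul (K := 1) fun p q => ?_).continuous
  rw [Real.dist_eq, dist_eq_norm, NNReal.coe_one, one_mul]
  exact h.lip p q

theorem exists_abs_HH_le {m : ℕ} (hm : 0 < m) (α : ℝ) (γ : Idx m → ℕ) : ∃ C : ℝ, 0 ≤ C ∧
    ∀ {Γ ℓ : ℝ} {ρ : (Fin m → ℝ) → ℝ} {J : Matrix (Idx m) (Fin m) ℝ}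
      {F : Corner m → (Fin m → ℝ) → ℝ}, Adm Γ α ℓ ρ J F →
    ∀ {S : Finset (Fin m)} {w : Fin m → ℝ} {s D : ℝ}, Wt S w s D → ∀ {p t}, 0 < t → ρ p ≤ 2 * t →
      |HH F J γ w p t| ≤ C * (D ^ 2 * s ^ (2 * α)) := by
  obtain ⟨C, hC, h⟩ := exists_abs_Hv_le γ
  refine ⟨C * 4 ^ α, by positivity, fun {Γ ℓ ρ J F} hA S w s D hw p t ht hp => ?_⟩
  have hD := hw.D_pos
  have hs := hw.one_le
  have hB : 0 ≤ D * (2 * s) ^ α := by positivity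
  have havg : ∀ j, ∫⁻ y, ENNReal.ofReal (|F j y| ^ (2 ^ (m - 1)) *
      ∏ k, ker 0 (2 * (t * w (pos (sel j k)))) (y k - (J *ᵥ p) (sel j k))) ≤
        ENNReal.ofReal (D * (2 * s) ^ α) := fun j => by
    have := hA.avg j p t (2 * s) D (fun k => 2 * w k) ht hp (by linarith)
      (fun k => by have := hw.pos k; positivity) (fun k => by have := hw.le k; linarith)
      (le_trans (Finset.prod_le_prod (fun k _ => by positivity) fun k _ =>
        max_le_max le_rfl (inv_anti₀ (hw.pos k) (by have := hw.pos k; linarith))) hw.prod)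
    simpa only [pos_sel, mul_left_comm t 2] using this
  have := h F hA.cc (fun c => t * w (pos c)) (J *ᵥ p) (fun c => mul_pos ht (hw.pos _))
    (D * (2 * s) ^ α) hB havg
  refine this.trans_eq ?_
  have hp2 : ((2 : ℝ) ^ (m - 1))⁻¹ * (2 ^ m : ℕ) = 2 := by
    obtain ⟨n, rfl⟩ : ∃ n, m = n + 1 := ⟨m - 1, by omega⟩
    have : (2 : ℝ) ^ n ≠ 0 := by positivity
    push_cast
    rw [pow_succ]
    field_simp
  rw [← Real.rpow_natCast, ← Real.rpow_mul hB, hp2, Real.mul_rpow (by positivity) (by positivity),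
    ← Real.rpow_mul (by positivity), Real.mul_rpow (by positivity) (by positivity), mul_comm α 2,
    Real.rpow_mul (by positivity : (0:ℝ) ≤ 2)]
  norm_num
  ring
end

section
variable {m : ℕ} {Γ α ℓ : ℝ} {ρ : (Fin m → ℝ) → ℝ} {J : Matrix (Idx m) (Fin m) ℝ}
  {F : Corner m → (Fin m → ℝ) → ℝ}

theorem IsCc.measurable_HH (hF : IsCc F) (J : Matrix (Idx m) (Fin m) ℝ) (γ : Idx m → ℕ)
    (w : Fin m → ℝ) : Measurable fun z : (Fin m → ℝ) × ℝ => HH F J γ w z.1 z.2 := by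
  have h1 : Measurable fun z : (Fin m → ℝ) × ℝ =>
      ((fun c => (z.2 * w (pos c))⁻¹ : Idx m → ℝ), J *ᵥ z.1) := by
    refine Measurable.prodMk ?_ ?_
    · exact measurable_pi_lambda _ fun c => by fun_prop
    · exact (Continuous.matrix_mulVec continuous_const continuous_fst).measurable
  have h2 := (hF.continuous_inv_Hv γ).measurable.comp h1
  convert h2 using 2 with z
  simp [HH, inv_inv]

theorem Adm.measurableSet_Om (h : Adm Γ α ℓ ρ J F) : MeasurableSet (Om ρ ℓ) :=
  ((isOpen_lt (h.continuous_rho.comp continuous_fst) continuous_snd).inter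
    (isOpen_lt continuous_snd continuous_const)).measurableSet

theorem Adm.volume_base (h : Adm Γ α ℓ ρ J F) : volume {p | ρ p < ℓ} ≤ volume {p | ρ p < 2 * ℓ} := by
  obtain ⟨τ, hτ, hρ⟩ := h.low
  refine measure_mono fun p hp => ?_
  have := hρ p
  simp only [Set.mem_ofPred_eq] at hp ⊢
  linarith

theorem Adm.volume_Om (h : Adm Γ α ℓ ρ J F) : volume (Om ρ ℓ) < ∞ := by
  obtain ⟨τ, hτ, hρ⟩ := h.low
  have hsub : Om ρ ℓ ⊆ {p | ρ p < ℓ} ×ˢ Set.Ioo 0 ℓ := fun z hz =>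
    ⟨lt_trans hz.1 hz.2, lt_of_lt_of_le hτ ((hρ _).trans hz.1.le), hz.2⟩
  refine lt_of_le_of_lt (measure_mono hsub) ?_
  rw [Measure.volume_eq_prod, Measure.prod_prod]
  exact ENNReal.mul_lt_top (lt_of_le_of_lt h.volume_base h.vol) (by simp)

theorem Adm.integrableOn_of_bound (h : Adm Γ α ℓ ρ J F) {f : (Fin m → ℝ) × ℝ → ℝ}
    (hf : Measurable f) {C : ℝ} (hC : ∀ z ∈ Om ρ ℓ, |f z| ≤ C) : IntegrableOn f (Om ρ ℓ) := by
  refine Measure.integrableOn_of_bounded h.volume_Om.ne hf.aestronglyMeasurable (M := C) ?_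
  exact (ae_restrict_iff' h.measurableSet_Om).2 (Filter.Eventually.of_forall fun z hz => hC z hz)

theorem Adm.integrableOn (h : Adm Γ α ℓ ρ J F) (hm : 0 < m) (γ : Idx m → ℕ)
    {S : Finset (Fin m)} {w : Fin m → ℝ} {s D : ℝ} (hw : Wt S w s D) :
    IntegrableOn (fun z => z.2⁻¹ * HH F J γ w z.1 z.2) (Om ρ ℓ) := by
  obtain ⟨C, hC, hb⟩ := exists_abs_HH_le hm α γ
  obtain ⟨τ, hτ, hρ⟩ := h.low
  refine h.integrableOn_of_bound (measurable_snd.inv.mul (h.cc.measurable_HH J γ w))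
    (C := τ⁻¹ * (C * (D ^ 2 * s ^ (2 * α)))) fun z hz => ?_
  have h1 : τ < z.2 := lt_of_le_of_lt (hρ _) hz.1
  have h0 : 0 < z.2 := hτ.trans h1
  rw [abs_mul, abs_of_pos (inv_pos.2 h0)]
  exact mul_le_mul (inv_anti₀ hτ h1.le) (hb h hw h0 (by linarith [hz.1])) (abs_nonneg _)
    (by positivity)

theorem IsCc.hasDerivAt_HH_t (hF : IsCc F) (J : Matrix (Idx m) (Fin m) ℝ) (γ : Idx m → ℕ)
    {w : Fin m → ℝ} (hw : ∀ k, 0 < w k) (p : Fin m → ℝ) {t : ℝ} (ht : 0 < t) :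
    HasDerivAt (fun t => HH F J γ w p t) (t⁻¹ * ∑ c, (γ c * HH F J γ w p t +
      (2 * Real.pi)⁻¹ * HH F J (γ + Pi.single c 2) w p t)) t := by
  have := hF.hasDerivAt_Hv_width γ (J *ᵥ p) Set.univ (fun c => w (pos c)) (fun c => hw _) ht
  simpa [HH] using this

theorem IsCc.continuousOn_HH (hF : IsCc F) (J : Matrix (Idx m) (Fin m) ℝ) (γ : Idx m → ℕ)
    {w : Fin m → ℝ} (hw : ∀ k, 0 < w k) (p : Fin m → ℝ) :
    ContinuousOn (fun t => HH F J γ w p t) (Set.Ioi 0) := fun _ ht =>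
  (IsCc.hasDerivAt_HH_t hF J γ hw p ht).continuousAt.continuousWithinAt

/-- Fubini on the region `Om`. -/
theorem Adm.integral_Om (h : Adm Γ α ℓ ρ J F) {f : (Fin m → ℝ) × ℝ → ℝ}
    (hf : IntegrableOn f (Om ρ ℓ)) :
    Integrable (fun p => ∫ t in Set.Ioo (ρ p) ℓ, f (p, t)) ∧
    ∫ z in Om ρ ℓ, f z = ∫ p, ∫ t in Set.Ioo (ρ p) ℓ, f (p, t) := by
  have hf' : Integrable ((Om ρ ℓ).indicator f) (volume.prod volume) :=
    (integrable_indicator_iff h.measurableSet_Om).2 hf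
  have e : ∀ p, ∫ t in Set.Ioo (ρ p) ℓ, f (p, t) = ∫ t, (Om ρ ℓ).indicator f (p, t) := fun p => by
    rw [← integral_indicator measurableSet_Ioo]
    rfl
  simp only [e]
  refine ⟨hf'.integral_prod_left, ?_⟩
  rw [← integral_indicator h.measurableSet_Om, Measure.volume_eq_prod, integral_prod _ hf']

theorem Adm.abs_integral_base_le (h : Adm Γ α ℓ ρ J F) {f : (Fin m → ℝ) → ℝ} {C : ℝ}
    (h0 : ∀ p, ρ p < 2 * ℓ → |f p| ≤ C) (h1 : ∀ p, 2 * ℓ ≤ ρ p → f p = 0) :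
    |∫ p, f p| ≤ C * VV ρ ℓ := by
  have hms : MeasurableSet {p | ρ p < 2 * ℓ} :=
    (isOpen_lt h.continuous_rho continuous_const).measurableSet
  rw [← setIntegral_eq_integral_of_forall_compl_eq_zero (s := {p | ρ p < 2 * ℓ})
    fun p hp => h1 p (not_lt.1 hp)]
  have := norm_setIntegral_le_of_norm_le_const (f := f) (C := C) h.vol fun p hp => h0 p hp
  exact this

theorem Adm.setIntegral_sum (h : Adm Γ α ℓ ρ J F) (hm : 0 < m) {ι : Type*} (A : Finset ι)
    (a : ι → ℝ) (γ : ι → Idx m → ℕ) {S : Finset (Fin m)} {w : Fin m → ℝ} {s D : ℝ}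
    (hw : Wt S w s D) :
    ∑ c ∈ A, a c * NN ℓ ρ J F (γ c) w =
      ∫ z in Om ρ ℓ, ∑ c ∈ A, a c * (z.2⁻¹ * HH F J (γ c) w z.1 z.2) := by
  rw [integral_finsetSum _ fun c _ => ((h.integrableOn hm (γ c) hw).const_mul (a c))]
  refine Finset.sum_congr rfl fun c _ => ?_
  rw [integral_const_mul, NN]

/-- Telescoping in the scale variable. -/
theorem exists_scale_identity (hm : 0 < m) (α : ℝ) (γ : Idx m → ℕ) : ∃ C : ℝ, 0 ≤ C ∧
    ∀ {Γ ℓ : ℝ} {ρ : (Fin m → ℝ) → ℝ} {J : Matrix (Idx m) (Fin m) ℝ}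
      {F : Corner m → (Fin m → ℝ) → ℝ}, Adm Γ α ℓ ρ J F →
    ∀ {S : Finset (Fin m)} {w : Fin m → ℝ} {s D : ℝ}, Wt S w s D →
      |∑ c, (γ c * NN ℓ ρ J F γ w + (2 * Real.pi)⁻¹ * NN ℓ ρ J F (γ + Pi.single c 2) w)| ≤
        C * (D ^ 2 * s ^ (2 * α)) * VV ρ ℓ := by
  obtain ⟨C, hC, hb⟩ := exists_abs_HH_le hm α γ
  refine ⟨2 * C, by positivity, fun {Γ ℓ ρ J F} h S w s D hw => ?_⟩
  obtain ⟨τ, hτ, hρ⟩ := h.low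
  have hs := hw.one_le
  set G : (Fin m → ℝ) × ℝ → ℝ := fun z => z.2⁻¹ * ∑ c, (γ c * HH F J γ w z.1 z.2 +
      (2 * Real.pi)⁻¹ * HH F J (γ + Pi.single c 2) w z.1 z.2) with hG
  have hGi : IntegrableOn G (Om ρ ℓ) := by
    have : G = fun z => ∑ c, (γ c * (z.2⁻¹ * HH F J γ w z.1 z.2) +
      (2 * Real.pi)⁻¹ * (z.2⁻¹ * HH F J (γ + Pi.single c 2) w z.1 z.2)) := by
      funext z
      rw [hG]
      simp only
      rw [Finset.mul_sum]
      exact Finset.sum_congr rfl fun c _ => by ring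
    rw [this]
    exact integrable_finsetSum _ fun c _ => ((h.integrableOn hm γ hw).const_mul _).add
      ((h.integrableOn hm _ hw).const_mul _)
  have e : ∑ c, (γ c * NN ℓ ρ J F γ w + (2 * Real.pi)⁻¹ * NN ℓ ρ J F (γ + Pi.single c 2) w) =
      ∫ z in Om ρ ℓ, G z := by
    rw [Finset.sum_add_distrib, h.setIntegral_sum hm Finset.univ (fun c => (γ c : ℝ)) _ hw,
      h.setIntegral_sum hm Finset.univ (fun _ => (2 * Real.pi)⁻¹) _ hw, ← integral_add]
    · refine setIntegral_congr_fun h.measurableSet_Om fun z _ => ?_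
      rw [hG]
      simp only
      rw [Finset.mul_sum, ← Finset.sum_add_distrib]
      exact Finset.sum_congr rfl fun c _ => by ring
    · exact integrable_finsetSum _ fun c _ => (h.integrableOn hm γ hw).const_mul _
    · exact integrable_finsetSum _ fun c _ => (h.integrableOn hm _ hw).const_mul _
  rw [e, (h.integral_Om hGi).2]
  refine h.abs_integral_base_le (fun p _ => ?_) (fun p hp => ?_)
  · rcases le_or_gt ℓ (ρ p) with hl | hl
    · rw [Set.Ioo_eq_empty (not_lt.2 hl)]
      simp only [Measure.restrict_empty, integral_zero_measure, abs_zero]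
      have := hw.D_pos
      positivity
    · have hpos : 0 < ρ p := hτ.trans_le (hρ p)
      rw [← integral_Ioc_eq_integral_Ioo, ← intervalIntegral.integral_of_le hl.le]
      have hcont : ContinuousOn (fun t => G (p, t)) (Set.uIcc (ρ p) ℓ) := by
        rw [Set.uIcc_of_le hl.le]
        have hsub : Set.Icc (ρ p) ℓ ⊆ Set.Ioi 0 := fun t ht => hpos.trans_le ht.1
        refine ContinuousOn.mul (continuousOn_id.inv₀ fun t ht => (hsub ht).ne') ?_
        refine continuousOn_finsetSum _ fun c _ => ?_
        exact (continuousOn_const.mul ((h.cc.continuousOn_HH J γ hw.pos p).mono hsub)).add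
          (continuousOn_const.mul ((h.cc.continuousOn_HH J _ hw.pos p).mono hsub))
      rw [intervalIntegral.integral_eq_sub_of_hasDerivAt (f := fun t => HH F J γ w p t)
        (fun t ht => ?_) hcont.intervalIntegrable]
      · have h1 := hb h hw (hpos.trans hl) (p := p) (by linarith)
        have h2 := hb h hw hpos (p := p) (by linarith)
        exact (abs_sub _ _).trans (by linarith)
      · rw [Set.uIcc_of_le hl.le] at ht
        exact IsCc.hasDerivAt_HH_t h.cc J γ hw.pos p (hpos.trans_le ht.1)
  · have : ¬ ρ p < ℓ := by
      have := hρ p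
      intro hc
      linarith
    rw [Set.Ioo_eq_empty this]
    simp
end

section
variable {m : ℕ} {Γ α ℓ : ℝ} {ρ : (Fin m → ℝ) → ℝ} {J : Matrix (Idx m) (Fin m) ℝ}
  {F : Corner m → (Fin m → ℝ) → ℝ}

theorem IsCc.hasDerivAt_HH_p (hF : IsCc F) (J : Matrix (Idx m) (Fin m) ℝ) (γ : Idx m → ℕ)
    (w p q : Fin m → ℝ) (t r : ℝ) :
    HasDerivAt (fun r => HH F J γ w (p + r • q) t)
      (-∑ c, (J *ᵥ q) c * (t * w (pos c))⁻¹ * HH F J (γ + Pi.single c 1) w (p + r • q) t) r := by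
  have e : ∀ r : ℝ, J *ᵥ (p + r • q) = fun c => (J *ᵥ p) c + r * (J *ᵥ q) c := fun r => by
    rw [mulVec_add, mulVec_smul]
    rfl
  simp only [HH, e]
  exact hF.hasDerivAt_Hv_center γ (fun c => t * w (pos c)) (J *ᵥ p) (J *ᵥ q) r

theorem setIntegral_Ioo_eq (φ : ℝ → ℝ) (a ℓ : ℝ) :
    ∫ t in Set.Ioo a ℓ, φ t = ∫ t in (min a ℓ)..ℓ, φ t := by
  rcases le_or_gt ℓ a with h | h
  · rw [Set.Ioo_eq_empty (not_lt.2 h), min_eq_right h]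
    simp
  · rw [min_eq_left h.le, intervalIntegral.integral_of_le h.le, integral_Ioc_eq_integral_Ioo]

/-- Moving the lower boundary of the region costs at most its displacement. -/
theorem Adm.abs_slice_sub_le (h : Adm Γ α ℓ ρ J F) (γ : Idx m → ℕ) {w : Fin m → ℝ}
    (hw : ∀ k, 0 < w k) {p p' : Fin m → ℝ} {τ B : ℝ} (hτ : 0 < τ) (hρ : ∀ p, τ ≤ ρ p)
    (hpp : ‖p' - p‖ ≤ τ) (hB : ∀ t, 0 < t → ρ p ≤ 2 * t → |HH F J γ w p t| ≤ B)
    (hp : ρ p < 2 * ℓ) :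
    |(∫ t in Set.Ioo (ρ p') ℓ, HH F J γ w p t) - ∫ t in Set.Ioo (ρ p) ℓ, HH F J γ w p t| ≤
      B * ‖p' - p‖ := by
  have hℓ : 0 < ℓ := by linarith [hρ p]
  have hl := (h.lip p' p)
  have ha := hρ p
  have ha' := hρ p'
  have hint : ∀ a b : ℝ, 0 < a → 0 < b →
      IntervalIntegrable (fun t => HH F J γ w p t) volume a b := fun a b ha hb => by
    refine ContinuousOn.intervalIntegrable ((h.cc.continuousOn_HH J γ hw p).mono fun t ht => ?_)
    exact lt_of_lt_of_le (lt_min ha hb) ht.1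
  have hm1 : 0 < min (ρ p) ℓ := lt_min (by linarith) hℓ
  have hm2 : 0 < min (ρ p') ℓ := lt_min (by linarith) hℓ
  have hB0 : 0 ≤ B := (abs_nonneg _).trans (hB (ρ p) (by linarith) (by linarith))
  rw [setIntegral_Ioo_eq, setIntegral_Ioo_eq,
    ← intervalIntegral.integral_add_adjacent_intervals (hint _ _ hm2 hm1) (hint _ _ hm1 hℓ),
    add_sub_cancel_right]
  have hbd : ∀ t ∈ Set.uIoc (min (ρ p') ℓ) (min (ρ p) ℓ), ‖HH F J γ w p t‖ ≤ B := fun t ht => by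
    have h1 : min (min (ρ p') ℓ) (min (ρ p) ℓ) < t := ht.1
    have h2 : t ≤ max (min (ρ p') ℓ) (min (ρ p) ℓ) := ht.2
    have h3 : t ≤ ℓ := h2.trans (max_le (min_le_right _ _) (min_le_right _ _))
    have hlow := abs_le.1 (hl.trans hpp)
    have h4 : ρ p' < t ∨ ρ p < t := by
      simp only [min_lt_iff] at h1
      rcases h1 with (h1 | h1) | (h1 | h1)
      · exact Or.inl h1
      · exact absurd h1 (not_lt.2 h3)
      · exact Or.inr h1
      · exact absurd h1 (not_lt.2 h3)
    refine hB t ?_ ?_ <;> rcases h4 with h4 | h4 <;> linarith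
  refine (intervalIntegral.norm_integral_le_of_norm_le_const hbd).trans ?_
  refine mul_le_mul_of_nonneg_left ?_ hB0
  refine (abs_min_sub_min_le_max _ _ _ _).trans ?_
  rw [sub_self, abs_zero, max_eq_left (abs_nonneg _), norm_sub_rev]
  exact h.lip _ _

/-- Summation by parts in the position variable. -/
theorem exists_shift_identity (hm : 0 < m) (α : ℝ) (γ : Idx m → ℕ) : ∃ C : ℝ, 0 ≤ C ∧
    ∀ {Γ ℓ : ℝ} {ρ : (Fin m → ℝ) → ℝ} {J : Matrix (Idx m) (Fin m) ℝ}
      {F : Corner m → (Fin m → ℝ) → ℝ}, Adm Γ α ℓ ρ J F →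
    ∀ {S : Finset (Fin m)} {w : Fin m → ℝ} {s D : ℝ}, Wt S w s D → ∀ q : Fin m → ℝ,
      |∑ c, (J *ᵥ q) c * (w (pos c))⁻¹ * NN ℓ ρ J F (γ + Pi.single c 1) w| ≤
        C * (D ^ 2 * s ^ (2 * α)) * VV ρ ℓ * ‖q‖ := by
  obtain ⟨C, hC, hb⟩ := exists_abs_HH_le hm α γ
  choose C' hC' hb' using fun c : Idx m => exists_abs_HH_le hm α (γ + Pi.single c 1)
  refine ⟨C, hC, fun {Γ ℓ ρ J F} h S w s D hw q => ?_⟩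
  obtain ⟨τ, hτ, hρ⟩ := h.low
  have hs := hw.one_le
  have hD := hw.D_pos
  set E := D ^ 2 * s ^ (2 * α) with hE
  have hE0 : 0 ≤ E := by positivity
  set δ := τ / (‖q‖ + 1) with hδ
  have hδ0 : 0 < δ := by positivity
  have hsmall : ∀ r ∈ Metric.ball (0 : ℝ) δ, ‖r • q‖ ≤ τ := fun r hr => by
    rw [mem_ball_zero_iff] at hr
    rw [norm_smul]
    calc ‖r‖ * ‖q‖ ≤ δ * (‖q‖ + 1) := by gcongr; linarith
      _ = τ := by rw [hδ]; field_simp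
  have habove : ∀ r ∈ Metric.ball (0 : ℝ) δ, ∀ z ∈ Om ρ ℓ,
      τ < z.2 ∧ ρ (z.1 + r • q) ≤ 2 * z.2 := fun r hr z hz => by
    have h1 := abs_le.1 ((h.lip (z.1 + r • q) z.1).trans (by simpa using hsmall r hr))
    have h2 := hρ z.1
    have h3 := hz.1
    constructor <;> linarith
  have hmeas : ∀ γ' (r : ℝ), Measurable fun z : (Fin m → ℝ) × ℝ =>
      HH F J γ' w (z.1 + r • q) z.2 := fun γ' r =>
    (h.cc.measurable_HH J γ' w).comp (((measurable_fst.add_const _)).prodMk measurable_snd)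
  have hint : ∀ r ∈ Metric.ball (0 : ℝ) δ,
      IntegrableOn (fun z : (Fin m → ℝ) × ℝ => HH F J γ w (z.1 + r • q) z.2) (Om ρ ℓ) :=
    fun r hr => h.integrableOn_of_bound (hmeas γ r) (C := C * E) fun z hz =>
      hb h hw (hτ.trans (habove r hr z hz).1) (habove r hr z hz).2
  have h0 : (0 : ℝ) ∈ Metric.ball (0 : ℝ) δ := Metric.mem_ball_self hδ0
  set F' : ℝ → (Fin m → ℝ) × ℝ → ℝ := fun r z => -∑ c, (J *ᵥ q) c * (z.2 * w (pos c))⁻¹ *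
    HH F J (γ + Pi.single c 1) w (z.1 + r • q) z.2 with hF'
  have hder := (hasDerivAt_integral_of_dominated_loc_of_deriv_le (μ := volume.restrict (Om ρ ℓ))
    (F := fun r z => HH F J γ w (z.1 + r • q) z.2) (F' := F')
    (bound := fun _ => ∑ c, |(J *ᵥ q) c| * (τ * w (pos c))⁻¹ * (C' c * E))
    (Metric.ball_mem_nhds (0 : ℝ) hδ0)
    (Filter.Eventually.of_forall fun r => (hmeas γ r).aestronglyMeasurable) (hint 0 h0) ?_ ?_ ?_
    ?_).2
  · have e0 : ∫ z in Om ρ ℓ, F' 0 z =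
        -∑ c, (J *ᵥ q) c * (w (pos c))⁻¹ * NN ℓ ρ J F (γ + Pi.single c 1) w := by
      rw [h.setIntegral_sum hm Finset.univ (fun c => (J *ᵥ q) c * (w (pos c))⁻¹) _ hw,
        ← integral_neg]
      refine integral_congr_ae (Filter.Eventually.of_forall fun z => ?_)
      simp only [hF', zero_smul, add_zero, mul_inv]
      congr 1
      exact Finset.sum_congr rfl fun c _ => by ring
    rw [e0] at hder
    have hlip : ∀ᶠ r in nhds (0 : ℝ), ‖(∫ z in Om ρ ℓ, HH F J γ w (z.1 + r • q) z.2) -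
        ∫ z in Om ρ ℓ, HH F J γ w (z.1 + (0 : ℝ) • q) z.2‖ ≤ (C * E * VV ρ ℓ * ‖q‖) * ‖r - 0‖ := by
      filter_upwards [Metric.ball_mem_nhds (0 : ℝ) hδ0] with r hr
      have hr' := hsmall r hr
      obtain ⟨i1, e1⟩ := h.integral_Om (hint r hr)
      obtain ⟨i2, e2⟩ := h.integral_Om (hint 0 h0)
      simp only [zero_smul, add_zero] at i2 e2 ⊢
      rw [e1, e2, ← integral_sub_right_eq_self _ (r • q),
        ← integral_sub (i1.comp_sub_right (r • q)) i2]
      simp only [sub_add_cancel]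
      have hd : ∀ p : Fin m → ℝ, ‖p - r • q - p‖ = ‖r • q‖ := fun p => by
        rw [sub_sub_cancel_left, norm_neg]
      refine (h.abs_integral_base_le (C := C * E * ‖r • q‖) (fun p hp => ?_)
        (fun p hp => ?_)).trans_eq ?_
      · rw [← hd p]
        exact h.abs_slice_sub_le γ hw.pos hτ hρ (by rw [hd]; exact hr')
          (fun t ht hpt => hb h hw ht hpt) hp
      · have h1 := abs_le.1 ((h.lip (p - r • q) p).trans ((hd p).le.trans hr'))
        have h2 := hρ p
        have h3 := hρ (p - r • q)
        rw [Set.Ioo_eq_empty (by intro hc; linarith), Set.Ioo_eq_empty (by intro hc; linarith)]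
        simp
      · rw [norm_smul, sub_zero]
        ring
    have := hder.le_of_lip' (by have := VV_nonneg ρ ℓ; positivity) hlip
    rwa [norm_neg, Real.norm_eq_abs] at this
  · refine Measurable.aestronglyMeasurable ?_
    refine (Finset.measurable_fun_sum _ fun c _ => ?_).neg
    exact (measurable_const.mul (measurable_snd.mul_const _).inv).mul (hmeas _ 0)
  · refine (ae_restrict_iff' h.measurableSet_Om).2 (Filter.Eventually.of_forall fun z hz r hr => ?_)
    obtain ⟨h1, h2⟩ := habove r hr z hz
    have hz0 : 0 < z.2 := hτ.trans h1
    rw [hF', norm_neg]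
    refine (norm_sum_le _ _).trans (Finset.sum_le_sum fun c _ => ?_)
    have hwc := hw.pos (pos c)
    rw [norm_mul, norm_mul, Real.norm_eq_abs, Real.norm_eq_abs, Real.norm_eq_abs,
      abs_of_pos (inv_pos.2 (mul_pos hz0 hwc))]
    have h3 : (z.2 * w (pos c))⁻¹ ≤ (τ * w (pos c))⁻¹ :=
      inv_anti₀ (by positivity) (mul_le_mul_of_nonneg_right h1.le hwc.le)
    have h4 := hb' c h hw hz0 h2
    exact mul_le_mul (mul_le_mul_of_nonneg_left h3 (abs_nonneg _)) h4 (abs_nonneg _)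
      (by positivity)
  · exact integrableOn_const h.volume_Om.ne
  · exact Filter.Eventually.of_forall fun z r _ => h.cc.hasDerivAt_HH_p J γ w z.1 q z.2 r
end

/-- Replace the widths off `S` by `s`. -/
def ws {m : ℕ} (S : Finset (Fin m)) (w : Fin m → ℝ) (s : ℝ) (k : Fin m) : ℝ :=
  if k ∈ S then w k else s

section
variable {m : ℕ} {Γ α ℓ : ℝ} {ρ : (Fin m → ℝ) → ℝ} {J : Matrix (Idx m) (Fin m) ℝ}
  {F : Corner m → (Fin m → ℝ) → ℝ} {S : Finset (Fin m)} {w : Fin m → ℝ} {s D : ℝ}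

theorem Wt.ws_self (hw : Wt S w s D) : ws S w s = w := by
  funext k
  unfold ws
  split_ifs with hk
  · rfl
  · exact (hw.eq k hk).symm

theorem Wt.ws (hw : Wt S w s D) {s' : ℝ} (hs : s ≤ s') : Wt S (ws S w s') s' D where
  one_le := hw.one_le.trans hs
  pos k := by
    unfold SBL.ws; split_ifs
    · exact hw.pos k
    · linarith [hw.one_le]
  le k := by
    unfold SBL.ws; split_ifs
    · exact (hw.le k).trans hs
    · exact le_rfl
  eq k hk := by simp [SBL.ws, hk]
  prod := by
    refine le_trans (Finset.prod_le_prod (fun _ _ => by positivity) fun k _ => ?_) hw.prod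
    refine max_le_max le_rfl (inv_anti₀ (hw.pos k) ?_)
    unfold SBL.ws; split_ifs
    · exact le_rfl
    · exact (hw.le k).trans hs

theorem Wt.ws_near (hw : Wt S w s D) {s' : ℝ} (h1 : s / 2 ≤ s') (h2 : s' ≤ 2 * s) :
    Wt Finset.univ (SBL.ws S w s') (2 * s) (∏ k, max 1 (SBL.ws S w (s / 2) k)⁻¹) := by
  have hs := hw.one_le
  have hp : ∀ k, 0 < SBL.ws S w (s / 2) k := fun k => by
    unfold SBL.ws; split_ifs
    · exact hw.pos k
    · linarith
  have hle : ∀ k, SBL.ws S w (s / 2) k ≤ SBL.ws S w s' k := fun k => by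
    unfold SBL.ws; split_ifs
    · exact le_rfl
    · exact h1
  refine ⟨by linarith, fun k => (hp k).trans_le (hle k), fun k => ?_, fun k hk => ?_, ?_⟩
  · unfold SBL.ws; split_ifs
    · linarith [hw.le k]
    · exact h2
  · exact absurd (Finset.mem_univ k) hk
  · exact Finset.prod_le_prod (fun _ _ => by positivity) fun k _ =>
      max_le_max le_rfl (inv_anti₀ (hp k) (hle k))

theorem IsCc.hasDerivAt_HH_width (hF : IsCc F) (J : Matrix (Idx m) (Fin m) ℝ) (γ : Idx m → ℕ)
    (S : Finset (Fin m)) (hw : ∀ k, 0 < w k) (p : Fin m → ℝ) {t : ℝ} (ht : 0 < t)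
    {r : ℝ} (hr : 0 < r) :
    HasDerivAt (fun r => HH F J γ (SBL.ws S w r) p t)
      (r⁻¹ * ∑ c : Idx m, if pos c ∉ S then (γ c * HH F J γ (SBL.ws S w r) p t +
        (2 * Real.pi)⁻¹ * HH F J (γ + Pi.single c 2) (SBL.ws S w r) p t) else 0) r := by
  have key := hF.hasDerivAt_Hv_width γ (J *ᵥ p) {c | pos c ∉ S}
    (fun c => if pos c ∈ S then t * w (pos c) else t)
    (fun c => by split_ifs; exacts [mul_pos ht (hw _), ht]) hr
  have e : ∀ r : ℝ, (fun c : Idx m => if c ∈ {c : Idx m | pos c ∉ S} then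
      r * (if pos c ∈ S then t * w (pos c) else t) else
      (if pos c ∈ S then t * w (pos c) else t)) = fun c => t * SBL.ws S w r (pos c) := fun r => by
    funext c
    by_cases hc : pos c ∈ S
    · simp [SBL.ws, hc]
    · simp [SBL.ws, hc, mul_comm]
  simp only [e] at key
  exact key

theorem Adm.abs_NN_le (h : Adm Γ α ℓ ρ J F) (hm : 0 < m) (γ : Idx m → ℕ) : ∃ B : ℝ,
    ∀ {S : Finset (Fin m)} {w : Fin m → ℝ} {s D : ℝ}, Wt S w s D →
      |NN ℓ ρ J F γ w| ≤ B * (D ^ 2 * s ^ (2 * α)) := by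
  obtain ⟨C, hC, hb⟩ := exists_abs_HH_le hm α γ
  obtain ⟨τ, hτ, hρ⟩ := h.low
  refine ⟨τ⁻¹ * C * (volume (Om ρ ℓ)).toReal, fun {S w s D} hw => ?_⟩
  have := norm_setIntegral_le_of_norm_le_const (f := fun z => z.2⁻¹ * HH F J γ w z.1 z.2)
    (C := τ⁻¹ * (C * (D ^ 2 * s ^ (2 * α)))) h.volume_Om fun z hz => by
      have h1 : τ < z.2 := lt_of_le_of_lt (hρ _) hz.1
      have h0 : 0 < z.2 := hτ.trans h1
      rw [Real.norm_eq_abs, abs_mul, abs_of_pos (inv_pos.2 h0)]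
      exact mul_le_mul (inv_anti₀ hτ h1.le) (hb h hw h0 (by linarith [hz.1])) (abs_nonneg _)
        (by positivity)
  refine this.trans_eq ?_
  rw [Measure.real]
  ring

theorem Adm.hasDerivAt_NN_width (h : Adm Γ α ℓ ρ J F) (hm : 0 < m) (γ : Idx m → ℕ)
    (hw : Wt S w s D) :
    HasDerivAt (fun r => NN ℓ ρ J F γ (SBL.ws S w r))
      (s⁻¹ * ∑ c : Idx m, if pos c ∉ S then (γ c * NN ℓ ρ J F γ (SBL.ws S w s) +
        (2 * Real.pi)⁻¹ * NN ℓ ρ J F (γ + Pi.single c 2) (SBL.ws S w s)) else 0) s := by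
  have hs := hw.one_le
  obtain ⟨τ, hτ, hρ⟩ := h.low
  have hnear : ∀ r ∈ Metric.ball s (s / 2), Wt Finset.univ (SBL.ws S w r) (2 * s)
      (∏ k, max 1 (SBL.ws S w (s / 2) k)⁻¹) := fun r hr => by
    rw [Metric.mem_ball, Real.dist_eq, abs_lt] at hr
    exact hw.ws_near (by linarith) (by linarith)
  set D' := ∏ k, max 1 (SBL.ws S w (s / 2) k)⁻¹ with hD'
  have hs0 : s ∈ Metric.ball s (s / 2) := Metric.mem_ball_self (by linarith)
  have hint : ∀ γ', ∀ r ∈ Metric.ball s (s / 2), IntegrableOn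
      (fun z => z.2⁻¹ * HH F J γ' (SBL.ws S w r) z.1 z.2) (Om ρ ℓ) := fun γ' r hr =>
    h.integrableOn hm γ' (hnear r hr)
  set F' : ℝ → (Fin m → ℝ) × ℝ → ℝ := fun r z => r⁻¹ * ∑ c : Idx m, if pos c ∉ S then
    (γ c * (z.2⁻¹ * HH F J γ (SBL.ws S w r) z.1 z.2) + (2 * Real.pi)⁻¹ *
      (z.2⁻¹ * HH F J (γ + Pi.single c 2) (SBL.ws S w r) z.1 z.2)) else 0 with hF'
  obtain ⟨C, hC, hb⟩ := exists_abs_HH_le hm α γ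
  choose C' hC' hb' using fun c : Idx m => exists_abs_HH_le hm α (γ + Pi.single c 2)
  set E := D' ^ 2 * (2 * s) ^ (2 * α) with hE
  have hE0 : 0 ≤ E := by positivity
  have hi : ∀ c : Idx m, IntegrableOn (fun z => if pos c ∉ S then
    (γ c * (z.2⁻¹ * HH F J γ (SBL.ws S w s) z.1 z.2) + (2 * Real.pi)⁻¹ *
      (z.2⁻¹ * HH F J (γ + Pi.single c 2) (SBL.ws S w s) z.1 z.2)) else 0) (Om ρ ℓ) := fun c => by
    split_ifs; swap
    · exact ((hint _ s hs0).const_mul _).add ((hint _ s hs0).const_mul _)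
    · exact integrable_zero _ _ _
  have key := (hasDerivAt_integral_of_dominated_loc_of_deriv_le (μ := volume.restrict (Om ρ ℓ))
    (F := fun r z => z.2⁻¹ * HH F J γ (SBL.ws S w r) z.1 z.2) (F' := F')
    (s := Metric.ball s (s / 2))
    (bound := fun _ => (s / 2)⁻¹ * ∑ c : Idx m, (γ c * (τ⁻¹ * (C * E)) + (2 * Real.pi)⁻¹ *
      (τ⁻¹ * (C' c * E)))) (Metric.ball_mem_nhds s (by linarith)) ?_ (hint γ s hs0) ?_ ?_ ?_ ?_).2
  · refine key.congr_deriv ?_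
    rw [hF', integral_const_mul, integral_finsetSum _ fun c _ => hi c]
    congr 1
    refine Finset.sum_congr rfl fun c _ => ?_
    split_ifs; swap
    · rw [integral_add ((hint _ s hs0).const_mul _) ((hint _ s hs0).const_mul _),
        integral_const_mul, integral_const_mul, NN, NN]
    · simp
  · filter_upwards [Metric.ball_mem_nhds s (by linarith : 0 < s / 2)] with r hr
    exact (hint γ r hr).1
  · exact ((integrable_finsetSum _ fun c _ => hi c).const_mul _).1
  · refine (ae_restrict_iff' h.measurableSet_Om).2 (Filter.Eventually.of_forall fun z hz r hr => ?_)
    have h1 : τ < z.2 := lt_of_le_of_lt (hρ _) hz.1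
    have h0 : 0 < z.2 := hτ.trans h1
    have hwr := hnear r hr
    have hrb := hr
    rw [Metric.mem_ball, Real.dist_eq, abs_lt] at hrb
    have hr0 : 0 < r := by linarith
    have hb1 : ∀ x B : ℝ, |x| ≤ B → |z.2⁻¹ * x| ≤ τ⁻¹ * B := fun x B hx => by
      rw [abs_mul, abs_of_pos (inv_pos.2 h0)]
      exact mul_le_mul (inv_anti₀ hτ h1.le) hx (abs_nonneg _) (by positivity)
    rw [hF', Real.norm_eq_abs, abs_mul, abs_of_pos (inv_pos.2 hr0)]
    refine mul_le_mul (inv_anti₀ (by linarith) (by linarith)) ?_ (abs_nonneg _)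
      (by positivity)
    refine (Finset.abs_sum_le_sum_abs _ _).trans (Finset.sum_le_sum fun c _ => ?_)
    have hz2 : ρ z.1 ≤ 2 * z.2 := by linarith [hz.1]
    have h3 := hb1 _ _ (hb h hwr h0 hz2)
    have h4 := hb1 _ _ (hb' c h hwr h0 hz2)
    have hc' := hC' c
    split_ifs; swap
    · refine (abs_add_le _ _).trans (add_le_add ?_ ?_)
      · rw [abs_mul, Nat.abs_cast]
        exact mul_le_mul_of_nonneg_left h3 (by positivity)
      · rw [abs_mul, abs_of_pos (by positivity)]
        exact mul_le_mul_of_nonneg_left h4 (by positivity)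
    · rw [abs_zero]
      positivity
  · exact integrableOn_const h.volume_Om.ne
  · refine (ae_restrict_iff' h.measurableSet_Om).2 (Filter.Eventually.of_forall fun z hz r hr => ?_)
    have h1 : τ < z.2 := lt_of_le_of_lt (hρ _) hz.1
    have h0 : 0 < z.2 := hτ.trans h1
    rw [Metric.mem_ball, Real.dist_eq, abs_lt] at hr
    have := (h.cc.hasDerivAt_HH_width J γ S hw.pos z.1 h0 (by linarith : 0 < r)).const_mul z.2⁻¹
    refine this.congr_deriv ?_
    rw [hF']
    simp only [Finset.mul_sum]
    refine Finset.sum_congr rfl fun c _ => ?_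
    split_ifs; swap
    · ring
    · simp

/-- A function tending to zero is controlled by the decay of its derivative. -/
theorem abs_le_of_deriv_decay {f f' : ℝ → ℝ} {s K e : ℝ} (hs : 0 < s) (he : 0 < e)
    (hd : ∀ r, s ≤ r → HasDerivAt f (f' r) r) (hb : ∀ r, s ≤ r → |f' r| ≤ K * r ^ (-e - 1))
    (hf : Filter.Tendsto f Filter.atTop (nhds 0)) : |f s| ≤ K / e * s ^ (-e) := by
  have main : ∀ {f f' : ℝ → ℝ}, (∀ r, s ≤ r → HasDerivAt f (f' r) r) →
      (∀ r, s ≤ r → |f' r| ≤ K * r ^ (-e - 1)) → Filter.Tendsto f Filter.atTop (nhds 0) →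
      f s ≤ K / e * s ^ (-e) := by
    intro f f' hd hb hf
    have hgd : ∀ r, s ≤ r → HasDerivAt (fun r => f r - K / e * r ^ (-e))
        (f' r - K / e * (-e * r ^ (-e - 1))) r := fun r hr =>
      (hd r hr).sub ((Real.hasDerivAt_rpow_const (Or.inl (hs.trans_le hr).ne')).const_mul _)
    have hmono : MonotoneOn (fun r => f r - K / e * r ^ (-e)) (Set.Ici s) := by
      refine monotoneOn_of_deriv_nonneg (convex_Ici s) (fun r hr =>
        (hgd r hr).continuousAt.continuousWithinAt) (fun r hr => ?_) fun r hr => ?_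
      · rw [interior_Ici] at hr
        exact (hgd r (le_of_lt hr)).differentiableAt.differentiableWithinAt
      · rw [interior_Ici] at hr
        rw [(hgd r (le_of_lt hr)).deriv]
        have h1 := (abs_le.1 (hb r (le_of_lt hr))).1
        have h2 : K / e * (-e * r ^ (-e - 1)) = -(K * r ^ (-e - 1)) := by
          field_simp
        rw [h2]
        linarith
    have hlim : Filter.Tendsto (fun r => f r - K / e * r ^ (-e)) Filter.atTop (nhds 0) := by
      simpa using hf.sub ((tendsto_rpow_neg_atTop he).const_mul (K / e))
    have := ge_of_tendsto hlim (by
      filter_upwards [Filter.eventually_ge_atTop s] with r hr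
      exact hmono (Set.mem_Ici.2 le_rfl) hr hr)
    linarith
  rw [abs_le]
  constructor
  · have := main (f := fun r => -f r) (f' := fun r => -f' r) (fun r hr => (hd r hr).neg)
      (fun r hr => by rw [abs_neg]; exact hb r hr) (by simpa using hf.neg)
    linarith
  · exact main hd hb hf

/-- Bounds for the derivatives of two orders higher descend. -/
theorem Adm.abs_NN_le_of_higher (h : Adm Γ α ℓ ρ J F) (hm : 0 < m) (hα : 2 * α < 1) (γ : Idx m → ℕ)
    (hw : Wt S w s D) (hγ : 2 ≤ ∑ c : Idx m, if pos c ∉ S then γ c else 0) {K : ℝ} (hK : 0 ≤ K)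
    (hb : ∀ r, s ≤ r → ∀ c : Idx m, pos c ∉ S →
      |NN ℓ ρ J F (γ + Pi.single c 2) (SBL.ws S w r)| ≤ K * r ^ (1 + 2 * α)) :
    |NN ℓ ρ J F γ w| ≤ (2 * m) * (2 * Real.pi)⁻¹ / (1 - 2 * α) * K * s ^ (1 + 2 * α) := by
  set d := ∑ c : Idx m, if pos c ∉ S then γ c else 0 with hd
  have hd2 : (2 : ℝ) ≤ d := by exact_mod_cast hγ
  have hs := hw.one_le
  have hs0 : 0 < s := by linarith
  obtain ⟨B, hB⟩ := h.abs_NN_le hm γ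
  have he : 0 < (d : ℝ) - 1 - 2 * α := by linarith
  have key := abs_le_of_deriv_decay (f := fun r => r ^ (-(d : ℝ)) * NN ℓ ρ J F γ (SBL.ws S w r))
    (f' := fun r => r ^ (-(d : ℝ) - 1) * ∑ c : Idx m, if pos c ∉ S then (2 * Real.pi)⁻¹ *
      NN ℓ ρ J F (γ + Pi.single c 2) (SBL.ws S w r) else 0)
    (K := (2 * m) * (2 * Real.pi)⁻¹ * K) (e := d - 1 - 2 * α) hs0 he ?_ ?_ ?_
  · simp only [hw.ws_self] at key
    rw [abs_mul, abs_of_pos (by positivity)] at key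
    have e1 : s ^ (-((d : ℝ) - 1 - 2 * α)) = s ^ (-(d : ℝ)) * s ^ (1 + 2 * α) := by
      rw [← Real.rpow_add hs0]
      ring_nf
    rw [e1] at key
    have hp : 0 < s ^ (-(d : ℝ)) := by positivity
    have key2 : |NN ℓ ρ J F γ w| ≤ (2 * m) * (2 * Real.pi)⁻¹ * K / (d - 1 - 2 * α) *
        s ^ (1 + 2 * α) := by
      refine le_of_mul_le_mul_left (key.trans_eq ?_) hp
      ring
    refine key2.trans ?_
    refine mul_le_mul_of_nonneg_right ?_ (by positivity)
    calc (2 * m) * (2 * Real.pi)⁻¹ * K / (d - 1 - 2 * α)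
        ≤ (2 * m) * (2 * Real.pi)⁻¹ * K / (1 - 2 * α) := by
          refine div_le_div_of_nonneg_left (by positivity) (by linarith) (by linarith)
      _ = _ := by ring
  · intro r hr
    have hr0 : 0 < r := hs0.trans_le hr
    have h1 := h.hasDerivAt_NN_width hm γ (hw.ws hr)
    have ews : ∀ x, SBL.ws S (SBL.ws S w r) x = SBL.ws S w x := fun x => by
      funext k; simp only [SBL.ws]; split_ifs <;> rfl
    simp only [ews] at h1
    refine ((Real.hasDerivAt_rpow_const (p := -(d : ℝ)) (Or.inl hr0.ne')).mul h1).congr_deriv ?_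
    have e2 : r ^ (-(d : ℝ)) = r ^ (-(d : ℝ) - 1) * r := by
      rw [Real.rpow_sub_one hr0.ne']; field_simp
    have e3 : (∑ c : Idx m, if pos c ∉ S then (γ c * NN ℓ ρ J F γ (SBL.ws S w r) +
        (2 * Real.pi)⁻¹ * NN ℓ ρ J F (γ + Pi.single c 2) (SBL.ws S w r)) else 0) =
        d * NN ℓ ρ J F γ (SBL.ws S w r) + ∑ c : Idx m, if pos c ∉ S then (2 * Real.pi)⁻¹ *
          NN ℓ ρ J F (γ + Pi.single c 2) (SBL.ws S w r) else 0 := by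
      rw [hd, Nat.cast_sum, Finset.sum_mul, ← Finset.sum_add_distrib]
      refine Finset.sum_congr rfl fun c _ => ?_
      split_ifs <;> simp
    rw [e3, e2]
    field_simp
    ring
  · intro r hr
    have hr0 : 0 < r := hs0.trans_le hr
    rw [abs_mul, abs_of_pos (by positivity)]
    have h1 : |∑ c : Idx m, if pos c ∉ S then (2 * Real.pi)⁻¹ *
        NN ℓ ρ J F (γ + Pi.single c 2) (SBL.ws S w r) else 0| ≤
        ∑ _c : Idx m, (2 * Real.pi)⁻¹ * (K * r ^ (1 + 2 * α)) := by
      refine (Finset.abs_sum_le_sum_abs _ _).trans (Finset.sum_le_sum fun c _ => ?_)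
      split_ifs with hc; swap
      · rw [abs_mul, abs_of_pos (by positivity)]
        exact mul_le_mul_of_nonneg_left (hb r hr c hc) (by positivity)
      · rw [abs_zero]; positivity
    refine (mul_le_mul_of_nonneg_left h1 (by positivity)).trans_eq ?_
    rw [Finset.sum_const, Finset.card_univ, Fintype.card_sum, Fintype.card_fin,
      show -((d : ℝ) - 1 - 2 * α) - 1 = (-(d : ℝ) - 1) + (1 + 2 * α) by ring,
      Real.rpow_add hr0 (-(d : ℝ) - 1), nsmul_eq_mul]
    push_cast
    ring
  · have hlim := (tendsto_rpow_neg_atTop (by linarith : 0 < (d : ℝ) - 2 * α)).const_mul (B * D ^ 2)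
    rw [mul_zero] at hlim
    refine squeeze_zero_norm' ?_ hlim
    filter_upwards [Filter.eventually_ge_atTop s] with r hr
    have hr0 : 0 < r := hs0.trans_le hr
    rw [norm_mul, Real.norm_eq_abs, Real.norm_eq_abs, abs_of_pos (by positivity)]
    refine (mul_le_mul_of_nonneg_left (hB (hw.ws hr)) (by positivity)).trans_eq ?_
    rw [show -((d : ℝ) - 2 * α) = -(d : ℝ) + 2 * α by ring, Real.rpow_add hr0]
    ring
end

/-- The data are symmetric at the positions in `S`. -/
def Sym {m : ℕ} (S : Finset (Fin m)) (J : Matrix (Idx m) (Fin m) ℝ)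
    (F : Corner m → (Fin m → ℝ) → ℝ) : Prop :=
  ∀ i ∈ S, J (Sum.inl i) = J (Sum.inr i) ∧ ∀ j, F (istar i j) = F j

/-- Uniform boundedness of the localized form with derivatives `γ` on data symmetric on `S`. -/
def Bdd {m : ℕ} (Γ α : ℝ) (S : Finset (Fin m)) (γ : Idx m → ℕ) : Prop :=
  ∃ C : ℝ, 0 ≤ C ∧ ∀ {ℓ : ℝ} {ρ : (Fin m → ℝ) → ℝ} {J : Matrix (Idx m) (Fin m) ℝ}
    {F : Corner m → (Fin m → ℝ) → ℝ}, Adm Γ α ℓ ρ J F → Sym S J F →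
    ∀ {w : Fin m → ℝ} {s D : ℝ}, Wt S w s D →
      |NN ℓ ρ J F γ w| ≤ C * (D ^ 2 * s ^ (1 + 2 * α)) * VV ρ ℓ

/-- The derivative orders `a` at both coordinates of position `k`. -/
def pair {m : ℕ} (k : Fin m) (a : ℕ) : Idx m → ℕ := fun c => if pos c = k then a else 0

/-- The matrix whose two rows at position `k` are replaced by the one with upper index `ε`. -/
def Jk {m : ℕ} (J : Matrix (Idx m) (Fin m) ℝ) (k : Fin m) (ε : Fin 2) :
    Matrix (Idx m) (Fin m) ℝ := fun c => if pos c = k then J (cof k ε) else J c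

section
variable {m : ℕ} {Γ α ℓ : ℝ} {ρ : (Fin m → ℝ) → ℝ} {J : Matrix (Idx m) (Fin m) ℝ}
  {F : Corner m → (Fin m → ℝ) → ℝ} {S : Finset (Fin m)} {w : Fin m → ℝ} {s D : ℝ}

theorem Jk_mulVec (J : Matrix (Idx m) (Fin m) ℝ) (k : Fin m) (ε : Fin 2) (q : Fin m → ℝ)
    (c : Idx m) : (Jk J k ε *ᵥ q) c = if pos c = k then (J *ᵥ q) (cof k ε) else (J *ᵥ q) c := by
  unfold Jk mulVec
  split_ifs <;> simp [*]

theorem Jk_mulVec_sel (J : Matrix (Idx m) (Fin m) ℝ) (k : Fin m) (ε : Fin 2) (q : Fin m → ℝ)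
    (j : Corner m) (l : Fin m) :
    (Jk J k ε *ᵥ q) (sel j l) = (J *ᵥ q) (sel (Function.update j k ε) l) := by
  rw [Jk_mulVec, pos_sel, sel_eq_cof, sel_eq_cof]
  split_ifs with h
  · subst h; simp
  · rw [Function.update_of_ne h]

theorem Adm.Fk (h : Adm Γ α ℓ ρ J F) (k : Fin m) (ε : Fin 2) :
    Adm Γ α ℓ ρ (Jk J k ε) (SBL.Fk F k ε) where
  cc := h.cc.Fk k ε
  lip := h.lip
  low := h.low
  vol := h.vol
  inv j i := by
    obtain ⟨q, h1, h2, h3⟩ := h.inv (Function.update j k ε) i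
    refine ⟨q, h1, fun l => ?_, fun c => ?_⟩
    · rw [Jk_mulVec_sel, h2]
    · rw [Jk_mulVec]
      split_ifs <;> exact h3 _
  avg j p t s D w ht hp hs hw hws hD := by
    simp only [Jk_mulVec_sel]
    exact h.avg (Function.update j k ε) p t s D w ht hp hs hw hws hD

theorem Sym.Fk (h : Sym S J F) (k : Fin m) (ε : Fin 2) :
    Sym (insert k S) (Jk J k ε) (SBL.Fk F k ε) := by
  intro i hi
  rcases eq_or_ne i k with rfl | hik
  · refine ⟨by simp [Jk], fun j => ?_⟩
    unfold SBL.Fk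
    congr 1
    funext l
    rcases eq_or_ne l i with rfl | hl <;> simp [Function.update, istar, *]
  · have hS := h i (Finset.mem_of_mem_insert_of_ne hi hik)
    refine ⟨by simp [Jk, hik, hS.1], fun j => ?_⟩
    unfold SBL.Fk
    rw [← hS.2 (Function.update j k ε)]
    congr 1
    funext l
    rcases eq_or_ne l k with rfl | hl
    · simp [istar, hik.symm]
    · simp [Function.update, istar, hl, hik]

theorem Wt.widen (hw : Wt S w s D) (k : Fin m) :
    Wt (insert k S) (fun l => if l = k then w l else 2 * w l) (2 * s) D where
  one_le := by linarith [hw.one_le]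
  pos l := by have := hw.pos l; split_ifs <;> linarith
  le l := by have := hw.pos l; have := hw.le l; split_ifs <;> linarith
  eq l hl := by
    rw [Finset.mem_insert, not_or] at hl
    simp [hl.1, hw.eq l hl.2]
  prod := by
    refine le_trans (Finset.prod_le_prod (fun _ _ => by positivity) fun l _ => ?_) hw.prod
    have := hw.pos l
    refine max_le_max le_rfl (inv_anti₀ this ?_)
    split_ifs <;> linarith

theorem exists_abs_HH_le_pair (γ : Idx m → ℕ) (k : Fin m) : ∃ C : ℝ, 0 ≤ C ∧
    ∀ {J : Matrix (Idx m) (Fin m) ℝ} {F : Corner m → (Fin m → ℝ) → ℝ}, IsCc F →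
    ∀ {w : Fin m → ℝ}, (∀ k, 0 < w k) → ∀ (p : Fin m → ℝ) {t : ℝ}, 0 < t →
      |HH F J γ w p t| ≤ C * ∑ ε, HH (Fk F k ε) (Jk J k ε) (pair k (γ (cof k ε)))
        (fun l => if l = k then w l else 2 * w l) p t := by
  choose C hC hb using fun c => exists_ker_le (γ c)
  refine ⟨∏ c : Idx m, if pos c = k then 1 else C c, Finset.prod_nonneg fun c _ => by
    split_ifs; exacts [zero_le_one, hC c], fun {J F} hF w hw p t ht => ?_⟩
  have key := hF.abs_integral_le k (ψ := fun c r => ker (γ c) (t * w (pos c)) (r - (J *ᵥ p) c))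
    (ψ' := fun c r => C c * ker 0 (2 * (t * w (pos c))) (r - (J *ᵥ p) c))
    (fun c => by fun_prop) (fun c => by fun_prop)
    (fun c _ r => hb c _ _ (mul_pos ht (hw _)))
  refine key.trans_eq ?_
  rw [Finset.mul_sum]
  refine Finset.sum_congr rfl fun ε _ => ?_
  rw [HH, Hv, ← integral_const_mul]
  refine integral_congr_ae (Filter.Eventually.of_forall fun x => ?_)
  simp only
  rw [mul_left_comm, ← Finset.prod_mul_distrib]
  congr 1
  refine Finset.prod_congr rfl fun c _ => ?_
  rw [Jk_mulVec]
  unfold twist pair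
  split_ifs with hc
  · rw [pos_cof, one_mul, hc]
  · rw [mul_left_comm t]

theorem Bdd.of_pair (hm : 0 < m) (γ : Idx m → ℕ) (k : Fin m)
    (h : ∀ ε, Bdd Γ α (insert k S) (pair k (γ (cof k ε)))) : Bdd Γ α S γ := by
  obtain ⟨C, hC, hb⟩ := exists_abs_HH_le_pair γ k
  choose K hK hKb using h
  refine ⟨C * ∑ ε, K ε * 2 ^ (1 + 2 * α), mul_nonneg hC (Finset.sum_nonneg fun ε _ => by
    have := hK ε; positivity), fun {ℓ ρ J F} hA hS w s D hw => ?_⟩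
  have hs := hw.one_le
  have hint : ∀ ε, IntegrableOn (fun z => z.2⁻¹ * HH (Fk F k ε) (Jk J k ε) (pair k (γ (cof k ε)))
      (fun l => if l = k then w l else 2 * w l) z.1 z.2) (Om ρ ℓ) := fun ε =>
    (hA.Fk k ε).integrableOn hm _ (hw.widen k)
  obtain ⟨τ, hτ, hρ⟩ := hA.low
  calc |NN ℓ ρ J F γ w| ≤ ∫ z in Om ρ ℓ, C * ∑ ε, z.2⁻¹ * HH (Fk F k ε) (Jk J k ε)
        (pair k (γ (cof k ε))) (fun l => if l = k then w l else 2 * w l) z.1 z.2 := by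
        rw [NN, ← Real.norm_eq_abs]
        refine norm_integral_le_of_norm_le
          ((integrable_finsetSum _ fun ε _ => hint ε).const_mul C) ?_
        refine (ae_restrict_iff' hA.measurableSet_Om).2
          (Filter.Eventually.of_forall fun z hz => ?_)
        have h0 : 0 < z.2 := lt_of_lt_of_le hτ ((hρ _).trans hz.1.le)
        rw [norm_mul, Real.norm_eq_abs, Real.norm_eq_abs, abs_of_pos (inv_pos.2 h0),
          ← Finset.mul_sum, mul_left_comm]
        exact mul_le_mul_of_nonneg_left (hb hA.cc hw.pos z.1 h0) (inv_pos.2 h0).le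
    _ = C * ∑ ε, NN ℓ ρ (Jk J k ε) (Fk F k ε) (pair k (γ (cof k ε)))
          (fun l => if l = k then w l else 2 * w l) := by
        rw [integral_const_mul, integral_finsetSum _ fun ε _ => hint ε]
        rfl
    _ ≤ C * ∑ ε, K ε * (D ^ 2 * (2 * s) ^ (1 + 2 * α)) * VV ρ ℓ := by
        refine mul_le_mul_of_nonneg_left (Finset.sum_le_sum fun ε _ => ?_) hC
        exact (le_abs_self _).trans (hKb ε (hA.Fk k ε) (hS.Fk k ε) (hw.widen k))
    _ = _ := by
        rw [Real.mul_rpow (by norm_num) (by positivity), mul_assoc, mul_assoc]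
        congr 1
        rw [Finset.sum_mul]
        exact Finset.sum_congr rfl fun ε _ => by ring

theorem Sym.mulVec_eq (h : Sym S J F) {i : Fin m} (hi : i ∈ S) (p : Fin m → ℝ) :
    (J *ᵥ p) (Sum.inl i) = (J *ᵥ p) (Sum.inr i) := by
  exact congrArg (fun v : Fin m → ℝ => v ⬝ᵥ p) (h i hi).1

theorem Adm.NN_pair_nonneg (h : Adm Γ α ℓ ρ J F) (hS : Sym S J F) (hw : Wt S w s D) {i : Fin m}
    (hi : i ∈ S) (n : ℕ) : 0 ≤ NN ℓ ρ J F (pair i n) w := by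
  obtain ⟨τ, hτ, hρ⟩ := h.low
  refine setIntegral_nonneg h.measurableSet_Om fun z hz => ?_
  have h0 : 0 < z.2 := lt_of_lt_of_le hτ ((hρ _).trans hz.1.le)
  refine mul_nonneg (inv_pos.2 h0).le ?_
  refine h.cc.integral_nonneg i (hS i hi).2 (ψ := fun c r => ker (pair i n c) (z.2 * w (pos c))
    (r - (J *ᵥ z.1) c)) (fun c => by fun_prop) ?_ fun c hc r => ?_
  · funext r
    simp [pair, hS.mulVec_eq hi]
  · simp only [pair, if_neg hc]
    exact (ker_zero_pos (mul_pos h0 (hw.pos _)) _).le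
end

/-- The total order of differentiation at positions off `S`. -/
def ordU {m : ℕ} (S : Finset (Fin m)) (γ : Idx m → ℕ) : ℕ :=
  ∑ c : Idx m, if pos c ∉ S then γ c else 0

section
variable {m : ℕ} {Γ α : ℝ} {S : Finset (Fin m)}

theorem sum_idx {M : Type*} [AddCommMonoid M] (f : Idx m → M) :
    ∑ c, f c = ∑ k, (f (Sum.inl k) + f (Sum.inr k)) := by
  rw [Fintype.sum_sum_type, Finset.sum_add_distrib]

theorem sum_sel {M : Type*} [AddCommMonoid M] (f : Idx m → M) (j : Corner m) :
    ∑ c, f c = ∑ k, (f (sel j k) + f (sel (fun k => 1 - j k) k)) := by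
  rw [sum_idx]
  refine Finset.sum_congr rfl fun k _ => ?_
  rcases Fin.exists_fin_two.1 ⟨j k, rfl⟩ with h | h
  · simp [sel, h]
  · simp [sel, h, add_comm]

theorem ordU_add_single (S : Finset (Fin m)) (γ : Idx m → ℕ) {c : Idx m} (hc : pos c ∉ S) (n : ℕ) :
    ordU S (γ + Pi.single c n) = ordU S γ + n := by
  have h : ∀ d : Idx m, (if pos d ∉ S then (γ + Pi.single c n : Idx m → ℕ) d else 0) =
      (if pos d ∉ S then γ d else 0) + (Pi.single c n : Idx m → ℕ) d := fun d => by
    rcases eq_or_ne d c with rfl | hd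
    · simp [hc]
    · simp [Pi.single_eq_of_ne hd]
  unfold ordU
  rw [Finset.sum_congr rfl fun d _ => h d, Finset.sum_add_distrib, Finset.sum_pi_single']
  simp

theorem Bdd.exists_uniform {ι : Type*} (A : Finset ι) (γ : ι → Idx m → ℕ)
    (h : ∀ c ∈ A, Bdd Γ α S (γ c)) : ∃ C : ℝ, 0 ≤ C ∧
    ∀ {ℓ : ℝ} {ρ : (Fin m → ℝ) → ℝ} {J : Matrix (Idx m) (Fin m) ℝ}
      {F : Corner m → (Fin m → ℝ) → ℝ}, Adm Γ α ℓ ρ J F → Sym S J F →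
      ∀ {w : Fin m → ℝ} {s D : ℝ}, Wt S w s D → ∀ c ∈ A,
        |NN ℓ ρ J F (γ c) w| ≤ C * (D ^ 2 * s ^ (1 + 2 * α)) * VV ρ ℓ := by
  classical
  induction A using Finset.induction_on with
  | empty => exact ⟨0, le_rfl, by simp⟩
  | insert a A ha ih =>
    obtain ⟨C, hC, hCb⟩ := ih fun c hc => h c (Finset.mem_insert_of_mem hc)
    obtain ⟨K, hK, hKb⟩ := h a (Finset.mem_insert_self a A)
    refine ⟨C + K, by positivity, fun {ℓ ρ J F} hA hS w s D hw c hc => ?_⟩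
    have hs := hw.one_le
    have hV := VV_nonneg ρ ℓ
    have hX : 0 ≤ D ^ 2 * s ^ (1 + 2 * α) := by positivity
    rcases Finset.mem_insert.1 hc with rfl | hc
    · refine (hKb hA hS hw).trans ?_
      gcongr
      linarith
    · refine (hCb hA hS hw c hc).trans ?_
      gcongr
      linarith

theorem Bdd.of_higher (hm : 0 < m) (hα : 2 * α < 1) (γ : Idx m → ℕ) (hγ : 2 ≤ ordU S γ)
    (h : ∀ c, pos c ∉ S → Bdd Γ α S (γ + Pi.single c 2)) : Bdd Γ α S γ := by
  obtain ⟨C, hC, hb⟩ := Bdd.exists_uniform (Finset.univ.filter fun c : Idx m => pos c ∉ S)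
    (fun c => γ + Pi.single c 2) fun c hc => h c (Finset.mem_filter.1 hc).2
  have hpos : 0 < 1 - 2 * α := by linarith
  refine ⟨(2 * m) * (2 * Real.pi)⁻¹ / (1 - 2 * α) * C, by positivity,
    fun {ℓ ρ J F} hA hS w s D hw => ?_⟩
  have hV := VV_nonneg ρ ℓ
  have := hA.abs_NN_le_of_higher hm hα γ hw hγ (K := C * D ^ 2 * VV ρ ℓ) (by positivity)
    fun r hr c hc => (hb hA hS (hw.ws hr) c (by simp [hc])).trans_eq (by ring)
  exact this.trans_eq (by ring)

theorem Bdd.of_shift (hm : 0 < m) (hΓ : 0 ≤ Γ) (β : Idx m → ℕ) (j : Corner m) {k₀ : Fin m}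
    (hk₀ : k₀ ∉ S) (h : ∀ k, k ∉ S → Bdd Γ α S (β + Pi.single (sel j k) 1)) :
    Bdd Γ α S (β + Pi.single (sel (fun k => 1 - j k) k₀) 1) := by
  obtain ⟨C, hC, hb⟩ := Bdd.exists_uniform (Finset.univ.filter fun k : Fin m => k ∉ S)
    (fun k => β + Pi.single (sel j k) 1) fun k hk => h k (Finset.mem_filter.1 hk).2
  obtain ⟨C', hC', hsh⟩ := exists_shift_identity hm α β
  refine ⟨C' * Γ + m * (Γ * C), by positivity, fun {ℓ ρ J F} hA hS w s D hw => ?_⟩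
  have hs := hw.one_le
  have hV := VV_nonneg ρ ℓ
  set jb : Corner m := fun k => 1 - j k with hjb
  obtain ⟨q, hq1, hq2, hq3⟩ := hA.inv jb k₀
  have key := hsh hA hw q
  have hrow : ∀ k ∈ S, (J *ᵥ q) (sel j k) = 0 := fun k hk => by
    have h1 : (J *ᵥ q) (sel jb k) = 0 := by
      rw [hq2, if_neg]; rintro rfl; exact hk₀ hk
    have h2 := hS.mulVec_eq hk q
    rw [← h1]
    simp only [sel]
    split_ifs <;> simp [h2]
  have e : ∑ c, (J *ᵥ q) c * (w (pos c))⁻¹ * NN ℓ ρ J F (β + Pi.single c 1) w =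
      s⁻¹ * (NN ℓ ρ J F (β + Pi.single (sel jb k₀) 1) w +
        ∑ k with k ∉ S, (J *ᵥ q) (sel j k) * NN ℓ ρ J F (β + Pi.single (sel j k) 1) w) := by
    rw [sum_sel _ j, Finset.sum_add_distrib, add_comm, mul_add]
    congr 1
    · rw [Finset.sum_eq_single k₀]
      · rw [hq2, if_pos rfl, pos_sel, hw.eq k₀ hk₀, one_mul]
      · intro k _ hk
        rw [hq2, if_neg hk]; ring
      · simp
    · rw [Finset.mul_sum, Finset.sum_filter]
      refine Finset.sum_congr rfl fun k _ => ?_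
      by_cases hk : k ∈ S
      · simp [hk, hrow k hk]
      · rw [if_pos hk, pos_sel, hw.eq k hk]; ring
  rw [e, abs_mul, abs_of_pos (by positivity)] at key
  set N := NN ℓ ρ J F (β + Pi.single (sel jb k₀) 1) w
  set R := ∑ k with k ∉ S, (J *ᵥ q) (sel j k) * NN ℓ ρ J F (β + Pi.single (sel j k) 1) w
  have h1 : |N + R| ≤ C' * Γ * (D ^ 2 * s ^ (1 + 2 * α)) * VV ρ ℓ := by
    have hs0 : 0 < s := by linarith
    rw [inv_mul_le_iff₀ hs0] at key
    refine key.trans ?_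
    rw [Real.rpow_add hs0, Real.rpow_one]
    calc s * (C' * (D ^ 2 * s ^ (2 * α)) * VV ρ ℓ * ‖q‖)
        ≤ s * (C' * (D ^ 2 * s ^ (2 * α)) * VV ρ ℓ * Γ) := by gcongr
      _ = _ := by ring
  have h2 : |R| ≤ m * (Γ * C) * (D ^ 2 * s ^ (1 + 2 * α)) * VV ρ ℓ := by
    refine (Finset.abs_sum_le_sum_abs _ _).trans ?_
    refine (Finset.sum_le_card_nsmul _ _ (Γ * (C * (D ^ 2 * s ^ (1 + 2 * α)) * VV ρ ℓ))
      fun k hk => ?_).trans ?_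
    · rw [abs_mul]
      exact mul_le_mul (hq3 _) (hb hA hS hw k hk) (abs_nonneg _) hΓ
    · rw [nsmul_eq_mul]
      have : ((Finset.univ.filter fun k : Fin m => k ∉ S).card : ℝ) ≤ m := by
        have := Finset.card_filter_le (Finset.univ : Finset (Fin m)) fun k => k ∉ S
        rw [Finset.card_univ, Fintype.card_fin] at this
        exact_mod_cast this
      calc _ ≤ m * (Γ * (C * (D ^ 2 * s ^ (1 + 2 * α)) * VV ρ ℓ)) := by gcongr
        _ = _ := by ring
  have h3 : N = (N + R) - R := by ring
  rw [h3]
  refine (abs_sub _ _).trans ((add_le_add h1 h2).trans_eq ?_)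
  ring

/-- High order forms are bounded, given the bounds on more symmetric data. -/
theorem Bdd.of_card_lt (hm : 0 < m) (hΓ : 0 ≤ Γ)
    (hS : ∀ k, k ∉ S → ∀ a, 1 ≤ a → Bdd Γ α (insert k S) (pair k a)) (n : ℕ) :
    ∀ γ : Idx m → ℕ, (Finset.univ.filter fun k : Fin m =>
      k ∉ S ∧ γ (Sum.inl k) = 0 ∧ γ (Sum.inr k) = 0).card = n → m + 1 ≤ ordU S γ + S.card →
      Bdd Γ α S γ := by
  have trapped : ∀ γ : Idx m → ℕ, ∀ k, k ∉ S → γ (Sum.inl k) ≠ 0 → γ (Sum.inr k) ≠ 0 →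
      Bdd Γ α S γ := fun γ k hk h0 h1 => by
    refine Bdd.of_pair hm γ k fun ε => hS k hk _ ?_
    rcases Fin.exists_fin_two.1 ⟨ε, rfl⟩ with h | h
    · rw [h, cof_zero]; omega
    · rw [h, cof_one]; omega
  induction n using Nat.strong_induction_on with
  | _ n ih =>
  intro γ hn hγ
  by_cases htr : ∃ k, k ∉ S ∧ γ (Sum.inl k) ≠ 0 ∧ γ (Sum.inr k) ≠ 0
  · obtain ⟨k, hk, h0, h1⟩ := htr
    exact trapped γ k hk h0 h1
  push Not at htr
  obtain ⟨k₀, hk₀, hk2⟩ : ∃ k, k ∉ S ∧ 2 ≤ γ (Sum.inl k) + γ (Sum.inr k) := by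
    by_contra hc
    push Not at hc
    have h1 : ordU S γ ≤ ∑ k : Fin m, if k ∉ S then 1 else 0 := by
      unfold ordU
      rw [sum_idx]
      refine Finset.sum_le_sum fun k _ => ?_
      by_cases hk : k ∈ S
      · simp [hk]
      · have := hc k hk
        simp only [pos_inl, pos_inr, hk, not_false_eq_true, if_true]
        omega
    have h2 : (∑ k : Fin m, if k ∉ S then 1 else 0) + S.card = m := by
      rw [← Finset.card_filter, Finset.filter_notMem_eq_sdiff, ← Finset.compl_eq_univ_sdiff,
        Finset.card_compl_add_card, Fintype.card_fin]
    omega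
  set j : Corner m := fun k => if γ (Sum.inl k) ≠ 0 then 1 else 0 with hj
  have hj0 : ∀ k, k ∉ S → γ (sel j k) = 0 := fun k hk => by
    by_cases h0 : γ (Sum.inl k) = 0
    · simp [sel, hj, h0]
    · simpa [sel, hj, h0] using htr k hk h0
  set c := sel (fun k => 1 - j k) k₀ with hc
  have hsum : ∀ k, γ (sel (fun k => 1 - j k) k) + γ (sel j k) =
      γ (Sum.inl k) + γ (Sum.inr k) := fun k => by
    by_cases h0 : γ (Sum.inl k) = 0
    · simp [sel, hj, h0]
    · simp [sel, hj, h0]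
  have hc2 : 2 ≤ γ c := by
    have := hsum k₀
    rw [hj0 k₀ hk₀, add_zero] at this
    rwa [hc, this]
  set β : Idx m → ℕ := γ - Pi.single c 1 with hβ
  have hγβ : γ = β + Pi.single c 1 := by
    funext d
    rcases eq_or_ne d c with rfl | hd
    · simp [hβ]; omega
    · simp [hβ, Pi.single_eq_of_ne hd]
  have hpc : pos c = k₀ := pos_sel _ _
  rw [hγβ]
  refine Bdd.of_shift hm hΓ β j hk₀ fun k hk => ?_
  have hord : ordU S (β + Pi.single (sel j k) 1) = ordU S γ := by
    rw [ordU_add_single S β (by rwa [pos_sel]), hγβ, ordU_add_single S β (by rwa [hpc])]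
  have hβ1 : ∀ d, γ d ≠ 0 → β d ≠ 0 := fun d hd => by
    rcases eq_or_ne d c with rfl | hdc
    · simp [hβ]; omega
    · simpa [hβ, Pi.single_eq_of_ne hdc] using hd
  set γ' := β + Pi.single (sel j k) 1 with hγ'
  have hγ'1 : ∀ d, γ d ≠ 0 → γ' d ≠ 0 := fun d hd => by
    have := hβ1 d hd
    simp only [hγ', Pi.add_apply]; omega
  have hγ'2 : γ' (sel j k) ≠ 0 := by simp [hγ']
  by_cases hsup : γ (Sum.inl k) = 0 ∧ γ (Sum.inr k) = 0
  · refine ih _ ?_ γ' rfl (by rw [hord]; exact hγ)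
    rw [← hn]
    refine Finset.card_lt_card ⟨fun l hl => ?_, fun hsub => ?_⟩
    · simp only [Finset.mem_filter, Finset.mem_univ, true_and] at hl ⊢
      refine ⟨hl.1, ?_, ?_⟩
      · by_contra h; exact hγ'1 _ h hl.2.1
      · by_contra h; exact hγ'1 _ h hl.2.2
    · have := hsub (x := k) (by simp [hk, hsup])
      simp only [Finset.mem_filter, Finset.mem_univ, true_and] at this
      apply hγ'2
      unfold sel
      split_ifs
      exacts [this.2.1, this.2.2]
  · have h3 : γ (sel (fun k => 1 - j k) k) ≠ 0 := by
      have := hsum k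
      rw [hj0 k hk] at this
      omega
    have h4 := hγ'1 _ h3
    by_cases h0 : γ (Sum.inl k) = 0
    · have e1 : sel j k = Sum.inl k := by simp [sel, hj, h0]
      have e2 : sel (fun k => 1 - j k) k = Sum.inr k := by simp [sel, hj, h0]
      rw [e1] at hγ'2
      rw [e2] at h4
      exact trapped γ' k hk hγ'2 h4
    · have e1 : sel j k = Sum.inr k := by simp [sel, hj, h0]
      have e2 : sel (fun k => 1 - j k) k = Sum.inl k := by simp [sel, hj, h0]
      rw [e1] at hγ'2
      rw [e2] at h4
      exact trapped γ' k hk h4 hγ'2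

theorem Bdd.of_two_le (hm : 0 < m) (hΓ : 0 ≤ Γ) (hα : 2 * α < 1)
    (hS : ∀ k, k ∉ S → ∀ a, 1 ≤ a → Bdd Γ α (insert k S) (pair k a)) :
    ∀ γ : Idx m → ℕ, 2 ≤ ordU S γ → Bdd Γ α S γ := by
  have main : ∀ n : ℕ, ∀ γ : Idx m → ℕ, m + 1 ≤ ordU S γ + n → 2 ≤ ordU S γ → Bdd Γ α S γ := by
    intro n
    induction n with
    | zero => exact fun γ h1 h2 => Bdd.of_card_lt hm hΓ hS _ γ rfl (by omega)
    | succ n ih =>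
      intro γ h1 h2
      refine Bdd.of_higher hm hα γ h2 fun c hc => ?_
      have := ordU_add_single S γ hc 2
      exact ih _ (by omega) (by omega)
  exact fun γ h => main (m + 1) γ (by omega) h
end

/-- Uniform boundedness of a combination `Φ` of the localized forms on data symmetric on `S`. -/
def BddF {m : ℕ} (Γ α : ℝ) (S : Finset (Fin m)) (Φ : ((Idx m → ℕ) → ℝ) → ℝ) : Prop :=
  ∃ C : ℝ, 0 ≤ C ∧ ∀ {ℓ : ℝ} {ρ : (Fin m → ℝ) → ℝ} {J : Matrix (Idx m) (Fin m) ℝ}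
    {F : Corner m → (Fin m → ℝ) → ℝ}, Adm Γ α ℓ ρ J F → Sym S J F →
    ∀ {w : Fin m → ℝ} {s D : ℝ}, Wt S w s D →
      |Φ fun γ => NN ℓ ρ J F γ w| ≤ C * (D ^ 2 * s ^ (1 + 2 * α)) * VV ρ ℓ

section
variable {m : ℕ} {Γ α : ℝ} {S : Finset (Fin m)} {Φ Ψ : ((Idx m → ℕ) → ℝ) → ℝ}

theorem Bdd.bddF {γ : Idx m → ℕ} (h : Bdd Γ α S γ) : BddF Γ α S fun N => N γ := h

theorem BddF.add (h : BddF Γ α S Φ) (h' : BddF Γ α S Ψ) : BddF Γ α S fun N => Φ N + Ψ N := by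
  obtain ⟨C, hC, hb⟩ := h
  obtain ⟨C', hC', hb'⟩ := h'
  refine ⟨C + C', by positivity, fun hA hS w s D hw => ?_⟩
  refine (abs_add_le _ _).trans ((add_le_add (hb hA hS hw) (hb' hA hS hw)).trans_eq ?_)
  ring

theorem BddF.const_mul (a : ℝ) (h : BddF Γ α S Φ) : BddF Γ α S fun N => a * Φ N := by
  obtain ⟨C, hC, hb⟩ := h
  refine ⟨|a| * C, by positivity, fun hA hS w s D hw => ?_⟩
  rw [abs_mul, mul_assoc, mul_assoc, ← mul_assoc C]
  exact mul_le_mul_of_nonneg_left (hb hA hS hw) (abs_nonneg a)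

theorem BddF.sub (h : BddF Γ α S Φ) (h' : BddF Γ α S Ψ) : BddF Γ α S fun N => Φ N - Ψ N := by
  simpa only [neg_one_mul, ← sub_eq_add_neg] using h.add (h'.const_mul (-1))

theorem BddF.zero : BddF Γ α S fun _ => 0 :=
  ⟨0, le_rfl, fun _ _ _ _ _ _ => by simp⟩

theorem BddF.sum {ι : Type*} (A : Finset ι) {Φ : ι → ((Idx m → ℕ) → ℝ) → ℝ}
    (h : ∀ d ∈ A, BddF Γ α S (Φ d)) : BddF Γ α S fun N => ∑ d ∈ A, Φ d N := by
  classical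
  induction A using Finset.induction_on with
  | empty => simpa using BddF.zero
  | insert a A ha ih =>
    simp only [Finset.sum_insert ha]
    exact (h a (Finset.mem_insert_self a A)).add
      (ih fun d hd => h d (Finset.mem_insert_of_mem hd))

theorem BddF.shift (hm : 0 < m) (hΓ : 0 ≤ Γ) {i : Fin m} (hi : i ∈ S) {ι : Type} (A : Finset ι)
    (β : ι → Idx m → ℕ)
    (h : ∀ c, pos c ∉ S → BddF Γ α S fun N => ∑ d ∈ A, N (β d + Pi.single c 1)) :
    BddF Γ α S fun N =>
      ∑ d ∈ A, (N (β d + Pi.single (Sum.inl i) 1) + N (β d + Pi.single (Sum.inr i) 1)) := by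
  have h' : ∀ c, BddF Γ α S fun N => if pos c ∈ S then 0 else ∑ d ∈ A, N (β d + Pi.single c 1) :=
    fun c => by
      by_cases hc : pos c ∈ S
      · simpa [hc] using BddF.zero
      · simpa [hc] using h c hc
  choose K hK hKb using h'
  choose P hP hPb using fun d => exists_shift_identity hm α (β d)
  refine ⟨(∑ d ∈ A, P d) * Γ + Γ * ∑ c, K c, add_nonneg (mul_nonneg (Finset.sum_nonneg fun d _ =>
    hP d) hΓ) (mul_nonneg hΓ (Finset.sum_nonneg fun c _ => hK c)),
    fun {ℓ ρ J F} hA hS w s D hw => ?_⟩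
  have hs := hw.one_le
  have hs0 : 0 < s := by linarith
  have hwi := hw.pos i
  have hV := VV_nonneg ρ ℓ
  obtain ⟨q, hq1, hq2, hq3⟩ := hA.inv 0 i
  have ha : ∀ k ∈ S, (J *ᵥ q) (Sum.inl k) = (if k = i then 1 else 0) ∧
      (J *ᵥ q) (Sum.inr k) = if k = i then 1 else 0 := fun k hk => by
    have h0 := hq2 k
    have h1 : sel (0 : Corner m) k = Sum.inl k := by simp [sel]
    rw [h1] at h0
    exact ⟨h0, by rw [← hS.mulVec_eq hk, h0]⟩
  set N := fun γ => NN ℓ ρ J F γ w with hN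
  set g : Idx m → ℝ := fun c => ∑ d ∈ A, N (β d + Pi.single c 1) with hg
  set G : Idx m → ℝ := fun c => if pos c ∈ S then 0 else g c with hG
  have hGb : ∀ c, |G c| ≤ K c * (D ^ 2 * s ^ (1 + 2 * α)) * VV ρ ℓ := fun c => hKb c hA hS hw
  set Y := ∑ c, (J *ᵥ q) c * (w (pos c))⁻¹ * g c with hY
  set X := ∑ c, (J *ᵥ q) c * G c with hX
  have e1 : Y = ∑ d ∈ A, ∑ c, (J *ᵥ q) c * (w (pos c))⁻¹ * N (β d + Pi.single c 1) := by
    rw [hY, Finset.sum_comm]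
    exact Finset.sum_congr rfl fun c _ => Finset.mul_sum _ _ _
  have hYb : |Y| ≤ (∑ d ∈ A, P d) * Γ * (D ^ 2 * s ^ (2 * α)) * VV ρ ℓ := by
    rw [e1]
    calc _ ≤ ∑ d ∈ A, P d * (D ^ 2 * s ^ (2 * α)) * VV ρ ℓ * Γ := by
          refine (Finset.abs_sum_le_sum_abs _ _).trans (Finset.sum_le_sum fun d _ => ?_)
          have := hP d
          exact (hPb d hA hw q).trans (by gcongr)
      _ = _ := by simp only [Finset.sum_mul]; exact Finset.sum_congr rfl fun d _ => by ring
  have hXb : |X| ≤ (Γ * ∑ c, K c) * (D ^ 2 * s ^ (1 + 2 * α)) * VV ρ ℓ := by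
    calc |X| ≤ ∑ c, Γ * (K c * (D ^ 2 * s ^ (1 + 2 * α)) * VV ρ ℓ) := by
          refine (Finset.abs_sum_le_sum_abs _ _).trans (Finset.sum_le_sum fun c _ => ?_)
          rw [abs_mul]
          exact mul_le_mul (hq3 c) (hGb c) (abs_nonneg _) hΓ
      _ = _ := by rw [Finset.mul_sum, Finset.sum_mul, Finset.sum_mul]
                  exact Finset.sum_congr rfl fun d _ => by ring
  have e2 : Y = (w i)⁻¹ * (g (Sum.inl i) + g (Sum.inr i)) + s⁻¹ * X := by
    have hk : ∀ k, (J *ᵥ q) (Sum.inl k) * (w k)⁻¹ * g (Sum.inl k) +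
        (J *ᵥ q) (Sum.inr k) * (w k)⁻¹ * g (Sum.inr k) =
        (if k = i then (w i)⁻¹ * (g (Sum.inl i) + g (Sum.inr i)) else 0) +
        s⁻¹ * ((J *ᵥ q) (Sum.inl k) * G (Sum.inl k) + (J *ᵥ q) (Sum.inr k) * G (Sum.inr k)) := by
      intro k
      by_cases hkS : k ∈ S
      · rw [(ha k hkS).1, (ha k hkS).2]
        by_cases hki : k = i
        · subst hki; simp only [hG, if_true, pos_inl, pos_inr, hkS]; ring
        · simp [hki]
      · have hki : k ≠ i := by rintro rfl; exact hkS hi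
        simp only [hG, pos_inl, pos_inr, hkS, if_false, if_neg hki, hw.eq k hkS]
        ring
    rw [hY, hX, sum_idx, sum_idx, Finset.mul_sum]
    simp only [pos_inl, pos_inr]
    rw [Finset.sum_congr rfl fun k _ => hk k, Finset.sum_add_distrib]
    simp
  have e3 : ∑ d ∈ A, (N (β d + Pi.single (Sum.inl i) 1) + N (β d + Pi.single (Sum.inr i) 1)) =
      w i * Y - w i * s⁻¹ * X := by
    rw [Finset.sum_add_distrib, e2]
    field_simp
    ring
  change |∑ d ∈ A, (N (β d + Pi.single (Sum.inl i) 1) + N (β d + Pi.single (Sum.inr i) 1))| ≤ _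
  rw [e3]
  refine (abs_sub _ _).trans ?_
  rw [abs_mul, abs_mul, abs_of_pos hwi, abs_of_pos (by positivity : 0 < w i * s⁻¹)]
  have h1 : w i * |Y| ≤ (∑ d ∈ A, P d) * Γ * (D ^ 2 * s ^ (1 + 2 * α)) * VV ρ ℓ := by
    refine (mul_le_mul (hw.le i) hYb (abs_nonneg _) hs0.le).trans_eq ?_
    rw [Real.rpow_add hs0 1 (2 * α), Real.rpow_one]
    ring
  have h2 : w i * s⁻¹ * |X| ≤ (Γ * ∑ c, K c) * (D ^ 2 * s ^ (1 + 2 * α)) * VV ρ ℓ := by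
    refine le_trans ?_ hXb
    refine mul_le_of_le_one_left (abs_nonneg _) ?_
    rw [← div_eq_mul_inv, div_le_one hs0]
    exact hw.le i
  exact (add_le_add h1 h2).trans_eq (by ring)

theorem BddF.shift_two (hm : 0 < m) (hΓ : 0 ≤ Γ) {i : Fin m} (hi : i ∈ S) (γ : Idx m → ℕ)
    (h : ∀ c d, pos c ∉ S → pos d ∉ S → Bdd Γ α S (γ + Pi.single c 1 + Pi.single d 1)) :
    BddF Γ α S fun N => N (γ + Pi.single (Sum.inl i) 2) + N (γ + Pi.single (Sum.inr i) 2) +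
      2 * N (γ + pair i 1) := by
  have h1 : ∀ c, pos c ∉ S → BddF Γ α S fun N =>
      ∑ e : Fin 2, N (γ + Pi.single (cof i e) 1 + Pi.single c 1) := fun c hc => by
    have := BddF.shift hm hΓ hi (Finset.univ : Finset Unit) (fun _ => γ + Pi.single c 1)
      (fun d hd => by simpa using (h c d hc hd).bddF)
    simpa [Fin.sum_univ_two, add_right_comm γ (Pi.single c 1)] using this
  have h2 := BddF.shift hm hΓ hi (Finset.univ : Finset (Fin 2))
    (fun e => γ + Pi.single (cof i e) 1) h1
  have e1 : (Pi.single (Sum.inl i) 1 + Pi.single (Sum.inr i) 1 : Idx m → ℕ) = pair i 1 := by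
    funext c
    rcases c with k | k <;> by_cases hk : k = i <;> simp [pair, hk]
  have e0 : ∀ c : Idx m, (Pi.single c 1 + Pi.single c 1 : Idx m → ℕ) = Pi.single c 2 := fun c => by
    rw [← Pi.single_add]
  simp only [Fin.sum_univ_two, cof_zero, cof_one, add_assoc, e0, e1,
    add_comm (Pi.single (Sum.inr i) 1 : Idx m → ℕ) (Pi.single (Sum.inl i) 1)] at h2
  convert h2 using 2
  ring

theorem BddF.telescope (hm : 0 < m) (hΓ : 0 ≤ Γ) (γ : Idx m → ℕ) (hγ : γ = 0 ∨ Bdd Γ α S γ)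
    (h : ∀ γ : Idx m → ℕ, 2 ≤ ordU S γ → Bdd Γ α S γ) :
    BddF Γ α S fun N => ∑ k ∈ S, N (γ + pair k 1) := by
  have hU : ∀ c d, pos c ∉ S → pos d ∉ S → Bdd Γ α S (γ + Pi.single c 1 + Pi.single d 1) :=
    fun c d hc hd => h _ (by rw [ordU_add_single S _ hd, ordU_add_single S _ hc]; omega)
  have hU2 : ∀ c, pos c ∉ S → Bdd Γ α S (γ + Pi.single c 2) :=
    fun c hc => h _ (by rw [ordU_add_single S _ hc]; omega)
  have h1 : BddF Γ α S fun N => ∑ c, (γ c * N γ + (2 * Real.pi)⁻¹ * N (γ + Pi.single c 2)) := by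
    obtain ⟨C, hC, hb⟩ := exists_scale_identity hm α γ
    refine ⟨C, hC, fun {ℓ ρ J F} hA _ w s D hw => (hb hA hw).trans ?_⟩
    have := VV_nonneg ρ ℓ
    have hs := hw.one_le
    gcongr
    linarith
  have h2 : BddF Γ α S fun N => ∑ c, (γ c : ℝ) * N γ := by
    refine BddF.sum _ fun c _ => ?_
    rcases hγ with rfl | hγ
    · simpa using BddF.zero
    · exact hγ.bddF.const_mul _
  have h3 : BddF Γ α S fun N => ∑ c, N (γ + Pi.single c 2) := by
    convert (h1.sub h2).const_mul (2 * Real.pi) using 2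
    rw [Finset.sum_add_distrib, add_sub_cancel_left, ← Finset.mul_sum, ← mul_assoc,
      mul_inv_cancel₀ (by positivity), one_mul]
  have h4 : BddF Γ α S fun N => ∑ k with k ∉ S,
      (N (γ + Pi.single (Sum.inl k) 2) + N (γ + Pi.single (Sum.inr k) 2)) :=
    BddF.sum _ fun k hk => by
      have hk := (Finset.mem_filter.1 hk).2
      exact (hU2 (Sum.inl k) hk).bddF.add (hU2 (Sum.inr k) hk).bddF
  have h5 := BddF.sum S fun k hk => BddF.shift_two hm hΓ hk γ hU
  convert ((h5.add h4).sub h3).const_mul 2⁻¹ using 2 with N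
  have e : ∑ c, N (γ + Pi.single c 2) =
      ∑ k ∈ S, (N (γ + Pi.single (Sum.inl k) 2) + N (γ + Pi.single (Sum.inr k) 2)) +
      ∑ k with k ∉ S, (N (γ + Pi.single (Sum.inl k) 2) + N (γ + Pi.single (Sum.inr k) 2)) := by
    rw [sum_idx, ← Finset.sum_filter_add_sum_filter_not Finset.univ (fun k => k ∈ S)]
    congr 2
    ext; simp
  have e' : ∑ k ∈ S, (N (γ + Pi.single (Sum.inl k) 2) + N (γ + Pi.single (Sum.inr k) 2) +
      2 * N (γ + pair k 1)) = ∑ k ∈ S, (N (γ + Pi.single (Sum.inl k) 2) +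
      N (γ + Pi.single (Sum.inr k) 2)) + 2 * ∑ k ∈ S, N (γ + pair k 1) := by
    rw [Finset.mul_sum, ← Finset.sum_add_distrib]
  rw [e, e']
  ring

/-- The positive forms are bounded on symmetric data. -/
theorem bdd_pair (hm : 0 < m) (hΓ : 0 ≤ Γ) (hα : 2 * α < 1) {i : Fin m} (hi : i ∈ S) {a : ℕ}
    (ha : 1 ≤ a) : Bdd Γ α S (pair i a) := by
  suffices H : ∀ n, ∀ S : Finset (Fin m), Sᶜ.card = n → ∀ i ∈ S, ∀ a, 1 ≤ a →
      Bdd Γ α S (pair i a) from H _ S rfl i hi a ha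
  intro n
  induction n using Nat.strong_induction_on with
  | _ n ih =>
  intro S hn
  have hS : ∀ γ : Idx m → ℕ, 2 ≤ ordU S γ → Bdd Γ α S γ := by
    refine Bdd.of_two_le hm hΓ hα fun k hk a ha => ?_
    refine ih _ ?_ _ rfl k (Finset.mem_insert_self k S) a ha
    rw [← hn]
    exact Finset.card_lt_card (Finset.compl_ssubset_compl.2 (Finset.ssubset_insert hk))
  have h1 : ∀ i ∈ S, Bdd Γ α S (pair i 1) := by
    obtain ⟨C, hC, hb⟩ := BddF.telescope hm hΓ 0 (Or.inl rfl) hS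
    intro i hi
    refine ⟨C, hC, fun {ℓ ρ J F} hA hs w s D hw => ?_⟩
    refine le_trans ?_ (hb hA hs hw)
    simp only [zero_add]
    rw [abs_of_nonneg (hA.NN_pair_nonneg hs hw hi 1)]
    refine le_trans ?_ (le_abs_self _)
    exact Finset.single_le_sum (f := fun k => NN ℓ ρ J F (pair k 1) w)
      (fun k hk => hA.NN_pair_nonneg hs hw hk 1) hi
  intro i hi a ha
  induction a, ha using Nat.le_induction with
  | base => exact h1 i hi
  | succ a ha iha =>
    have h2 := BddF.telescope hm hΓ (pair i a) (Or.inr iha) hS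
    have h3 : BddF Γ α S fun N => ∑ k ∈ S.erase i, N (pair i a + pair k 1) := by
      refine BddF.sum _ fun k hk => ?_
      obtain ⟨hki, hkS⟩ := Finset.mem_erase.1 hk
      refine (Bdd.of_pair hm (pair i a + pair k 1) k fun ε => ?_).bddF
      rw [Finset.insert_eq_of_mem hkS]
      simpa [pair, hki] using h1 k hkS
    have e : pair i a + pair i 1 = pair i (a + 1) := by
      funext c; simp only [pair, Pi.add_apply]; split_ifs <;> rfl
    have h4 : BddF Γ α S fun N => N (pair i a + pair i 1) := by
      convert h2.sub h3 using 2 with N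
      rw [← Finset.sum_erase_add _ _ hi]
      ring
    rw [← e]
    exact h4
end

theorem abs_entry_le_opNorm {m : ℕ} (A : Matrix (Fin m) (Fin m) ℝ) (i k : Fin m) :
    |A i k| ≤ opNorm A := by
  set L := LinearMap.toContinuousLinearMap (Matrix.toEuclideanLin A)
  have h1 : ‖L (EuclideanSpace.single k (1 : ℝ))‖ ≤ ‖L‖ := by
    simpa using L.le_opNorm (EuclideanSpace.single k (1 : ℝ))
  have h3 : L (EuclideanSpace.single k (1 : ℝ)) i = A i k := by
    simp [L, Matrix.toLpLin_apply]
  refine le_trans ?_ h1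
  rw [← h3, ← Real.norm_eq_abs]
  exact PiLp.norm_apply_le _ i

/-- Quantitative invertibility of the matrices `A_j`. -/
structure RegB {m : ℕ} (B : ℝ) (J : Matrix (Idx m) (Fin m) ℝ) : Prop where
  le : ∀ (x : Fin m → ℝ) c, |(J *ᵥ x) c| ≤ B * ‖x‖
  inv : ∀ (j : Corner m) (v : Fin m → ℝ), ∃ q : Fin m → ℝ, ‖q‖ ≤ B * ‖v‖ ∧
    ∀ k, (J *ᵥ q) (sel j k) = v k

theorem exists_regB (m : ℕ) {Δ : ℝ} (hΔ : 1 < Δ) : ∃ B : ℝ, 1 ≤ B ∧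
    ∀ J : Matrix (Idx m) (Fin m) ℝ, (∀ j : Corner m, IsReg Δ (Amat J j)) → RegB B J := by
  set D : ℝ := m.factorial * Δ ^ m with hD
  have hΔ0 : 0 < Δ := by linarith
  have hD0 : 0 ≤ D := by positivity
  have hp1 : 0 ≤ m * Δ := by positivity
  have hp2 : 0 ≤ m * (Δ * D) := by positivity
  refine ⟨1 + m * Δ + m * (Δ * D), by linarith, fun J hJ => ?_⟩
  have hent : ∀ j i k, |J (sel j i) k| ≤ Δ := fun j i k =>
    (abs_entry_le_opNorm (Amat J j) i k).trans (hJ j).1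
  have hsum : ∀ {E : ℝ} (_ : 0 ≤ E) (a : Fin m → ℝ) (_ : ∀ k, |a k| ≤ E) (x : Fin m → ℝ),
      |a ⬝ᵥ x| ≤ m * E * ‖x‖ := by
    intro E hE a ha x
    refine (Finset.abs_sum_le_sum_abs _ _).trans ?_
    refine (Finset.sum_le_card_nsmul _ _ (E * ‖x‖) fun k _ => ?_).trans ?_
    · rw [abs_mul]
      exact mul_le_mul (ha k) (norm_le_pi_norm x k) (abs_nonneg _) hE
    · simp [mul_assoc]
  constructor
  · intro x c
    have hc : ∀ k, |J c k| ≤ Δ := by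
      rcases c with i | i
      · simpa [sel] using hent 0 i
      · simpa [sel] using hent 1 i
    refine (hsum hΔ0.le (J c) hc x).trans ?_
    gcongr
    linarith
  · intro j v
    obtain ⟨-, hdet, hinv⟩ := hJ j
    set A := Amat J j with hA
    have hu : IsUnit A.det := isUnit_iff_ne_zero.2 hdet
    have hadj : ∀ i k, |A⁻¹ i k| ≤ Δ * D := by
      intro i k
      rw [Matrix.inv_def, Ring.inverse_eq_inv', Matrix.smul_apply, smul_eq_mul, abs_mul, abs_inv]
      refine mul_le_mul hinv ?_ (abs_nonneg _) hΔ0.le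
      rw [Matrix.adjugate_apply]
      have := Matrix.det_le (A := A.updateRow k (Pi.single i 1)) (abv := AbsoluteValue.abs) (x := Δ)
        (fun a b => by
          rcases eq_or_ne a k with rfl | h
          · rw [Matrix.updateRow_self]
            rcases eq_or_ne b i with rfl | h'
            · simp [hΔ.le]
            · simp [Pi.single_eq_of_ne h', hΔ0.le]
          · rw [Matrix.updateRow_ne h]
            exact hent j a b)
      simpa [hD] using this
    refine ⟨A⁻¹ *ᵥ v, ?_, fun k => ?_⟩
    · rw [pi_norm_le_iff_of_nonneg (by positivity)]
      intro k
      refine (hsum (by positivity) (A⁻¹ k) (hadj k) v).trans ?_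
      gcongr
      linarith
    · have : A *ᵥ (A⁻¹ *ᵥ v) = v := by
        rw [Matrix.mulVec_mulVec, Matrix.mul_nonsing_inv A hu, Matrix.one_mulVec]
      exact congrFun this k

section
variable {m : ℕ} {α : ℝ}

theorem box_eq_Icc (a b : Fin m → ℝ) : box a b = Set.Icc a b := by
  ext x; simp [box, Pi.le_def, forall_and]

theorem rpow_exponent_pow (hm : 0 < m) {x : ℝ} (hx : 0 ≤ x) :
    (x ^ ((2 : ℝ) ^ ((1 : ℤ) - (m : ℤ)))) ^ 2 ^ (m - 1) = x := by
  have h : (2 : ℝ) ^ ((1 : ℤ) - (m : ℤ)) * ((2 ^ (m - 1) : ℕ) : ℝ) = 1 := by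
    rw [Nat.cast_pow, Nat.cast_two, ← zpow_natCast, ← zpow_add₀ two_ne_zero]
    rw [show (1 : ℤ) - m + ((m - 1 : ℕ) : ℤ) = 0 by omega, zpow_zero]
  rw [← Real.rpow_natCast, ← Real.rpow_mul hx, h, Real.rpow_one]

theorem lintegral_box_le (hm : 0 < m) (hα : 0 ≤ α) {F : (Fin m → ℝ) → ℝ} (hF : Continuous F)
    {a b : Fin m → ℝ} (hab : ∀ i, a i < b i) {S : Set (Fin m → ℝ)} (hS : S ⊆ box a b) {r : ℝ}
    (hr : 0 < r) (hre : r ≤ ecc a b) :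
    ∫⁻ y in box a b, ENNReal.ofReal (|F y| ^ 2 ^ (m - 1)) ≤
      ENNReal.ofReal ((∏ k, (b k - a k)) * r ^ (-α)) * Mal α F S ^ 2 ^ (m - 1) := by
  have hV : (volume (box a b)).toReal = ∏ k, (b k - a k) := by
    rw [box_eq_Icc, Real.volume_Icc_pi_toReal fun i => (hab i).le]
  have hV0 : 0 < ∏ k, (b k - a k) := Finset.prod_pos fun k _ => sub_pos.2 (hab k)
  have hint : IntegrableOn (fun y => |F y| ^ 2 ^ (m - 1)) (box a b) := by
    rw [box_eq_Icc]
    exact (hF.abs.pow _).continuousOn.integrableOn_compact isCompact_Icc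
  set I := ∫ y in box a b, |F y| ^ 2 ^ (m - 1) with hI
  have hI0 : 0 ≤ I := integral_nonneg fun y => by positivity
  have hecc : 0 < ecc a b := hr.trans_le hre
  have h1 : ENNReal.ofReal ((ecc a b ^ α) ^ ((2 : ℝ) ^ ((1 : ℤ) - (m : ℤ))) * avg (box a b) F) ≤
      Mal α F S :=
    le_iSup_of_le a (le_iSup_of_le b (le_iSup_of_le hab (le_iSup_of_le hS le_rfl)))
  have h2 := pow_le_pow_left' h1 (2 ^ (m - 1))
  have havg : 0 ≤ avg (box a b) F := Real.rpow_nonneg (by rw [hV]; positivity) _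
  rw [← ENNReal.ofReal_pow (by positivity), mul_pow, rpow_exponent_pow hm (by positivity), avg,
    rpow_exponent_pow hm (by rw [hV]; positivity), hV] at h2
  rw [← ofReal_integral_eq_lintegral_ofReal hint (Filter.Eventually.of_forall fun y => by positivity)]
  refine le_trans ?_ (mul_le_mul_right h2 _)
  rw [← ENNReal.ofReal_mul (by positivity)]
  refine ENNReal.ofReal_le_ofReal ?_
  have h3 : 1 ≤ r ^ (-α) * ecc a b ^ α := by
    rw [Real.rpow_neg hr.le, inv_mul_eq_div, one_le_div (by positivity)]
    exact Real.rpow_le_rpow hr.le hre hα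
  calc I ≤ (r ^ (-α) * ecc a b ^ α) * I := le_mul_of_one_le_left hI0 h3
    _ = _ := by
      have := hV0.ne'
      rw [← hI]
      field_simp

theorem le_ecc (hm : 0 < m) (b r : Fin m → ℝ) {lo hi : ℝ} (hlo : 0 < lo) (h1 : ∀ k, lo ≤ r k)
    (h2 : ∀ k, r k ≤ hi) : lo / hi ≤ ecc (b - r) (b + r) := by
  have : Nonempty (Fin m) := ⟨⟨0, hm⟩⟩
  have e : ∀ k, (b + r) k - (b - r) k = 2 * r k := fun k => by
    simp only [Pi.add_apply, Pi.sub_apply]; ring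
  unfold ecc
  simp only [e]
  have h3 : 2 * lo ≤ ⨅ k, 2 * r k := le_ciInf fun k => by linarith [h1 k]
  have h4 : ⨆ k, 2 * r k ≤ 2 * hi := ciSup_le fun k => by linarith [h2 k]
  have k₀ : Fin m := ⟨0, hm⟩
  have h5 : 0 < ⨆ k, 2 * r k := lt_of_lt_of_le (by linarith [h1 k₀] : 0 < 2 * r k₀)
    (le_ciSup (f := fun k => 2 * r k) (Set.finite_range _).bddAbove k₀)
  rw [← mul_div_mul_left lo hi two_ne_zero]
  exact div_le_div₀ (le_trans (by positivity) h3) h3 h5 h4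

theorem exists_hg_zero_le (N : ℕ) : ∃ K : ℝ, 1 ≤ K ∧ ∀ r : ℝ, 0 ≤ r →
    ∃ n : ℕ, r ≤ 2 ^ n ∧ hg 0 r ≤ K * ((2 : ℝ) ^ n)⁻¹ ^ N := by
  set K : ℝ := 2 ^ N * (N.factorial * Real.exp 1) with hK
  have hf : (1 : ℝ) ≤ N.factorial := by exact_mod_cast Nat.factorial_pos N
  have he : 1 ≤ Real.exp 1 := Real.one_le_exp zero_le_one
  have h2 : (1 : ℝ) ≤ 2 ^ N := one_le_pow₀ one_le_two
  have hK1 : 1 ≤ K := one_le_mul_of_one_le_of_one_le h2 (one_le_mul_of_one_le_of_one_le hf he)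
  refine ⟨K, hK1, fun r hr => ?_⟩
  rcases le_or_gt r 1 with h | h
  · refine ⟨0, by simpa using h, ?_⟩
    simp only [hg, pow_zero, inv_one, one_pow, mul_one]
    refine le_trans (Real.exp_le_one_iff.2 ?_) hK1
    have := Real.pi_pos
    nlinarith [sq_nonneg r]
  · obtain ⟨n, hn1, hn2⟩ := exists_nat_pow_near h.le one_lt_two
    refine ⟨n + 1, hn2.le, ?_⟩
    have hN : r ^ N * hg 0 r ≤ N.factorial * Real.exp 1 := by
      have h3 := Real.pow_div_factorial_le_exp r hr N
      rw [div_le_iff₀ (by positivity)] at h3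
      calc r ^ N * hg 0 r ≤ (Real.exp r * N.factorial) * hg 0 r :=
            mul_le_mul_of_nonneg_right h3 (hg_zero_pos r).le
        _ = N.factorial * Real.exp (r + -Real.pi * r ^ 2) := by
            rw [Real.exp_add]; simp only [hg]; ring
        _ ≤ _ := by
            gcongr
            nlinarith [Real.pi_gt_three, sq_nonneg (r - 1)]
    have h4 : ((2 : ℝ) ^ n) ^ N * hg 0 r ≤ N.factorial * Real.exp 1 :=
      le_trans (mul_le_mul_of_nonneg_right (pow_le_pow_left₀ (by positivity) hn1 N)
        (hg_zero_pos r).le) hN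
    rw [inv_pow, ← div_eq_mul_inv, le_div_iff₀ (by positivity), hK, pow_succ (2 : ℝ) n, mul_pow]
    nlinarith

theorem prod_hg_zero_le (z : Fin m → ℝ) : ∏ k, hg 0 (z k) ≤ hg 0 ‖z‖ := by
  simp only [hg]
  rw [← Real.exp_sum, ← Finset.mul_sum]
  refine Real.exp_le_exp.2 ?_
  have h : ‖z‖ ≤ Real.sqrt (∑ k, z k ^ 2) := by
    rw [pi_norm_le_iff_of_nonneg (Real.sqrt_nonneg _)]
    exact fun k => Real.abs_le_sqrt
      (Finset.single_le_sum (f := fun k => z k ^ 2) (fun _ _ => sq_nonneg _) (Finset.mem_univ k))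
  have h2 : ‖z‖ ^ 2 ≤ ∑ k, z k ^ 2 := by
    rw [← Real.sq_sqrt (Finset.sum_nonneg fun k _ => sq_nonneg (z k))]
    exact pow_le_pow_left₀ (norm_nonneg z) h 2
  have := Real.pi_pos
  nlinarith

/-- Gaussian averages are controlled by the maximal function. -/
theorem exists_gaussian_avg_le (hm : 0 < m) (hα : 0 ≤ α) (hα1 : α ≤ 1) {C : ℝ} (hC : 1 ≤ C) :
    ∃ K : ℝ, 1 ≤ K ∧ ∀ {F : (Fin m → ℝ) → ℝ}, Continuous F → ∀ {S : Set (Fin m → ℝ)}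
      {b : Fin m → ℝ} {t : ℝ}, 0 < t → (∀ y ∈ S, ∀ k, |y k - b k| ≤ C * t) →
      ∀ {s D : ℝ} {w : Fin m → ℝ}, 1 ≤ s → (∀ k, 0 < w k) → (∀ k, w k ≤ s) →
      ∏ k, max 1 (w k)⁻¹ ≤ D →
      ∫⁻ y, ENNReal.ofReal (|F y| ^ 2 ^ (m - 1) * ∏ k, ker 0 (t * w k) (y k - b k)) ≤
        ENNReal.ofReal (K * (D * s ^ α)) * Mal α F S ^ 2 ^ (m - 1) := by
  obtain ⟨K, hK, hKb⟩ := exists_hg_zero_le (m + 2)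
  have hC0 : 0 < C := by linarith
  refine ⟨2 * (K * (2 * C) ^ m), ?_, fun {F} hF S b t ht hS s D w hs hw hws hD => ?_⟩
  · have : 1 ≤ (2 * C) ^ m := one_le_pow₀ (by linarith)
    nlinarith
  set r : ℕ → Fin m → ℝ := fun n k => max (2 ^ n * (t * w k)) (C * t) with hr
  have htw : ∀ k, 0 < t * w k := fun k => mul_pos ht (hw k)
  have hr0 : ∀ n k, 0 < r n k := fun n k => lt_max_of_lt_right (by positivity)
  set B : ℕ → Set (Fin m → ℝ) := fun n => box (b - r n) (b + r n) with hB
  have hBm : ∀ n, MeasurableSet (B n) := fun n => by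
    simp only [hB, box_eq_Icc]; exact measurableSet_Icc
  have hmem : ∀ n y, y ∈ B n ↔ ∀ k, |y k - b k| ≤ r n k := fun n y => by
    simp only [hB, box, Set.mem_ofPred_eq, Pi.sub_apply, Pi.add_apply, abs_le]
    exact forall_congr' fun k => ⟨fun h => ⟨by linarith [h.1], by linarith [h.2]⟩,
      fun h => ⟨by linarith [h.1], by linarith [h.2]⟩⟩
  set q : ℝ := ∏ k, (t * w k)⁻¹ with hq
  have hq0 : 0 < q := Finset.prod_pos fun k _ => inv_pos.2 (htw k)
  set a : ℕ → ℝ := fun n => K * ((2 : ℝ) ^ n)⁻¹ ^ (m + 2) with ha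
  have ha0 : ∀ n, 0 ≤ a n := fun n => by positivity
  set f : (Fin m → ℝ) → ℝ≥0∞ := fun y => ENNReal.ofReal (|F y| ^ 2 ^ (m - 1)) with hf
  have hfm : Measurable f := (hF.abs.pow _).measurable.ennreal_ofReal
  have hpt : ∀ y, ENNReal.ofReal (|F y| ^ 2 ^ (m - 1) * ∏ k, ker 0 (t * w k) (y k - b k)) ≤
      ∑' n, ENNReal.ofReal (q * a n) * (B n).indicator f y := fun y => by
    set z : Fin m → ℝ := fun k => (t * w k)⁻¹ * (y k - b k) with hz
    obtain ⟨n, hn1, hn2⟩ := hKb ‖z‖ (norm_nonneg z)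
    refine le_trans ?_ (ENNReal.le_tsum n)
    have hy : y ∈ B n := (hmem n y).2 fun k => by
      have h1 := (norm_le_pi_norm z k).trans hn1
      rw [Real.norm_eq_abs, hz, abs_mul, abs_of_pos (inv_pos.2 (htw k)),
        inv_mul_le_iff₀ (htw k)] at h1
      exact le_max_of_le_left (by linarith)
    rw [Set.indicator_of_mem hy, hf, ← ENNReal.ofReal_mul (by positivity), mul_comm]
    refine ENNReal.ofReal_le_ofReal (mul_le_mul_of_nonneg_right ?_ (by positivity))
    unfold ker
    rw [Finset.prod_mul_distrib]
    exact mul_le_mul_of_nonneg_left ((prod_hg_zero_le z).trans hn2) hq0.le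
  refine (lintegral_mono hpt).trans ?_
  rw [lintegral_tsum fun n => ((hfm.indicator (hBm n)).const_mul _).aemeasurable]
  have hterm : ∀ n, ∫⁻ y, ENNReal.ofReal (q * a n) * (B n).indicator f y ≤
      ENNReal.ofReal ((K * (2 * C) ^ m) * (D * s ^ α) * (1 / 2) ^ n) * Mal α F S ^ 2 ^ (m - 1) := by
    intro n
    have h2n : (1 : ℝ) ≤ 2 ^ n := one_le_pow₀ one_le_two
    rw [lintegral_const_mul _ (hfm.indicator (hBm n)), lintegral_indicator (hBm n)]
    have hlo : ((2 : ℝ) ^ n * s)⁻¹ ≤ ecc (b - r n) (b + r n) := by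
      have := le_ecc hm b (r n) (lo := C * t) (hi := 2 ^ n * s * (C * t)) (by positivity)
        (fun k => le_max_right _ _) (fun k => max_le ?_ ?_)
      · refine le_trans (le_of_eq ?_) this
        field_simp
      · calc 2 ^ n * (t * w k) ≤ 2 ^ n * (t * s) := by gcongr; exact hws k
          _ = 2 ^ n * s * (1 * t) := by ring
          _ ≤ _ := by gcongr
      · exact le_mul_of_one_le_left (by positivity) (one_le_mul_of_one_le_of_one_le h2n hs)
    have hbox := lintegral_box_le hm hα hF (a := b - r n) (b := b + r n)
      (fun k => by simp only [Pi.sub_apply, Pi.add_apply]; linarith [hr0 n k])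
      (S := S) (fun y hy => (hmem n y).2 fun k => (hS y hy k).trans (le_max_right _ _))
      (r := ((2 : ℝ) ^ n * s)⁻¹) (by positivity) hlo
    refine (mul_le_mul_right hbox _).trans ?_
    rw [← mul_assoc, ← ENNReal.ofReal_mul (mul_nonneg hq0.le (ha0 n))]
    refine mul_le_mul_left (ENNReal.ofReal_le_ofReal ?_) _
    have h1 : (((2 : ℝ) ^ n * s)⁻¹) ^ (-α) ≤ 2 ^ n * s ^ α := by
      rw [Real.inv_rpow (by positivity), Real.rpow_neg (by positivity), inv_inv,
        Real.mul_rpow (by positivity) (by positivity)]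
      gcongr
      calc ((2 : ℝ) ^ n) ^ α ≤ ((2 : ℝ) ^ n) ^ (1 : ℝ) := Real.rpow_le_rpow_of_exponent_le h2n hα1
        _ = 2 ^ n := Real.rpow_one _
    have h2 : q * ∏ k, ((b + r n) k - (b - r n) k) ≤ (2 * C) ^ m * (2 ^ n) ^ m * D := by
      rw [hq, ← Finset.prod_mul_distrib]
      calc ∏ k, (t * w k)⁻¹ * ((b + r n) k - (b - r n) k)
          ≤ ∏ k, (2 * C * 2 ^ n) * max 1 (w k)⁻¹ := by
            refine Finset.prod_le_prod (fun k _ => mul_nonneg (inv_pos.2 (htw k)).le ?_) fun k _ => ?_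
            · simp only [Pi.sub_apply, Pi.add_apply]; linarith [hr0 n k]
            · have e : (b + r n) k - (b - r n) k = 2 * r n k := by
                simp only [Pi.add_apply, Pi.sub_apply]; ring
              rw [e, inv_mul_le_iff₀ (htw k)]
              have hwk := hw k
              have m1 : (1 : ℝ) ≤ max 1 (w k)⁻¹ := le_max_left _ _
              have m2 : 1 ≤ w k * max 1 (w k)⁻¹ := by
                rw [← mul_inv_cancel₀ hwk.ne']
                gcongr
                exact le_max_right _ _
              have : r n k ≤ C * 2 ^ n * (t * (w k * max 1 (w k)⁻¹)) := by
                refine max_le ?_ ?_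
                · calc 2 ^ n * (t * w k) = 1 * 2 ^ n * (t * (w k * 1)) := by ring
                    _ ≤ _ := by gcongr
                · calc C * t = C * 1 * (t * 1) := by ring
                    _ ≤ _ := by gcongr
              calc 2 * r n k ≤ 2 * (C * 2 ^ n * (t * (w k * max 1 (w k)⁻¹))) := by gcongr
                _ = _ := by ring
        _ = (2 * C) ^ m * (2 ^ n) ^ m * ∏ k, max 1 (w k)⁻¹ := by
            rw [Finset.prod_mul_distrib]; simp [mul_pow]
        _ ≤ _ := by gcongr
    calc q * a n * ((∏ k, ((b + r n) k - (b - r n) k)) * (((2 : ℝ) ^ n * s)⁻¹) ^ (-α))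
        = a n * (q * ∏ k, ((b + r n) k - (b - r n) k)) * (((2 : ℝ) ^ n * s)⁻¹) ^ (-α) := by ring
      _ ≤ a n * ((2 * C) ^ m * (2 ^ n) ^ m * D) * (2 ^ n * s ^ α) := by
          have hD0 : 0 ≤ D := le_trans (Finset.prod_nonneg fun k _ => by positivity) hD
          have := ha0 n
          gcongr
      _ = _ := by
          simp only [ha]
          rw [show (1 / 2 : ℝ) ^ n = ((2 : ℝ) ^ n)⁻¹ by rw [one_div, inv_pow],
            inv_pow ((2 : ℝ) ^ n) (m + 2), pow_add]
          have : (2 : ℝ) ^ n ≠ 0 := by positivity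
          field_simp
  refine (ENNReal.tsum_le_tsum hterm).trans ?_
  have hD0 : 0 ≤ D := le_trans (Finset.prod_nonneg fun k _ => by positivity) hD
  rw [ENNReal.tsum_mul_right, ← ENNReal.ofReal_tsum_of_nonneg (fun n => by positivity)
    (summable_geometric_two.mul_left _), tsum_mul_left, tsum_geometric_two]
  refine le_of_eq ?_
  congr 2
  ring
end

/-- The distance function of a collection of dyadic cubes, weighted by the side lengths. -/
def gap {m : ℕ} (T : Set (ℤ × (Fin m → ℤ))) (U : ℝ) (p : Fin m → ℝ) : ℝ :=
  ⨅ x : {x : (ℤ × (Fin m → ℤ)) × (Fin m → ℝ) // x.1 ∈ T ∧ x.2 ∈ dC x.1},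
    (U * (2 : ℝ) ^ x.1.1.1 + ‖p - x.1.2‖)

/-- The truncated stopping function of a collection of dyadic cubes. -/
def rhoT {m : ℕ} (T : Set (ℤ × (Fin m → ℤ))) (U τ : ℝ) (p : Fin m → ℝ) : ℝ :=
  max τ (gap T U p / 4)

section
variable {m : ℕ} {α U : ℝ} {T : Set (ℤ × (Fin m → ℤ))} {Q Qt : ℤ × (Fin m → ℤ)}

theorem corner_mem_dC (Q : ℤ × (Fin m → ℤ)) : (fun k => (2 : ℝ) ^ Q.1 * Q.2 k) ∈ dC Q := fun k =>
  ⟨le_rfl, by have : (0 : ℝ) < 2 ^ Q.1 := by positivity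
              nlinarith⟩

theorem norm_sub_le_of_mem_dC {p q : Fin m → ℝ} (hp : p ∈ dC Q) (hq : q ∈ dC Q) :
    ‖p - q‖ ≤ 2 ^ Q.1 := by
  rw [pi_norm_le_iff_of_nonneg (by positivity)]
  intro k
  rw [Pi.sub_apply, Real.norm_eq_abs, abs_le]
  constructor <;> nlinarith [(hp k).1, (hp k).2, (hq k).1, (hq k).2]

theorem dC_eq_pi (Q : ℤ × (Fin m → ℤ)) : dC Q = Set.univ.pi fun k =>
    Set.Ico ((2 : ℝ) ^ Q.1 * Q.2 k) ((2 : ℝ) ^ Q.1 * (Q.2 k + 1)) := by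
  ext x; simp [dC]

theorem measurableSet_dC (Q : ℤ × (Fin m → ℤ)) : MeasurableSet (dC Q) := by
  rw [dC_eq_pi]
  exact MeasurableSet.univ_pi fun _ => measurableSet_Ico

theorem volume_dC (Q : ℤ × (Fin m → ℤ)) : volume (dC Q) = ENNReal.ofReal (2 ^ Q.1) ^ m := by
  rw [dC_eq_pi, Real.volume_pi_Ico]
  have : ∀ k, (2 : ℝ) ^ Q.1 * ((Q.2 k : ℝ) + 1) - (2 : ℝ) ^ Q.1 * (Q.2 k : ℝ) = 2 ^ Q.1 :=
    fun k => by ring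
  simp [this]

theorem side_le_of_subset (hm : 0 < m) (h : dC Q ⊆ dC Qt) : (2 : ℝ) ^ Q.1 ≤ 2 ^ Qt.1 := by
  have := measure_mono (μ := volume) h
  rw [volume_dC, volume_dC, ← ENNReal.ofReal_pow (by positivity),
    ← ENNReal.ofReal_pow (by positivity), ENNReal.ofReal_le_ofReal_iff (by positivity)] at this
  exact (pow_le_pow_iff_left₀ (by positivity) (by positivity) hm.ne').1 this

theorem bddBelow_gap (hU : 0 ≤ U) (p : Fin m → ℝ) :
    BddBelow (Set.range fun x : {x : (ℤ × (Fin m → ℤ)) × (Fin m → ℝ) // x.1 ∈ T ∧ x.2 ∈ dC x.1} =>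
      U * (2 : ℝ) ^ x.1.1.1 + ‖p - x.1.2‖) :=
  ⟨0, by rintro _ ⟨x, rfl⟩; positivity⟩

theorem gap_le (hU : 0 ≤ U) (hQ : Q ∈ T) {p₀ : Fin m → ℝ} (hp₀ : p₀ ∈ dC Q) (p : Fin m → ℝ) :
    gap T U p ≤ U * 2 ^ Q.1 + ‖p - p₀‖ :=
  ciInf_le (bddBelow_gap hU p) ⟨(Q, p₀), hQ, hp₀⟩

theorem exists_of_gap_lt (hQt : Qt ∈ T) {p : Fin m → ℝ} {r : ℝ} (h : gap T U p < r) :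
    ∃ Q ∈ T, ∃ p₀ ∈ dC Q, U * 2 ^ Q.1 + ‖p - p₀‖ < r := by
  have : Nonempty {x : (ℤ × (Fin m → ℤ)) × (Fin m → ℝ) // x.1 ∈ T ∧ x.2 ∈ dC x.1} :=
    ⟨⟨(Qt, _), hQt, corner_mem_dC Qt⟩⟩
  obtain ⟨⟨⟨Q, p₀⟩, hQ, hp₀⟩, hx⟩ := exists_lt_of_ciInf_lt h
  exact ⟨Q, hQ, p₀, hp₀, hx⟩

theorem gap_sub_le (hU : 0 ≤ U) (hQt : Qt ∈ T) (p q : Fin m → ℝ) :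
    gap T U p ≤ gap T U q + ‖p - q‖ := by
  refine le_of_forall_pos_lt_add fun ε hε => ?_
  obtain ⟨Q, hQ, p₀, hp₀, h⟩ := exists_of_gap_lt hQt (lt_add_of_pos_right (gap T U q) hε)
  have h1 := gap_le hU hQ hp₀ p
  have h2 := norm_sub_le_norm_sub_add_norm_sub p q p₀
  linarith

theorem abs_rhoT_sub_le (hU : 0 ≤ U) (hQt : Qt ∈ T) (τ : ℝ) (p q : Fin m → ℝ) :
    |rhoT T U τ p - rhoT T U τ q| ≤ ‖p - q‖ := by
  refine (abs_max_sub_max_le_max _ _ _ _).trans (max_le (by simp) ?_)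
  have h1 := gap_sub_le hU hQt p q
  have h2 := gap_sub_le hU hQt q p
  rw [norm_sub_rev q p] at h2
  have := norm_nonneg (p - q)
  rw [abs_le]
  constructor <;> linarith

theorem volume_rhoT_le (hT : ConvexTree T Qt) (hU : 1 ≤ U) (τ : ℝ) :
    volume {p | rhoT T U τ p < 2 * (U * 2 ^ Qt.1)} ≤
      ENNReal.ofReal ((17 * U) ^ m) * volume (dC Qt) := by
  set L : ℝ := 2 ^ Qt.1 with hL
  have hL0 : 0 < L := by positivity
  set a : Fin m → ℝ := fun k => L * Qt.2 k - 8 * (U * L) with ha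
  set b : Fin m → ℝ := fun k => L * (Qt.2 k + 1) + 8 * (U * L) with hb
  have hsub : {p | rhoT T U τ p < 2 * (U * L)} ⊆ Set.Icc a b := fun p hp => by
    have h1 : gap T U p < 8 * (U * L) := by
      have := (le_max_right τ (gap T U p / 4)).trans_lt hp
      linarith
    obtain ⟨Q, hQ, p₀, hp₀, h⟩ := exists_of_gap_lt hT.1 h1
    have hp₁ := hT.2.1 Q hQ hp₀
    have h2 : ‖p - p₀‖ ≤ 8 * (U * L) := by
      have : 0 < U * (2 : ℝ) ^ Q.1 := by positivity
      linarith
    refine ⟨fun k => ?_, fun k => ?_⟩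
    all_goals
      have h3 := abs_le.1 ((norm_le_pi_norm (p - p₀) k).trans h2)
      have h4 := hp₁ k
      simp only [Pi.sub_apply] at h3
      simp only [ha, hb]
      linarith [h3.1, h3.2, h4.1, h4.2]
  refine (measure_mono hsub).trans ?_
  rw [Real.volume_Icc_pi, volume_dC, ← ENNReal.ofReal_pow hL0.le,
    ← ENNReal.ofReal_mul (by positivity), ← mul_pow]
  have e : ∀ k, b k - a k = L + 16 * U * L := fun k => by simp only [ha, hb]; ring
  simp only [e, Finset.prod_const, Finset.card_univ, Fintype.card_fin]
  rw [← ENNReal.ofReal_pow (by positivity)]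
  refine ENNReal.ofReal_le_ofReal (pow_le_pow_left₀ (by positivity) ?_ m)
  nlinarith

theorem RegB.abs_sub_le {B : ℝ} {J : Matrix (Idx m) (Fin m) ℝ} (h : RegB B J) (p q : Fin m → ℝ)
    (c : Idx m) : |(J *ᵥ p) c - (J *ᵥ q) c| ≤ B * ‖p - q‖ := by
  have := h.le (p - q) c
  rwa [Matrix.mulVec_sub] at this

/-- Data of a tree with normalised maximal functions are admissible. -/
theorem exists_adm (hm : 0 < m) (hα : 0 ≤ α) (hα1 : α ≤ 1) {B : ℝ} (hB : 1 ≤ B) :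
    ∃ K : ℝ, 1 ≤ K ∧ ∀ {J : Matrix (Idx m) (Fin m) ℝ}, RegB B J →
      ∀ {T : Set (ℤ × (Fin m → ℤ))} {Qt : ℤ × (Fin m → ℤ)}, ConvexTree T Qt →
      ∀ {F : Corner m → (Fin m → ℝ) → ℝ}, IsCc F →
      (∀ j, ENNReal.ofReal K * MalTree α (F j) (Amat J j) T ^ 2 ^ (m - 1) ≤ 1) →
      ∀ {U τ : ℝ}, 1 ≤ U → 0 < τ → Adm (B * B) α (U * 2 ^ Qt.1) (rhoT T U τ) J F := by
  obtain ⟨K, hK, hKb⟩ := exists_gaussian_avg_le hm hα hα1 (C := 18 * B) (by linarith)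
  refine ⟨K, hK, fun {J} hJ T Qt hT F hF hM U τ hU hτ => ?_⟩
  have hB0 : 0 < B := by linarith
  exact
  { cc := hF
    lip := abs_rhoT_sub_le (by linarith) hT.1 τ
    low := ⟨τ, hτ, fun p => le_max_left _ _⟩
    vol := (volume_rhoT_le hT hU τ).trans_lt
      (ENNReal.mul_lt_top ENNReal.ofReal_lt_top (by
        rw [volume_dC]; exact ENNReal.pow_lt_top ENNReal.ofReal_lt_top))
    inv := fun j i => by
      obtain ⟨q, h1, h2⟩ := hJ.inv j (Pi.single i 1)
      have h3 : ‖(Pi.single i 1 : Fin m → ℝ)‖ ≤ 1 :=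
        (pi_norm_le_iff_of_nonneg zero_le_one).2 fun k => by
          rw [Pi.single_apply]; split_ifs <;> simp
      have h4 : ‖q‖ ≤ B := h1.trans (mul_le_of_le_one_right hB0.le h3)
      refine ⟨q, h4.trans (le_mul_of_one_le_left hB0.le hB), fun k => ?_, fun c => ?_⟩
      · rw [h2, Pi.single_apply]
      · exact (hJ.le q c).trans (by gcongr)
    avg := fun j p t s D w ht hp hs hw hws hD => by
      have hg : gap T U p < 9 * t := by
        have := (le_max_right τ (gap T U p / 4)).trans hp
        linarith
      obtain ⟨Q, hQ, p₀, hp₀, h⟩ := exists_of_gap_lt hT.1 hg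
      have hQ0 : (0 : ℝ) < 2 ^ Q.1 := by positivity
      have hUQ : (2 : ℝ) ^ Q.1 ≤ U * 2 ^ Q.1 := le_mul_of_one_le_left hQ0.le hU
      have h18 : ∀ p₁ ∈ dC Q, ‖p₁ - p‖ ≤ 18 * t := fun p₁ hp₁ => by
        have h1 := norm_sub_le_of_mem_dC hp₁ hp₀
        have h2 := norm_sub_le_norm_sub_add_norm_sub p₁ p₀ p
        rw [norm_sub_rev p₀ p] at h2
        have := norm_nonneg (p - p₀)
        linarith
      have key := hKb (hF j).1 (S := (Amat J j).mulVec '' dC Q)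
        (b := fun k => (J *ᵥ p) (sel j k)) ht (by
          rintro _ ⟨p₁, hp₁, rfl⟩ k
          refine (hJ.abs_sub_le p₁ p (sel j k)).trans ?_
          calc B * ‖p₁ - p‖ ≤ B * (18 * t) := by gcongr; exact h18 p₁ hp₁
            _ = _ := by ring) hs hw hws hD
      refine key.trans ?_
      have hD0 : 0 ≤ D := le_trans (Finset.prod_nonneg fun k _ => by positivity) hD
      have hMle : Mal α (F j) ((Amat J j).mulVec '' dC Q) ≤ MalTree α (F j) (Amat J j) T :=
        le_iSup₂_of_le Q hQ le_rfl
      rw [mul_comm K, ENNReal.ofReal_mul (by positivity), mul_assoc]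
      refine mul_le_of_le_one_right zero_le (le_trans ?_ (hM j))
      gcongr }

theorem eq_zero_of_MalTree_eq_zero (hm : 0 < m) (hα : 0 ≤ α) (hα1 : α ≤ 1) {B : ℝ} (hB : 1 ≤ B)
    {J : Matrix (Idx m) (Fin m) ℝ} (hJ : RegB B J) (hQt : Qt ∈ T) {F : (Fin m → ℝ) → ℝ}
    (hF : Continuous F) {j : Corner m} (h : MalTree α F (Amat J j) T = 0) : F = 0 := by
  obtain ⟨K, -, hKb⟩ := exists_gaussian_avg_le hm hα hα1 hB
  set p : Fin m → ℝ := fun k => (2 : ℝ) ^ Qt.1 * Qt.2 k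
  have key := hKb hF (S := (Amat J j).mulVec '' dC Qt) (b := fun k => (J *ᵥ p) (sel j k))
    (t := 2 ^ Qt.1) (by positivity) (by
      rintro _ ⟨p₁, hp₁, rfl⟩ k
      refine (hJ.abs_sub_le p₁ p (sel j k)).trans ?_
      gcongr
      exact norm_sub_le_of_mem_dC hp₁ (corner_mem_dC Qt))
    (s := 1) (D := 1) (w := 1) le_rfl (by simp) (by simp) (by simp)
  have hM : Mal α F ((Amat J j).mulVec '' dC Qt) = 0 :=
    le_antisymm ((le_iSup₂_of_le Qt hQt le_rfl).trans_eq h) zero_le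
  rw [hM, zero_pow (by positivity), mul_zero] at key
  have hc : Continuous fun y : Fin m → ℝ => |F y| ^ 2 ^ (m - 1) *
      ∏ k, ker 0 ((2 : ℝ) ^ Qt.1 * (1 : Fin m → ℝ) k) (y k - (J *ᵥ p) (sel j k)) :=
    (hF.abs.pow _).mul (continuous_finsetProd _ fun k _ => by fun_prop)
  have h0 := (lintegral_eq_zero_iff hc.measurable.ennreal_ofReal).1 (le_antisymm key zero_le)
  have hprod : ∀ y : Fin m → ℝ,
      0 < ∏ k, ker 0 ((2 : ℝ) ^ Qt.1 * (1 : Fin m → ℝ) k) (y k - (J *ᵥ p) (sel j k)) :=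
    fun y => Finset.prod_pos fun k _ => ker_zero_pos (by simp; positivity) _
  refine (Continuous.ae_eq_iff_eq volume hF continuous_zero).1 ?_
  filter_upwards [h0] with y hy
  have h1 := ENNReal.ofReal_eq_zero.1 hy
  by_contra hne
  have : 0 < |F y| := abs_pos.2 hne
  have h2 := hprod y
  have : 0 < |F y| ^ 2 ^ (m - 1) * ∏ k, ker 0 ((2 : ℝ) ^ Qt.1 * (1 : Fin m → ℝ) k)
    (y k - (J *ᵥ p) (sel j k)) := by positivity
  linarith
end

theorem fderiv_prod_hg {ι : Type*} [Fintype ι] [DecidableEq ι] (γ : ι → ℕ) (y : ι → ℝ) (d : ι) :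
    fderiv ℝ (fun y : ι → ℝ => ∏ c, hg (γ c) (y c)) y (Pi.single d 1) =
      ∏ c, hg ((γ + Pi.single d 1 : ι → ℕ) c) (y c) := by
  have h1 : ∀ c ∈ (Finset.univ : Finset ι), HasFDerivAt (fun y : ι → ℝ => hg (γ c) (y c))
      (hg (γ c + 1) (y c) • (ContinuousLinearMap.proj c : (ι → ℝ) →L[ℝ] ℝ)) y := fun c _ =>
    (hasDerivAt_hg (γ c) (y c)).comp_hasFDerivAt y
      (ContinuousLinearMap.proj c : (ι → ℝ) →L[ℝ] ℝ).hasFDerivAt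
  rw [(HasFDerivAt.finsetProd h1).fderiv, _root_.sum_apply,
    Finset.sum_eq_single d]
  · rw [← Finset.mul_prod_erase _ _ (Finset.mem_univ d)]
    simp only [_root_.smul_apply, ContinuousLinearMap.proj_apply, Pi.single_eq_same,
      Pi.add_apply, smul_eq_mul, mul_one]
    rw [mul_comm]
    congr 1
    refine Finset.prod_congr rfl fun c hc => ?_
    rw [Pi.single_eq_of_ne (Finset.ne_of_mem_erase hc), add_zero]
  · intro c _ hc
    simp [Pi.single_eq_of_ne hc]
  · simp

theorem ddg_eq {m : ℕ} (i : Fin m) (y : Idx m → ℝ) : ddg i y = ∏ c, hg (pair i 1 c) (y c) := by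
  have h0 : (gss : (Idx m → ℝ) → ℝ) = fun y => ∏ c, hg ((0 : Idx m → ℕ) c) (y c) := by
    funext y
    simp only [gss, hg]
    rw [← Real.exp_sum, Finset.mul_sum]
  unfold ddg
  rw [h0]
  simp_rw [fderiv_prod_hg]
  refine Finset.prod_congr rfl fun c _ => ?_
  congr 1
  rcases c with c | c <;> rcases eq_or_ne c i with rfl | h <;>
    simp [pair, *]

theorem dil_ddg_eq {m : ℕ} (i : Fin m) (t : ℝ) (y : Idx m → ℝ) :
    dil t (ddg i) y = ∏ c, ker (pair i 1 c) t (y c) := by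
  unfold dil ker
  rw [ddg_eq, Finset.prod_mul_distrib, Finset.prod_const, inv_pow]
  congr 3
  simp [two_mul]

section
variable {m : ℕ} {J : Matrix (Idx m) (Fin m) ℝ} {F : Corner m → (Fin m → ℝ) → ℝ}

theorem HH_pair_nonneg (hF : IsCc F) {i : Fin m} (hS : Sym {i} J F) (n : ℕ) {w : Fin m → ℝ}
    (hw : ∀ k, 0 < w k) (p : Fin m → ℝ) {t : ℝ} (ht : 0 < t) :
    0 ≤ HH F J (pair i n) w p t := by
  refine hF.integral_nonneg i (hS i (by simp)).2 (ψ := fun c r => ker (pair i n c)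
    (t * w (pos c)) (r - (J *ᵥ p) c)) (fun c => by fun_prop) ?_ fun c hc r => ?_
  · funext r
    simp [pair, hS.mulVec_eq (show i ∈ ({i} : Finset (Fin m)) by simp)]
  · simp only [pair, if_neg hc]
    exact (ker_zero_pos (mul_pos ht (hw _)) _).le

theorem sym_Fk (J : Matrix (Idx m) (Fin m) ℝ) (F : Corner m → (Fin m → ℝ) → ℝ) (i : Fin m)
    (ε : Fin 2) : Sym {i} (Jk J i ε) (Fk F i ε) := by
  have h : Sym ∅ J F := fun i hi => absurd hi (Finset.notMem_empty i)
  simpa using h.Fk i ε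

theorem Fk_Fk (F : Corner m → (Fin m → ℝ) → ℝ) (i : Fin m) (ε δ : Fin 2) :
    Fk (Fk F i ε) i δ = Fk F i ε := by
  funext j
  simp [Fk]

/-- The weight `U⁻¹` at position `i` and `1` elsewhere. -/
def narrow (i : Fin m) (U : ℝ) : Fin m → ℝ := fun k => if k = i then U⁻¹ else 1

theorem wt_narrow (i : Fin m) {U : ℝ} (hU : 1 ≤ U) : Wt {i} (narrow i U) 1 U where
  one_le := le_rfl
  pos k := by unfold narrow; split_ifs <;> positivity
  le k := by
    unfold narrow; split_ifs
    exacts [inv_le_one_of_one_le₀ hU, le_rfl]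
  eq k hk := if_neg (by simpa using hk)
  prod := by
    rw [Finset.prod_eq_single i]
    · simp [narrow, hU]
    · intro k _ hk; simp [narrow, hk]
    · simp

theorem IsCc.abs_integral_dil_le (hF : IsCc F) (i : Fin m) (u : Idx m → ℝ) {U : ℝ} (hU : 2 ≤ U)
    {q : Fin 2 → Fin m → ℝ} (hq : ∀ ε, (J *ᵥ q ε) (cof i ε) = u (cof i ε))
    (hqU : ∀ ε c, |u c - (J *ᵥ q ε) c| ≤ U) (p : Fin m → ℝ) {t : ℝ} (ht : 0 < t) :
    |∫ x, (∏ j, F j (proj j x)) * dil t (ddg i) (x - J *ᵥ p + t • u)| ≤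
      2 * (Real.exp (4 * Real.pi) * U) ^ (2 * m) * ∑ ε, HH (SBL.Fk F i ε) (Jk J i ε) (pair i 1)
        (narrow i U) (p - t • q ε) (U * t) := by
  have hU0 : 0 < U := by linarith
  set E := Real.exp (4 * Real.pi) * U with hE
  have hE1 : 1 ≤ E := by
    have h1 : 1 ≤ Real.exp (4 * Real.pi) := Real.one_le_exp (by positivity)
    nlinarith
  set ψ : Idx m → ℝ → ℝ := fun c r => ker (pair i 1 c) t (r - (J *ᵥ p) c + t * u c) with hψ
  have hψc : ∀ c, Continuous (ψ c) := fun c => by simp only [hψ]; fun_prop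
  have hrw : (fun x : Idx m → ℝ => (∏ j, F j (proj j x)) *
      dil t (ddg i) (x - J *ᵥ p + t • u)) = fun x => Psi F x * ∏ c, ψ c (x c) := by
    funext x
    rw [dil_ddg_eq]; rfl
  rw [hrw]
  have hpos : ∀ c, pos c ≠ i → ∀ r, |ψ c r| ≤ ψ c r := fun c hc r => by
    simp only [hψ, pair, if_neg hc]
    exact (abs_of_pos (ker_zero_pos ht _)).le
  refine (hF.abs_integral_le i hψc hψc hpos).trans ?_
  rw [Finset.mul_sum]
  refine Finset.sum_le_sum fun ε _ => ?_
  have hφc : ∀ c, Continuous (twist i (ψ (cof i ε)) ψ c) := fun c => by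
    unfold twist; split_ifs
    exacts [hψc _, hψc _]
  set p' := p - t • q ε with hp'
  have hJp' : ∀ c, (J *ᵥ p') c = (J *ᵥ p) c - t * (J *ᵥ q ε) c := fun c => by
    rw [hp', mulVec_sub, mulVec_smul]; rfl
  set ψ' : Idx m → ℝ → ℝ := fun c r => E * ker 0 (U * t) (r - (J *ᵥ p') c) with hψ'
  refine (le_abs_self _).trans (((hF.Fk i ε).abs_integral_le i hφc (ψ' := ψ')
    (fun c => by simp only [hψ']; fun_prop) fun c hc r => ?_).trans ?_)
  · simp only [twist, if_neg hc]
    refine (hpos c hc r).trans ?_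
    simp only [hψ, hψ', pair, if_neg hc]
    have := ker_zero_shift_le ht hU (hqU ε c) (r - (J *ᵥ p') c)
    refine le_trans (le_of_eq ?_) this
    rw [hJp']; congr 1; ring
  · set P : ℝ := ∏ c : Idx m, if pos c = i then 1 else E with hP
    have hPE : P ≤ E ^ (2 * m) := by
      refine (Finset.prod_le_prod (fun c _ => ?_) (fun c _ => ?_)
        (g := fun _ => E)).trans_eq ?_
      · split_ifs <;> positivity
      · split_ifs
        exacts [hE1, le_rfl]
      · simp [two_mul]
    have hval : ∀ δ, ∫ x, Psi (SBL.Fk (SBL.Fk F i ε) i δ) x * ∏ c, twist i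
        (twist i (ψ (cof i ε)) ψ (cof i δ)) ψ' c (x c) =
        P * HH (SBL.Fk F i ε) (Jk J i ε) (pair i 1) (narrow i U) p' (U * t) := fun δ => by
      unfold HH Hv
      rw [Fk_Fk, ← integral_const_mul]
      congr 1
      funext x
      rw [mul_left_comm, hP, ← Finset.prod_mul_distrib]
      congr 1
      refine Finset.prod_congr rfl fun c _ => ?_
      rw [Jk_mulVec]
      by_cases hc : pos c = i
      · simp only [twist, hc, if_true, pos_cof, hψ, pair, narrow, one_mul]
        rw [hJp', hq]
        congr 1
        · field_simp
        · ring
      · simp only [twist, hc, if_false, hψ', pair, narrow, mul_one]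
    simp_rw [hval]
    rw [Finset.sum_const, Finset.card_univ, Fintype.card_fin, nsmul_eq_mul]
    have h0 := HH_pair_nonneg (hF.Fk i ε) (sym_Fk J F i ε) 1 (wt_narrow i (by linarith : 1 ≤ U)).pos p'
      (mul_pos hU0 ht)
    push_cast
    rw [mul_assoc]
    gcongr
end

section
variable {m : ℕ} {α U : ℝ} {T : Set (ℤ × (Fin m → ℤ))} {Qt : ℤ × (Fin m → ℤ)}

theorem lintegral_shear_le {U : ℝ} (hU : 0 < U) (q : Fin m → ℝ) {A S : Set ((Fin m → ℝ) × ℝ)}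
    (hA : MeasurableSet A) (hS : MeasurableSet S)
    (hAS : ∀ z ∈ A, ((z.1 - z.2 • q, U * z.2) : (Fin m → ℝ) × ℝ) ∈ S)
    {f : (Fin m → ℝ) × ℝ → ℝ≥0∞} (hf : Measurable f) :
    ∫⁻ z in A, ENNReal.ofReal U * f (z.1 - z.2 • q, U * z.2) ≤ ∫⁻ z in S, f z := by
  set G := S.indicator f with hG
  have hGm : Measurable G := hf.indicator hS
  have hshear : Measurable fun z : (Fin m → ℝ) × ℝ => G (z.1 - z.2 • q, U * z.2) :=
    hGm.comp (by fun_prop)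
  calc ∫⁻ z in A, ENNReal.ofReal U * f (z.1 - z.2 • q, U * z.2)
      = ∫⁻ z in A, ENNReal.ofReal U * G (z.1 - z.2 • q, U * z.2) :=
        setLIntegral_congr_fun hA fun z hz => by
          simp only [hG]
          rw [Set.indicator_of_mem (hAS z hz)]
    _ ≤ ∫⁻ z : (Fin m → ℝ) × ℝ, ENNReal.ofReal U * G (z.1 - z.2 • q, U * z.2) := setLIntegral_le_lintegral _ _
    _ = ENNReal.ofReal U * ∫⁻ z : (Fin m → ℝ) × ℝ, G (z.1 - z.2 • q, U * z.2) :=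
        lintegral_const_mul _ hshear
    _ = ENNReal.ofReal U * ∫⁻ t : ℝ, ∫⁻ p, G (p, U * t) := by
        rw [Measure.volume_eq_prod, lintegral_prod_symm _ hshear.aemeasurable]
        congr 1
        refine lintegral_congr fun t => ?_
        exact lintegral_sub_right_eq_self (fun p => G (p, U * t)) (t • q)
    _ = ∫⁻ t : ℝ, ∫⁻ p, G (p, t) := by
        have h1 : Measurable fun t : ℝ => ∫⁻ p, G (p, t) := hGm.lintegral_prod_left'
        have h2 := congrArg (fun μ => ∫⁻ t, ∫⁻ p, G (p, t) ∂volume ∂μ)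
          (Real.smul_map_volume_mul_left hU.ne')
        simp only [lintegral_smul_measure, smul_eq_mul, abs_of_pos hU] at h2
        rw [← h2, lintegral_map h1 (by fun_prop)]
    _ = ∫⁻ z, G z := by
        rw [Measure.volume_eq_prod, lintegral_prod_symm _ hGm.aemeasurable]
    _ = ∫⁻ z in S, f z := lintegral_indicator hS f

/-- The region of the upper half space associated with a tree. -/
def region (T : Set (ℤ × (Fin m → ℤ))) (U ℓ : ℝ) : Set ((Fin m → ℝ) × ℝ) :=
  {z | 0 < z.2 ∧ gap T U z.1 / 4 < z.2 ∧ z.2 < ℓ}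

theorem region_eq_iUnion (T : Set (ℤ × (Fin m → ℤ))) (U ℓ : ℝ) :
    region T U ℓ = ⋃ n : ℕ, Om (rhoT T U (1 / (n + 1))) ℓ := by
  ext z
  simp only [region, Om, rhoT, Set.mem_ofPred_eq, Set.mem_iUnion, max_lt_iff]
  constructor
  · rintro ⟨h1, h2, h3⟩
    obtain ⟨n, hn⟩ := exists_nat_one_div_lt h1
    exact ⟨n, ⟨hn, h2⟩, h3⟩
  · rintro ⟨n, ⟨h1, h2⟩, h3⟩
    exact ⟨lt_trans (by positivity) h1, h2, h3⟩

theorem directed_Om (T : Set (ℤ × (Fin m → ℤ))) (U ℓ : ℝ) :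
    Directed (· ⊆ ·) fun n : ℕ => Om (rhoT T U (1 / ((n : ℝ) + 1))) ℓ := by
  refine Monotone.directed_le (f := fun n : ℕ => Om (rhoT T U (1 / ((n : ℝ) + 1))) ℓ)
    fun a b hab z hz => ⟨lt_of_le_of_lt (max_le_max_right _ ?_) hz.1, hz.2⟩
  exact Nat.one_div_le_one_div hab

theorem measurableSet_region (hU : 0 ≤ U) (hQt : Qt ∈ T) (ℓ : ℝ) :
    MeasurableSet (region T U ℓ) := by
  rw [region_eq_iUnion]
  refine MeasurableSet.iUnion fun n => ?_
  have hc : Continuous (rhoT T U (1 / ((n : ℝ) + 1))) := by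
    refine (LipschitzWith.of_dist_le_mul (K := 1) fun p q => ?_).continuous
    rw [NNReal.coe_one, one_mul, dist_eq_norm, dist_eq_norm, Real.norm_eq_abs]
    exact abs_rhoT_sub_le hU hQt _ p q
  exact ((isOpen_lt (hc.comp continuous_fst) continuous_snd).inter
    (isOpen_lt continuous_snd continuous_const)).measurableSet

theorem measurableSet_Omega (T : Set (ℤ × (Fin m → ℤ))) : MeasurableSet (Omega T) :=
  MeasurableSet.biUnion T.to_countable fun Q _ => (measurableSet_dC Q).prod measurableSet_Ioo

theorem shear_mem_region (hm : 0 < m) (hT : ConvexTree T Qt) (hU : 0 < U) {q : Fin m → ℝ}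
    (hq : ‖q‖ ≤ U) {z : (Fin m → ℝ) × ℝ} (hz : z ∈ Omega T) :
    ((z.1 - z.2 • q, U * z.2) : (Fin m → ℝ) × ℝ) ∈ region T U (U * 2 ^ Qt.1) := by
  simp only [Omega, Set.mem_iUnion, Set.mem_prod, Set.mem_Ioo] at hz
  obtain ⟨Q, hQ, hp, h1, h2⟩ := hz
  have hQ0 : (0 : ℝ) < 2 ^ Q.1 := by positivity
  have ht : 0 < z.2 := by linarith
  refine ⟨mul_pos hU ht, ?_, ?_⟩
  · have h3 := gap_le hU.le hQ hp (z.1 - z.2 • q)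
    have h4 : ‖z.1 - z.2 • q - z.1‖ ≤ U * z.2 := by
      rw [sub_sub_cancel_left, norm_neg, norm_smul, Real.norm_eq_abs, abs_of_pos ht, mul_comm]
      gcongr
    have h5 : U * 2 ^ Q.1 < 2 * (U * z.2) := by nlinarith
    have h6 := mul_pos hU ht
    change gap T U (z.1 - z.2 • q) / 4 < U * z.2
    linarith
  · have := side_le_of_subset hm (hT.2.1 Q hQ)
    exact mul_lt_mul_of_pos_left (h2.trans_le this) hU

theorem exists_lintegral_region_le (hm : 0 < m) (hα : 0 ≤ α) (hα1 : 2 * α < 1) {B : ℝ}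
    (hB : 1 ≤ B) : ∃ K : ℝ, 1 ≤ K ∧ ∃ C : ℝ, 0 ≤ C ∧
    ∀ {J : Matrix (Idx m) (Fin m) ℝ}, RegB B J →
      ∀ {T : Set (ℤ × (Fin m → ℤ))} {Qt : ℤ × (Fin m → ℤ)}, ConvexTree T Qt →
      ∀ {F : Corner m → (Fin m → ℝ) → ℝ}, IsCc F →
      (∀ j, ENNReal.ofReal K * MalTree α (F j) (Amat J j) T ^ 2 ^ (m - 1) ≤ 1) →
      ∀ (i : Fin m) (ε : Fin 2) {U : ℝ}, 1 ≤ U →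
        ∫⁻ z in region T U (U * 2 ^ Qt.1), ENNReal.ofReal (z.2⁻¹ *
          HH (Fk F i ε) (Jk J i ε) (pair i 1) (narrow i U) z.1 z.2) ≤
        ENNReal.ofReal (C * U ^ (m + 2)) * volume (dC Qt) := by
  obtain ⟨K, hK, hadm⟩ := exists_adm hm hα (by linarith : α ≤ 1) hB
  choose C hC hCb using fun i : Fin m =>
    bdd_pair (S := {i}) hm (by nlinarith : 0 ≤ B * B) hα1 (Finset.mem_singleton_self i) le_rfl
  refine ⟨K, hK, (∑ i, C i) * 17 ^ m, mul_nonneg (Finset.sum_nonneg fun i _ => hC i)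
    (by positivity), fun {J} hJ T Qt hT F hF hM i ε U hU => ?_⟩
  have hU0 : 0 < U := by linarith
  rw [region_eq_iUnion, setLIntegral_iUnion_of_directed _ (directed_Om T U _)]
  refine iSup_le fun n => ?_
  have hA := (hadm hJ hT hF hM hU (τ := 1 / ((n : ℝ) + 1)) (by positivity)).Fk i ε
  have hw := wt_narrow i hU
  have hb := hCb i hA (sym_Fk J F i ε) hw
  set ρ := rhoT T U (1 / ((n : ℝ) + 1)) with hρ
  have hnn : ∀ z ∈ Om ρ (U * 2 ^ Qt.1), 0 ≤ z.2⁻¹ *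
      HH (Fk F i ε) (Jk J i ε) (pair i 1) (narrow i U) z.1 z.2 := fun z hz => by
    have h0 : 0 < z.2 := lt_trans (lt_of_lt_of_le (by positivity) (le_max_left _ _)) hz.1
    exact mul_nonneg (inv_pos.2 h0).le (HH_pair_nonneg hA.cc (sym_Fk J F i ε) 1 hw.pos _ h0)
  rw [← ofReal_integral_eq_lintegral_ofReal (hA.integrableOn hm _ hw)
    ((ae_restrict_iff' hA.measurableSet_Om).2 (Filter.Eventually.of_forall hnn))]
  have hV : ENNReal.ofReal (VV ρ (U * 2 ^ Qt.1)) ≤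
      ENNReal.ofReal ((17 * U) ^ m) * volume (dC Qt) :=
    ENNReal.ofReal_toReal_le.trans (volume_rhoT_le hT hU _)
  have hle : NN (U * 2 ^ Qt.1) ρ (Jk J i ε) (Fk F i ε) (pair i 1) (narrow i U) ≤
      (∑ i, C i) * U ^ 2 * VV ρ (U * 2 ^ Qt.1) := by
    refine (le_abs_self _).trans (hb.trans ?_)
    rw [Real.one_rpow, mul_one]
    have := VV_nonneg ρ (U * 2 ^ Qt.1)
    gcongr
    exact Finset.single_le_sum (f := C) (fun i _ => hC i) (Finset.mem_univ i)
  have hS0 : 0 ≤ ∑ i, C i := Finset.sum_nonneg fun i _ => hC i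
  refine (ENNReal.ofReal_le_ofReal hle).trans ?_
  rw [ENNReal.ofReal_mul (by positivity)]
  refine (mul_le_mul_right hV _).trans_eq ?_
  rw [← mul_assoc, ← ENNReal.ofReal_mul (by positivity)]
  congr 2
  ring
end

theorem abs_le_en {ι : Type*} [Fintype ι] (u : ι → ℝ) (c : ι) : |u c| ≤ en u := by
  refine Real.abs_le_sqrt ?_
  exact Finset.single_le_sum (f := fun c => u c ^ 2) (fun c _ => sq_nonneg _) (Finset.mem_univ c)

theorem en_nonneg {ι : Type*} [Fintype ι] (u : ι → ℝ) : 0 ≤ en u := Real.sqrt_nonneg _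

theorem add_mul_pow_le {b e : ℝ} (hb : 1 ≤ b) (he : 0 ≤ e) (n : ℕ) :
    (2 + 2 * b * e) ^ n ≤ (4 * b) ^ n * (1 + e ^ n) := by
  have h1 : 2 + 2 * b * e ≤ 4 * b * max 1 e := by
    have h2 := le_max_left 1 e
    have h3 := le_max_right 1 e
    nlinarith
  calc (2 + 2 * b * e) ^ n ≤ (4 * b * max 1 e) ^ n := by gcongr
    _ = (4 * b) ^ n * max 1 e ^ n := mul_pow _ _ _
    _ ≤ _ := by
      gcongr
      rcases max_choice 1 e with h | h <;> rw [h]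
      · rw [one_pow]; linarith [pow_nonneg he n]
      · linarith

section
variable {m : ℕ} {α : ℝ}

theorem enorm_LambdaT_le (J : Matrix (Idx m) (Fin m) ℝ) (T : Set (ℤ × (Fin m → ℤ)))
    {c : ℝ → ℂ} (hc : ∀ᵐ t ∂(volume.restrict (Set.Ioi (0 : ℝ))), ‖c t‖ ≤ 1)
    (u : Idx m → ℝ) (i : Fin m) (F : Corner m → (Fin m → ℝ) → ℝ) :
    ENNReal.ofReal ‖LambdaT J T c u i F‖ ≤ ∫⁻ z in Omega T,
      ENNReal.ofReal ((1 + en u ^ (4 * m))⁻¹ * (z.2⁻¹ *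
        |∫ x, (∏ j, F j (proj j x)) * dil z.2 (ddg i) (x - J *ᵥ z.1 + z.2 • u)|)) := by
  rw [ofReal_norm]
  refine (enorm_integral_le_lintegral_enorm _).trans (lintegral_mono_ae ?_)
  rw [ae_restrict_iff' (measurableSet_Omega T)]
  rw [ae_restrict_iff' measurableSet_Ioi] at hc
  have hc' : ∀ᵐ z : (Fin m → ℝ) × ℝ, z.2 ∈ Set.Ioi (0 : ℝ) → ‖c z.2‖ ≤ 1 := by
    rw [Measure.volume_eq_prod]
    exact Measure.quasiMeasurePreserving_snd.ae hc
  filter_upwards [hc'] with z hz hzT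
  have ht : 0 < z.2 := by
    simp only [Omega, Set.mem_iUnion, Set.mem_prod, Set.mem_Ioo] at hzT
    obtain ⟨Q, hQ, hp, h1, h2⟩ := hzT
    have hQ0 : (0 : ℝ) < 2 ^ Q.1 := by positivity
    linarith
  rw [← ofReal_norm]
  refine ENNReal.ofReal_le_ofReal ?_
  have hN : 0 ≤ (1 + en u ^ (4 * m))⁻¹ := by
    have := en_nonneg u
    positivity
  rw [norm_mul, Complex.norm_real, Real.norm_eq_abs, abs_mul, abs_mul, abs_of_nonneg hN,
    abs_of_pos (inv_pos.2 ht), mul_assoc]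
  have h0 : 0 ≤ (1 + en u ^ (4 * m))⁻¹ * (z.2⁻¹ *
      |∫ x, (∏ j, F j (proj j x)) * dil z.2 (ddg i) (x - J *ᵥ z.1 + z.2 • u)|) := by positivity
  exact mul_le_of_le_one_left h0 (hz ht)

theorem exists_LambdaT_le_of_normalized (hm : 2 ≤ m) (hα : 0 ≤ α) (hα1 : 2 * α < 1) {B : ℝ}
    (hB : 1 ≤ B) : ∃ K : ℝ, 1 ≤ K ∧ ∃ C : ℝ, 0 ≤ C ∧
    ∀ {J : Matrix (Idx m) (Fin m) ℝ}, RegB B J →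
      ∀ {T : Set (ℤ × (Fin m → ℤ))} {Qt : ℤ × (Fin m → ℤ)}, ConvexTree T Qt →
      ∀ {F : Corner m → (Fin m → ℝ) → ℝ}, IsCc F →
      (∀ j, ENNReal.ofReal K * MalTree α (F j) (Amat J j) T ^ 2 ^ (m - 1) ≤ 1) →
      ∀ {c : ℝ → ℂ}, (∀ᵐ t ∂(volume.restrict (Set.Ioi (0 : ℝ))), ‖c t‖ ≤ 1) →
      ∀ (u : Idx m → ℝ) (i : Fin m),
        ENNReal.ofReal ‖LambdaT J T c u i F‖ ≤ ENNReal.ofReal C * volume (dC Qt) := by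
  have hm0 : 0 < m := by omega
  obtain ⟨K, hK, C, hC, hreg⟩ := exists_lintegral_region_le hm0 hα hα1 hB
  set E := Real.exp (4 * Real.pi) with hE
  refine ⟨K, hK, 4 * E ^ (2 * m) * C * (4 * (B * B)) ^ (4 * m), by positivity,
    fun {J} hJ T Qt hT F hF hM c hc u i => ?_⟩
  set e := en u with he
  have he0 : 0 ≤ e := en_nonneg u
  have hBB : 1 ≤ B * B := by nlinarith
  set U := 2 + 2 * (B * B) * e with hU
  have hU2 : 2 ≤ U := by
    have : 0 ≤ 2 * (B * B) * e := by positivity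
    linarith
  have hU0 : 0 < U := by linarith
  have hq : ∀ ε : Fin 2, ∃ q : Fin m → ℝ, ‖q‖ ≤ B * e ∧ (J *ᵥ q) (cof i ε) = u (cof i ε) :=
    fun ε => by
      obtain ⟨q, h1, h2⟩ := hJ.inv (fun _ => ε) (proj (fun _ => ε) u)
      refine ⟨q, h1.trans ?_, h2 i⟩
      gcongr
      exact (pi_norm_le_iff_of_nonneg he0).2 fun k => abs_le_en u _
  choose q hqe hqu using hq
  have hqU : ∀ ε c, |u c - (J *ᵥ q ε) c| ≤ U := fun ε c => by
    have h1 := abs_sub (u c) ((J *ᵥ q ε) c)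
    have h2 := hJ.le (q ε) c
    have h3 : B * ‖q ε‖ ≤ B * (B * e) := by gcongr; exact hqe ε
    have h4 := abs_le_en u c
    nlinarith
  have hqU' : ∀ ε, ‖q ε‖ ≤ U := fun ε => by
    have h1 := hqe ε
    have h2 : B * e ≤ B * B * e := by gcongr; nlinarith
    have h3 : 0 ≤ B * B * e := by positivity
    linarith
  set N := (1 + e ^ (4 * m))⁻¹ with hN
  have hN0 : 0 < N := by positivity
  set f : Fin 2 → (Fin m → ℝ) × ℝ → ℝ≥0∞ := fun ε z => ENNReal.ofReal (z.2⁻¹ *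
    HH (Fk F i ε) (Jk J i ε) (pair i 1) (narrow i U) z.1 z.2) with hf
  have hfm : ∀ ε, Measurable (f ε) := fun ε =>
    (measurable_snd.inv.mul ((hF.Fk i ε).measurable_HH _ _ _)).ennreal_ofReal
  set M := N * (2 * (E * U) ^ (2 * m)) with hMdef
  have hM0 : 0 ≤ M := by positivity
  calc ENNReal.ofReal ‖LambdaT J T c u i F‖
      ≤ ∫⁻ z in Omega T, ENNReal.ofReal (N * (z.2⁻¹ *
        |∫ x, (∏ j, F j (proj j x)) * dil z.2 (ddg i) (x - J *ᵥ z.1 + z.2 • u)|)) :=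
        enorm_LambdaT_le J T hc u i F
    _ ≤ ∫⁻ z in Omega T, ENNReal.ofReal M *
          ∑ ε, ENNReal.ofReal U * f ε (z.1 - z.2 • q ε, U * z.2) := by
        refine setLIntegral_mono' (measurableSet_Omega T) fun z hz => ?_
        have hs := fun ε => (shear_mem_region hm0 hT hU0 (hqU' ε) hz)
        have ht : 0 < z.2 := pos_of_mul_pos_right (hs 0).1 hU0.le
        have hb := hF.abs_integral_dil_le i u hU2 hqu hqU z.1 ht
        have hnn : ∀ ε, 0 ≤ HH (Fk F i ε) (Jk J i ε) (pair i 1) (narrow i U)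
            (z.1 - z.2 • q ε) (U * z.2) := fun ε =>
          HH_pair_nonneg (hF.Fk i ε) (sym_Fk J F i ε) 1
            (wt_narrow i (by linarith : 1 ≤ U)).pos _ (mul_pos hU0 ht)
        have hsum : ∀ ε, ENNReal.ofReal U * f ε (z.1 - z.2 • q ε, U * z.2) =
            ENNReal.ofReal (z.2⁻¹ * HH (Fk F i ε) (Jk J i ε) (pair i 1) (narrow i U)
              (z.1 - z.2 • q ε) (U * z.2)) := fun ε => by
          simp only [hf]
          rw [← ENNReal.ofReal_mul hU0.le]
          congr 1
          field_simp
        simp_rw [hsum]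
        rw [← ENNReal.ofReal_sum_of_nonneg fun ε _ => mul_nonneg (inv_pos.2 ht).le (hnn ε),
          ← ENNReal.ofReal_mul hM0, ← Finset.mul_sum]
        refine ENNReal.ofReal_le_ofReal ?_
        refine (mul_le_mul_of_nonneg_left
          (mul_le_mul_of_nonneg_left hb (inv_pos.2 ht).le) hN0.le).trans_eq ?_
        rw [hMdef]; ring
    _ = ENNReal.ofReal M * ∑ ε, ∫⁻ z in Omega T,
          ENNReal.ofReal U * f ε (z.1 - z.2 • q ε, U * z.2) := by
        have hmeas : ∀ ε, Measurable fun z : (Fin m → ℝ) × ℝ =>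
            ENNReal.ofReal U * f ε (z.1 - z.2 • q ε, U * z.2) := fun ε =>
          ((hfm ε).comp (by fun_prop)).const_mul _
        rw [lintegral_const_mul _ (Finset.measurable_fun_sum _ fun ε _ => hmeas ε),
          lintegral_finsetSum _ fun ε _ => hmeas ε]
    _ ≤ ENNReal.ofReal M * ∑ _ε : Fin 2, ENNReal.ofReal (C * U ^ (m + 2)) * volume (dC Qt) := by
        refine mul_le_mul_right (Finset.sum_le_sum fun ε _ => ?_) _
        exact (lintegral_shear_le hU0 (q ε) (measurableSet_Omega T)
          (measurableSet_region hU0.le hT.1 _)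
          (fun z hz => shear_mem_region hm0 hT hU0 (hqU' ε) hz) (hfm ε)).trans
          (hreg hJ hT hF hM i ε (by linarith))
    _ = ENNReal.ofReal (M * (2 * (C * U ^ (m + 2)))) * volume (dC Qt) := by
        rw [Finset.sum_const, Finset.card_univ, Fintype.card_fin, nsmul_eq_mul,
          ENNReal.ofReal_mul hM0, ENNReal.ofReal_mul zero_le_two]
        simp [mul_assoc]
    _ ≤ _ := by
        refine mul_le_mul_left (ENNReal.ofReal_le_ofReal ?_) _
        have h1 : U ^ (2 * m) * U ^ (m + 2) ≤ U ^ (4 * m) := by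
          rw [← pow_add]
          exact pow_le_pow_right₀ (by linarith) (by omega)
        have h2 : U ^ (4 * m) ≤ (4 * (B * B)) ^ (4 * m) * (1 + e ^ (4 * m)) :=
          add_mul_pow_le hBB he0 _
        have h3 : N * (1 + e ^ (4 * m)) = 1 := inv_mul_cancel₀ (by positivity)
        calc M * (2 * (C * U ^ (m + 2)))
            = 4 * E ^ (2 * m) * C * N * (U ^ (2 * m) * U ^ (m + 2)) := by
              rw [hMdef, mul_pow]; ring
          _ ≤ 4 * E ^ (2 * m) * C * N * ((4 * (B * B)) ^ (4 * m) * (1 + e ^ (4 * m))) := by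
              exact mul_le_mul_of_nonneg_left (h1.trans h2) (by positivity)
          _ = 4 * E ^ (2 * m) * C * (4 * (B * B)) ^ (4 * m) * (N * (1 + e ^ (4 * m))) := by ring
          _ = _ := by rw [h3, mul_one]
end

section
variable {m : ℕ} {α : ℝ}

theorem avg_const_mul {a : ℝ} (ha : 0 ≤ a) (S : Set (Fin m → ℝ)) (hm : 0 < m)
    (F : (Fin m → ℝ) → ℝ) : avg S (fun x => a * F x) = a * avg S F := by
  unfold avg
  have h1 : ∀ x, |a * F x| ^ 2 ^ (m - 1) = a ^ 2 ^ (m - 1) * |F x| ^ 2 ^ (m - 1) := fun x => by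
    rw [abs_mul, mul_pow, abs_of_nonneg ha]
  simp_rw [h1]
  have hX : 0 ≤ (volume S).toReal⁻¹ * ∫ x in S, |F x| ^ 2 ^ (m - 1) :=
    mul_nonneg (by positivity) (integral_nonneg fun x => by positivity)
  rw [integral_const_mul, mul_left_comm, Real.mul_rpow (by positivity) hX, ← Real.rpow_natCast,
    ← Real.rpow_mul ha]
  have h2 : (((2 ^ (m - 1) : ℕ) : ℝ)) * (2 : ℝ) ^ ((1 : ℤ) - (m : ℤ)) = 1 := by
    push_cast
    rw [← zpow_natCast, ← zpow_add₀ two_ne_zero]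
    have : ((m - 1 : ℕ) : ℤ) + (1 - (m : ℤ)) = 0 := by omega
    rw [this, zpow_zero]
  rw [h2, Real.rpow_one]

theorem MalTree_const_mul_le (hm : 0 < m) {a : ℝ} (ha : 0 ≤ a) (F : (Fin m → ℝ) → ℝ)
    (A : Matrix (Fin m) (Fin m) ℝ) (T : Set (ℤ × (Fin m → ℤ))) :
    MalTree α (fun x => a * F x) A T ≤ ENNReal.ofReal a * MalTree α F A T := by
  refine iSup₂_le fun Q hQ => iSup₂_le fun l r => iSup₂_le fun hlr hS => ?_
  rw [avg_const_mul ha _ hm, mul_left_comm, ENNReal.ofReal_mul ha]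
  refine mul_le_mul_right (le_trans ?_ (le_iSup₂_of_le Q hQ le_rfl)) _
  exact le_iSup₂_of_le l r (le_iSup₂_of_le hlr hS le_rfl)

theorem LambdaT_const_mul (J : Matrix (Idx m) (Fin m) ℝ) (T : Set (ℤ × (Fin m → ℤ)))
    (c : ℝ → ℂ) (u : Idx m → ℝ) (i : Fin m) (a : Corner m → ℝ) (F : Corner m → (Fin m → ℝ) → ℝ) :
    LambdaT J T c u i (fun j x => a j * F j x) = (∏ j, a j : ℝ) * LambdaT J T c u i F := by
  unfold LambdaT
  rw [← integral_const_mul]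
  congr 1
  funext z
  simp_rw [Finset.prod_mul_distrib, mul_assoc]
  rw [integral_const_mul]
  push_cast
  ring

theorem LambdaT_eq_zero (J : Matrix (Idx m) (Fin m) ℝ) (T : Set (ℤ × (Fin m → ℤ)))
    (c : ℝ → ℂ) (u : Idx m → ℝ) (i : Fin m) {F : Corner m → (Fin m → ℝ) → ℝ} {j : Corner m}
    (hj : F j = 0) : LambdaT J T c u i F = 0 := by
  have h : ∀ x, ∏ j, F j (proj j x) = 0 := fun x =>
    Finset.prod_eq_zero (Finset.mem_univ j) (by rw [hj]; rfl)
  simp [LambdaT, h]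
end

/-- Theorem 3 (local bound for the form `Λ_𝒯`). -/
theorem statement2 (m : ℕ) (hm : 2 ≤ m) (Δ α : ℝ) (hΔ : 1 < Δ)
    (hα0 : 0 < α) (hα : α < 1 / m) :
    ∃ C : ℝ≥0, ∀ J : Matrix (Idx m) (Fin m) ℝ, IsUnit (Jb1 J).det →
      (∀ j : Corner m, IsReg Δ (Amat J j)) →
      ∀ (T : Set (ℤ × (Fin m → ℤ))) (Qt : ℤ × (Fin m → ℤ)), ConvexTree T Qt →
      ∀ c : ℝ → ℂ, Measurable c →
        (∀ᵐ t ∂(volume.restrict (Set.Ioi (0:ℝ))), ‖c t‖ ≤ 1) →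
      ∀ u : Idx m → ℝ, ∀ i : Fin m,
      ∀ F : Corner m → (Fin m → ℝ) → ℝ,
        (∀ j, ContDiff ℝ (⊤ : ℕ∞) (F j) ∧ HasCompactSupport (F j)) →
        ENNReal.ofReal ‖LambdaT J T c u i F‖ ≤
          C * volume (dC Qt) * ∏ j : Corner m, MalTree α (F j) (Amat J j) T := by
  have hm0 : 0 < m := by omega
  have hα2 : 2 * α < 1 := by
    have h1 : (1 : ℝ) / m ≤ 1 / 2 := by
      gcongr
      exact_mod_cast hm
    linarith
  obtain ⟨B, hB, hreg⟩ := exists_regB m hΔ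
  obtain ⟨K, hK, C, hC, hbound⟩ := exists_LambdaT_le_of_normalized hm hα0.le hα2 hB
  have hK0 : 0 < K := by linarith
  refine ⟨Real.toNNReal ((C + 1) * ∏ _j : Corner m, K),
    fun J _ hJ T Qt hT c _ hc u i F hF => ?_⟩
  have hRJ := hreg J hJ
  have hFc : IsCc F := fun j => ⟨(hF j).1.continuous, (hF j).2⟩
  change _ ≤ ENNReal.ofReal ((C + 1) * ∏ _j : Corner m, K) * volume (dC Qt) * _
  have hCK : 0 < (C + 1) * ∏ _j : Corner m, K := by positivity
  by_cases h0 : ∃ j, MalTree α (F j) (Amat J j) T = 0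
  · obtain ⟨j, hj⟩ := h0
    rw [LambdaT_eq_zero J T c u i (eq_zero_of_MalTree_eq_zero hm0 hα0.le (by linarith) hB hRJ hT.1
      (hFc j).1 hj)]
    simp
  push Not at h0
  by_cases htop : ∃ j, MalTree α (F j) (Amat J j) T = ⊤
  · obtain ⟨j, hj⟩ := htop
    rw [← Finset.mul_prod_erase _ (fun j => MalTree α (F j) (Amat J j) T) (Finset.mem_univ j),
      hj, ENNReal.top_mul (Finset.prod_ne_zero_iff.2 fun k _ => h0 k), ENNReal.mul_top]
    · exact le_top
    · refine mul_ne_zero (ENNReal.ofReal_pos.2 hCK).ne' ?_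
      rw [volume_dC]
      exact pow_ne_zero _ (ENNReal.ofReal_pos.2 (by positivity)).ne'
  push Not at htop
  set M : Corner m → ℝ := fun j => (MalTree α (F j) (Amat J j) T).toReal with hM
  have hM0 : ∀ j, 0 < M j := fun j => ENNReal.toReal_pos (h0 j) (htop j)
  have hMof : ∀ j, ENNReal.ofReal (M j) = MalTree α (F j) (Amat J j) T := fun j =>
    ENNReal.ofReal_toReal (htop j)
  set a : Corner m → ℝ := fun j => (K * M j)⁻¹ with ha
  have ha0 : ∀ j, 0 < a j := fun j => inv_pos.2 (mul_pos hK0 (hM0 j))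
  have hG : IsCc (fun j x => a j * F j x) := fun j =>
    ⟨continuous_const.mul (hFc j).1, (hFc j).2.mul_left⟩
  have hnorm : ∀ j, ENNReal.ofReal K *
      MalTree α (fun x => a j * F j x) (Amat J j) T ^ 2 ^ (m - 1) ≤ 1 := fun j => by
    have h1 : MalTree α (fun x => a j * F j x) (Amat J j) T ≤ ENNReal.ofReal K⁻¹ := by
      refine (MalTree_const_mul_le hm0 (ha0 j).le _ _ _).trans_eq ?_
      rw [← hMof, ← ENNReal.ofReal_mul (ha0 j).le]
      congr 1
      have := (hM0 j).ne'
      simp only [ha]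
      field_simp
    have h2 : ENNReal.ofReal K⁻¹ ^ 2 ^ (m - 1) ≤ ENNReal.ofReal K⁻¹ :=
      pow_le_of_le_one zero_le (ENNReal.ofReal_le_one.2 (inv_le_one_of_one_le₀ hK))
        (by positivity)
    calc _ ≤ ENNReal.ofReal K * ENNReal.ofReal K⁻¹ :=
          mul_le_mul_right ((pow_le_pow_left' h1 _).trans h2) _
      _ = 1 := by rw [← ENNReal.ofReal_mul hK0.le, mul_inv_cancel₀ hK0.ne', ENNReal.ofReal_one]
  have hb := hbound hRJ hT hG hnorm hc u i
  rw [LambdaT_const_mul, norm_mul, Complex.norm_real, Real.norm_eq_abs,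
    abs_of_pos (Finset.prod_pos fun j _ => ha0 j)] at hb
  have hprod : (∏ j, K * M j) * ∏ j, a j = 1 := by
    rw [← Finset.prod_mul_distrib]
    exact Finset.prod_eq_one fun j _ => mul_inv_cancel₀ (mul_pos hK0 (hM0 j)).ne'
  have hKM : 0 ≤ ∏ j, K * M j := Finset.prod_nonneg fun j _ => (mul_pos hK0 (hM0 j)).le
  calc ENNReal.ofReal ‖LambdaT J T c u i F‖
      = ENNReal.ofReal (∏ j, K * M j) *
          ENNReal.ofReal ((∏ j, a j) * ‖LambdaT J T c u i F‖) := by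
        rw [← ENNReal.ofReal_mul hKM, ← mul_assoc, hprod, one_mul]
    _ ≤ ENNReal.ofReal (∏ j, K * M j) * (ENNReal.ofReal (C + 1) * volume (dC Qt)) :=
        mul_le_mul_right (hb.trans (mul_le_mul_left
          (ENNReal.ofReal_le_ofReal (by linarith)) _)) _
    _ = _ := by
        rw [Finset.prod_mul_distrib, ENNReal.ofReal_mul (Finset.prod_nonneg fun _ _ => hK0.le),
          ENNReal.ofReal_prod_of_nonneg (fun j _ => (hM0 j).le),
          ENNReal.ofReal_mul (by linarith : 0 ≤ C + 1)]
        simp_rw [hMof]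
        ring

end SBL
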